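/- arXiv:2203.06733 — 2 statements merged into one kernel-verified Lean document; each statement's English description precedes it below -/
import Mathlib

section
/- Let μ_1, …, μ_S be purely point measures on ℝ^d belonging to S*(ℝ^d) with uniformly discrete supports Λ_1, …, Λ_S, such that each μ̂_s is a purely point measure satisfying |μ̂_s|(B(0,r)) = O(r^d) as r → ∞, and inf_{λ ∈ Λ_1 ∪ ⋯ ∪ Λ_S} Σ_{s=1}^S |μ_s(λ)| > 0 (where μ_s(λ) := 0 if λ ∉ Λ_s). If in addition the union Λ_1 ∪ ⋯ ∪ Λ_S is uniformly discrete, then every μ_s whose spectrum supp μ̂_s is locally finite is a generalized lattice Dirac comb. -/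
open MeasureTheory SchwartzMap Metric Set
open scoped Pointwise RealInnerProductSpace ENNReal NNReal

noncomputable section

/-- Euclidean space `ℝ^d`. -/
abbrev Rd (d : ℕ) : Type := EuclideanSpace ℝ (Fin d)

/-- The space `S*(ℝ^d)` of tempered distributions: continuous linear functionals
on the Schwartz space `S(ℝ^d)`. -/
abbrev TemperedDist (d : ℕ) : Type := SchwartzMap (Rd d) ℂ →L[ℂ] ℂ

/-- The Fourier transform of a tempered distribution: `f̂(φ) = f(φ̂)`. -/
def fourierTD {d : ℕ} (f : TemperedDist d) : TemperedDist d :=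
  f.comp (fourierTransformCLM ℂ)

/-- The support of a tempered distribution: `x ∈ supp f` iff for every open
neighbourhood `U` of `x` there is a smooth compactly supported test function
supported in `U` on which `f` does not vanish. -/
def tdSupport {d : ℕ} (f : TemperedDist d) : Set (Rd d) :=
  {x | ∀ U : Set (Rd d), IsOpen U → x ∈ U →
    ∃ φ : SchwartzMap (Rd d) ℂ, HasCompactSupport (⇑φ) ∧ tsupport (⇑φ) ⊆ U ∧ f φ ≠ 0}

/-- A set is locally finite if its intersection with every ball is finite. -/
def LocFinite {d : ℕ} (A : Set (Rd d)) : Prop :=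
  ∀ (x : Rd d) (r : ℝ), (A ∩ Metric.ball x r).Finite

/-- A set is uniformly discrete if distances between distinct points are
bounded below by a positive constant. -/
def UniformlyDiscrete {d : ℕ} (A : Set (Rd d)) : Prop :=
  ∃ η > (0:ℝ), ∀ x ∈ A, ∀ y ∈ A, x ≠ y → η ≤ dist x y

/-- A set is polynomially discrete (p-discrete) if
`|x - x'| ≥ c min{1, |x|^{-h}}` for distinct points `x, x'` of the set. -/
def PDiscrete {d : ℕ} (A : Set (Rd d)) : Prop :=
  ∃ c > (0:ℝ), ∃ h > (0:ℝ), ∀ x ∈ A, ∀ y ∈ A, x ≠ y →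
    c * (if ‖x‖ ≤ 1 then 1 else ‖x‖ ^ (-h)) ≤ dist x y

/-- A set has bounded density if it is locally finite and the number of its
points in balls of radius 1 is uniformly bounded. -/
def BoundedDensity {d : ℕ} (A : Set (Rd d)) : Prop :=
  LocFinite A ∧ ∃ N : ℕ, ∀ x : Rd d, (A ∩ Metric.ball x 1).ncard ≤ N

/-- A set is relatively dense if it intersects every ball of some fixed radius `R`. -/
def RelDense {d : ℕ} (A : Set (Rd d)) : Prop :=
  ∃ R : ℝ, 0 < R ∧ ∀ x : Rd d, ∃ a ∈ A, dist x a ≤ R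

/-- A full-rank lattice in `ℝ^d` is the image of `ℤ^d` under an invertible
linear operator. -/
def IsFullRankLattice {d : ℕ} (L : Set (Rd d)) : Prop :=
  ∃ T : Rd d →ₗ[ℝ] Rd d, Function.Bijective T ∧
    L = T '' {x : Rd d | ∀ i, ∃ n : ℤ, x i = (n : ℝ)}

/-- The multi-indices `k ∈ (ℕ ∪ {0})^d` with `‖k‖ = k₁ + ⋯ + k_d ≤ K`. -/
def mIdx (d K : ℕ) : Finset (Fin d → ℕ) :=
  (Finset.Iic fun _ => K).filter fun k => (∑ i, k i) ≤ K

/-- Partial derivative in the `i`-th coordinate direction. -/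
def pderiv' {d : ℕ} (i : Fin d) (φ : Rd d → ℂ) : Rd d → ℂ :=
  fun x => fderiv ℝ φ x (EuclideanSpace.single i (1:ℝ))

/-- The mixed partial derivative `D^k = ∂^{k₁}_{x₁} ⋯ ∂^{k_d}_{x_d}`. -/
def Dmulti {d : ℕ} (k : Fin d → ℕ) : (Rd d → ℂ) → (Rd d → ℂ) :=
  ((List.finRange d).map fun i => (pderiv' i)^[k i]).foldr (· ∘ ·) id

/-- The action of `D^k δ_λ` on a test function: `φ ↦ (-1)^{‖k‖} (D^k φ)(λ)`. -/
def dkDelta {d : ℕ} (k : Fin d → ℕ) (lam : Rd d) (φ : SchwartzMap (Rd d) ℂ) : ℂ :=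
  (-1 : ℂ) ^ (∑ i, k i) * Dmulti k (⇑φ) lam

/-- The exponential `e^{2πi⟨x,w⟩}`. -/
def e2pi {d : ℕ} (x w : Rd d) : ℂ :=
  Complex.exp (((2 * Real.pi : ℝ) : ℂ) * Complex.I * ((⟪x, w⟫ : ℝ) : ℂ))

/-- A trigonometric polynomial: a finite sum `Σ c_ω e^{2πi⟨x,ω⟩}`. -/
def IsTrigPoly {d : ℕ} (P : Rd d → ℂ) : Prop :=
  ∃ (n : ℕ) (cc : Fin n → ℂ) (w : Fin n → Rd d),
    ∀ x, P x = ∑ i, cc i * e2pi x (w i)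

/-- The monomial `x^m = x₁^{m₁} ⋯ x_d^{m_d}` (as a complex number). -/
def monom {d : ℕ} (m : Fin d → ℕ) (x : Rd d) : ℂ := ((∏ i, (x i) ^ (m i) : ℝ) : ℂ)

/-- The total variation of the pure point measure with masses `b` on the open
ball `B(0,r)`: `Σ_{|γ| < r} |b(γ)|` (as an extended nonnegative real). -/
def ballVar {d : ℕ} (b : Rd d → ℂ) (r : ℝ) : ℝ≥0∞ :=
  ∑' γ : Rd d, if ‖γ‖ < r then (‖b γ‖₊ : ℝ≥0∞) else 0

/-- The pure point measure `μ = Σ_λ a(λ) δ_λ` belongs to `S*(ℝ^d)` and is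
represented there by the tempered distribution `f`: its support is countable,
`Σ_λ |a(λ)| |φ(λ)| < ∞` for every Schwartz function `φ`, and the (automatically
continuous) functional `φ ↦ Σ_λ a(λ) φ(λ)` coincides with `f`. -/
def RepMeasure {d : ℕ} (a : Rd d → ℂ) (f : TemperedDist d) : Prop :=
  {x | a x ≠ 0}.Countable ∧
  (∀ φ : SchwartzMap (Rd d) ℂ, Summable fun lam => ‖a lam‖ * ‖φ lam‖) ∧
  (∀ φ : SchwartzMap (Rd d) ℂ, f φ = ∑' lam, a lam * φ lam)

/-- A continuous function on `ℝ^d` is almost periodic if for every `ε > 0` its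
set of `ε`-almost periods is relatively dense. -/
def APFunction {d : ℕ} (g : Rd d → ℂ) : Prop :=
  Continuous g ∧ ∀ ε > (0:ℝ), RelDense {τ : Rd d | ∀ t, ‖g (t + τ) - g t‖ < ε}

/-- A tempered distribution is almost periodic if for every smooth compactly
supported `ψ` the function `t ↦ f(ψ(t - ·))` is almost periodic. -/
def APDistribution {d : ℕ} (f : TemperedDist d) : Prop :=
  ∀ ψ : Rd d → ℂ, ContDiff ℝ (⊤ : ℕ∞) ψ → HasCompactSupport ψ →
    ∀ Φ : Rd d → SchwartzMap (Rd d) ℂ, (∀ t y, Φ t y = ψ (t - y)) →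
      APFunction fun t => f (Φ t)

/-!
Smoothing the measures at a scale `δ` gives absolutely convergent trigonometric series, and the
bound `|μ̂ₛ|(B(0, r)) = O(r^d)` is what keeps these series bounded as `δ → 0` when they are read as
matrix coefficients of a unitary representation `U` of `ℝ^d`. In the limit all masses become
coefficients `aₛ(x) = ⟪ηₛ, U x ξ⟫` of one vector `ξ`. If the union `Λ` of the supports were not
covered by finitely many cosets of subgroups contained in `Λ - Λ`, some ultrafilter on `Λ` would
avoid all these cosets; take one for which the weak limit `w` of `U x ξ` has minimal norm. By
minimality and the lower bound on `∑ₛ |aₛ(x)|`, the coefficients of `w` have a support covered by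
finitely many of these cosets. The ultrafilter escapes from it, which forces `⟪ηₛ, w⟫ = 0` for all
`s`, while the lower bound survives in the limit. So `Λ` is covered, and as `Λ` is uniformly
discrete, the subgroups are discrete and `Λ` lies in finitely many cosets of full-rank lattices.

Two of these cosets are either contained in a third one or told apart by a factor
`x ↦ 1 - e^{2πi⟨x - x₀, m⟩}` that vanishes on the first and is not killed by averaging over the
second. Multiplying `aₛ` by these factors leaves a measure carried by a single coset, which is a
trigonometric polynomial there because its spectrum is locally finite, and the factors can be
divided out by taking mean values. So `aₛ` agrees with a lattice Dirac comb off finitely many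
hyperplanes. The difference is almost periodic and its smoothings vanish far along a generic ray,
hence it is zero.
-/

section

open Filter Topology FourierTransform

section Exponential

variable {d : ℕ}

theorem e2pi_eq_fourierChar (x w : Rd d) : e2pi x w = (𝐞 ⟪x, w⟫ : ℂ) := by
  rw [e2pi, Real.fourierChar_apply]
  push_cast
  ring_nf

theorem e2pi_comm (x w : Rd d) : e2pi x w = e2pi w x := by
  rw [e2pi, e2pi, real_inner_comm]

theorem e2pi_smul_comm (c : ℝ) (x w : Rd d) : e2pi (c • x) w = e2pi x (c • w) := by
  rw [e2pi, e2pi, real_inner_smul_left, real_inner_smul_right]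

/-- The character `x ↦ e^{2πi⟨x,γ⟩}` of `ℝ^d`, with values in the unit circle. -/
def e2piChar (γ : Rd d) : AddChar (Rd d) Circle :=
  Real.fourierChar.compAddMonoidHom (innerₗ (Rd d) γ).toAddMonoidHom

theorem coe_e2piChar (γ x : Rd d) : (e2piChar γ x : ℂ) = e2pi x γ := by
  rw [e2pi_comm, e2pi_eq_fourierChar]
  rfl

@[simp] theorem norm_e2pi (x w : Rd d) : ‖e2pi x w‖ = 1 := by
  rw [e2pi_eq_fourierChar, Circle.norm_coe]

theorem e2pi_ne_zero (x w : Rd d) : e2pi x w ≠ 0 :=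
  Complex.exp_ne_zero _

theorem e2pi_add_left (x y w : Rd d) : e2pi (x + y) w = e2pi x w * e2pi y w := by
  simp only [← coe_e2piChar, AddChar.map_add_eq_mul, Circle.coe_mul]

theorem e2pi_add_right (x v w : Rd d) : e2pi x (v + w) = e2pi x v * e2pi x w := by
  simp only [e2pi_comm x, e2pi_add_left]

@[simp] theorem e2pi_zero_left (w : Rd d) : e2pi 0 w = 1 := by simp [e2pi]

@[simp] theorem e2pi_zero_right (x : Rd d) : e2pi x 0 = 1 := by simp [e2pi]

theorem e2pi_neg_left (x w : Rd d) : e2pi (-x) w = (e2pi x w)⁻¹ := by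
  simp only [← coe_e2piChar, AddChar.map_neg_eq_inv, Circle.coe_inv]

theorem e2pi_neg_right (x w : Rd d) : e2pi x (-w) = (e2pi x w)⁻¹ := by
  simp only [e2pi_comm x, e2pi_neg_left]

theorem e2pi_nsmul_right (n : ℕ) (x w : Rd d) : e2pi x (n • w) = e2pi x w ^ n := by
  simp only [e2pi_comm x, ← coe_e2piChar, AddChar.map_nsmul_eq_pow, Circle.coe_pow]

theorem e2pi_eq_one_iff (x w : Rd d) : e2pi x w = 1 ↔ ∃ n : ℤ, ⟪x, w⟫ = n := by
  have h2πI : ((2 * Real.pi : ℝ) : ℂ) * Complex.I ≠ 0 := by simp [Real.pi_ne_zero]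
  rw [e2pi, Complex.exp_eq_one_iff]
  refine exists_congr fun n => ?_
  rw [show (n : ℂ) * (2 * Real.pi * Complex.I) = ((2 * Real.pi : ℝ) : ℂ) * Complex.I * n by
    push_cast; ring, mul_right_inj' h2πI]
  norm_cast

theorem fourier_eq_integral_e2pi (φ : Rd d → ℂ) (γ : Rd d) :
    𝓕 φ γ = ∫ x, (e2pi γ x)⁻¹ * φ x := by
  simp only [Real.fourier_eq, e2pi_comm γ, e2pi_eq_fourierChar, AddChar.map_neg_eq_inv,
    Circle.coe_inv, Circle.smul_def, smul_eq_mul]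

theorem fourierInv_eq_integral_e2pi (φ : Rd d → ℂ) (γ : Rd d) :
    𝓕⁻ φ γ = ∫ x, e2pi γ x * φ x := by
  simp only [Real.fourierInv_eq, e2pi_comm γ, e2pi_eq_fourierChar, Circle.smul_def, smul_eq_mul]

theorem fourier_compSubConst (φ : 𝓢(Rd d, ℂ)) (w γ : Rd d) :
    𝓕 (compSubConstCLM ℂ w φ) γ = (e2pi γ w)⁻¹ * 𝓕 φ γ := by
  rw [fourier_coe, fourier_coe, fourier_eq_integral_e2pi, fourier_eq_integral_e2pi,
    ← integral_const_mul, ← integral_add_right_eq_self _ w]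
  refine integral_congr_ae (.of_forall fun x => ?_)
  simp only [compSubConstCLM_apply, add_sub_cancel_right, e2pi_add_right, mul_inv]
  ring

end Exponential

section Ultrafilters

theorem exists_norm_le_tendsto_ultrafilter {α E : Type*} [NormedAddCommGroup E] [ProperSpace E]
    (𝒰 : Ultrafilter α) {f : α → E} {C : ℝ} (hf : ∀ x, ‖f x‖ ≤ C) :
    ∃ c, ‖c‖ ≤ C ∧ Tendsto f 𝒰 (𝓝 c) := by
  obtain ⟨c, hc, hle⟩ := (isCompact_closedBall (0 : E) C).ultrafilter_le_nhds' (𝒰.map f)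
    (Ultrafilter.mem_map.2 (univ_mem' fun x => mem_closedBall_zero_iff.2 (hf x)))
  exact ⟨c, mem_closedBall_zero_iff.1 hc, hle⟩

theorem tendsto_ultrafilter_bind {α β X : Type*} [TopologicalSpace X] {𝒱 : Ultrafilter α}
    {𝒰 : α → Ultrafilter β} {f : β → X} {c : α → X} {c₀ : X}
    (hf : ∀ x, Tendsto f (𝒰 x) (𝓝 (c x))) (hc : Tendsto c 𝒱 (𝓝 c₀)) :
    Tendsto f (𝒱.bind 𝒰) (𝓝 c₀) := by
  refine tendsto_nhds.2 fun O hO hcO => ?_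
  change ∀ᶠ x in (𝒱 : Filter α), f ⁻¹' O ∈ 𝒰 x
  filter_upwards [hc.eventually (hO.mem_nhds hcO)] with x hx
  exact (hf x).eventually (hO.mem_nhds hx)

theorem ultrafilter_bind_le {α β : Type*} {𝒱 : Ultrafilter α} {𝒰 : α → Ultrafilter β} {F : Filter β}
    (h : ∀ᶠ x in (𝒱 : Filter α), ↑(𝒰 x) ≤ F) : ↑(𝒱.bind 𝒰) ≤ F := fun A hA => by
  change ∀ᶠ x in (𝒱 : Filter α), A ∈ 𝒰 x
  filter_upwards [h] with x hx using hx hA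

theorem hyperfilter_le_atTop : (hyperfilter ℕ : Filter ℕ) ≤ atTop :=
  Nat.cofinite_eq_atTop ▸ hyperfilter_le_cofinite

/-- The filter generated by the complements of the members of `𝒞`: the ultrafilters finer than it
are those containing no member of `𝒞`. -/
def avoiding {α : Type*} (𝒞 : Set (Set α)) : Filter α := ⨅ A ∈ 𝒞, 𝓟 Aᶜ

theorem le_avoiding_iff {α : Type*} {𝒞 : Set (Set α)} {𝒰 : Ultrafilter α} :
    ↑𝒰 ≤ avoiding 𝒞 ↔ ∀ A ∈ 𝒞, A ∉ 𝒰 := by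
  simp [avoiding, Ultrafilter.compl_mem_iff_notMem]

theorem exists_finite_subset_sUnion_of_ultrafilter {α : Type*} {𝒞 : Set (Set α)} {Λ : Set α}
    (h : ∀ 𝒰 : Ultrafilter α, Λ ∈ 𝒰 → ∃ A ∈ 𝒞, A ∈ 𝒰) :
    ∃ t ⊆ 𝒞, t.Finite ∧ Λ ⊆ ⋃₀ t := by
  have hmem : Λᶜ ∈ avoiding 𝒞 := by
    refine Filter.mem_iff_ultrafilter.2 fun 𝒰 h𝒰 => Ultrafilter.compl_mem_iff_notMem.2 fun hΛ => ?_
    obtain ⟨A, hA, hA𝒰⟩ := h 𝒰 hΛ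
    exact le_avoiding_iff.1 h𝒰 A hA hA𝒰
  obtain ⟨t, ht, ht𝒞, hsub⟩ := mem_biInf_principal.1 hmem
  refine ⟨t, ht𝒞, ht, compl_subset_compl.1 ?_⟩
  rwa [compl_sUnion, sInter_image]

end Ultrafilters

section UnitaryRepresentations

/-- A unitary representation of an additive group `G` on `H`: since `G` is a group, a homomorphism
into the monoid of linear isometries automatically consists of unitary operators. -/
abbrev UnitaryRep (G H : Type*) [AddCommGroup G] [SeminormedAddCommGroup H]
    [InnerProductSpace ℂ H] :=
  AddChar G (H →ₗᵢ[ℂ] H)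

namespace UnitaryRep

variable {G H : Type*} [AddCommGroup G] [NormedAddCommGroup H] [InnerProductSpace ℂ H]
  (U : UnitaryRep G H)

theorem add_apply (x y : G) (v : H) : U (x + y) v = U x (U y v) := by
  rw [AddChar.map_add_eq_mul, LinearIsometry.coe_mul, Function.comp_apply]

@[simp] theorem zero_apply (v : H) : U 0 v = v := by
  rw [AddChar.map_zero_eq_one, LinearIsometry.coe_one, id]

theorem apply_comm (x y : G) (v : H) : U x (U y v) = U y (U x v) := by
  rw [← U.add_apply, add_comm, U.add_apply]

theorem inner_apply_left (x : G) (v w : H) : inner ℂ (U x v) w = inner ℂ v (U (-x) w) := by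
  rw [← (U (-x)).inner_map_map, ← U.add_apply, neg_add_cancel, U.zero_apply]

theorem inner_apply_right (x : G) (v w : H) : inner ℂ v (U x w) = inner ℂ (U (-x) v) w := by
  rw [U.inner_apply_left, neg_neg]

section WeakLimit

variable [CompleteSpace H]

theorem exists_weakLimit (𝒰 : Ultrafilter G) :
    ∃ T : H →L[ℂ] H, ∀ v u, Tendsto (fun x => inner ℂ v (U x u)) 𝒰 (𝓝 (inner ℂ v (T u))) := by
  have hbound : ∀ v u, ∃ c, ‖c‖ ≤ ‖v‖ * ‖u‖ ∧ Tendsto (fun x => inner ℂ v (U x u)) 𝒰 (𝓝 c) :=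
    fun v u => exists_norm_le_tendsto_ultrafilter 𝒰 fun x =>
      (norm_inner_le_norm _ _).trans_eq (by rw [LinearIsometry.norm_map])
  choose B hnorm hB using hbound
  let form : H →L⋆[ℂ] H →L[ℂ] ℂ := LinearMap.mkContinuous₂
    (LinearMap.mk₂'ₛₗ (starRingEnd ℂ) (RingHom.id ℂ) B
      (fun v v' u => tendsto_nhds_unique (hB _ _) <| by
        simpa only [inner_add_left] using (hB v u).add (hB v' u))
      (fun c v u => tendsto_nhds_unique (hB _ _) <| by
        simpa only [inner_smul_left, smul_eq_mul] using (hB v u).const_mul _)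
      (fun v u u' => tendsto_nhds_unique (hB _ _) <| by
        simpa only [map_add, inner_add_right] using (hB v u).add (hB v u'))
      (fun c v u => tendsto_nhds_unique (hB _ _) <| by
        simpa only [map_smul, inner_smul_right, smul_eq_mul, RingHom.id_apply]
          using (hB v u).const_mul _))
    1 (fun v u => by simpa using hnorm v u)
  refine ⟨(InnerProductSpace.continuousLinearMapOfBilin form).adjoint, fun v u => ?_⟩
  rw [ContinuousLinearMap.adjoint_inner_right, InnerProductSpace.continuousLinearMapOfBilin_apply]
  exact hB v u

/-- The limit of `U` along an ultrafilter in the weak operator topology. -/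
def weakLimit (𝒰 : Ultrafilter G) : H →L[ℂ] H := (U.exists_weakLimit 𝒰).choose

variable (𝒰 : Ultrafilter G)

theorem tendsto_inner_weakLimit (v u : H) :
    Tendsto (fun x => inner ℂ v (U x u)) 𝒰 (𝓝 (inner ℂ v (U.weakLimit 𝒰 u))) :=
  (U.exists_weakLimit 𝒰).choose_spec v u

theorem tendsto_inner_neg_weakLimit (u v : H) :
    Tendsto (fun x => inner ℂ u (U (-x) v)) 𝒰 (𝓝 (inner ℂ (U.weakLimit 𝒰 u) v)) := by
  simpa only [RCLike.star_def, inner_conj_symm, U.inner_apply_left]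
    using (U.tendsto_inner_weakLimit 𝒰 v u).star

theorem tendsto_inner_add_weakLimit (z : G) (v u : H) :
    Tendsto (fun x => inner ℂ v (U (z + x) u)) 𝒰 (𝓝 (inner ℂ v (U z (U.weakLimit 𝒰 u)))) := by
  simpa only [U.add_apply, U.inner_apply_right z] using U.tendsto_inner_weakLimit 𝒰 (U (-z) v) u

theorem weakLimit_apply_comm (z : G) (u : H) :
    U.weakLimit 𝒰 (U z u) = U z (U.weakLimit 𝒰 u) :=
  ext_inner_left ℂ fun v => tendsto_nhds_unique (U.tendsto_inner_weakLimit 𝒰 v (U z u)) <| by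
    simpa only [U.add_apply, U.apply_comm z] using U.tendsto_inner_add_weakLimit 𝒰 z v u

theorem inner_weakLimit_weakLimit (u v : H) :
    inner ℂ (U.weakLimit 𝒰 u) (U.weakLimit 𝒰 v)
      = inner ℂ ((U.weakLimit 𝒰).adjoint u) ((U.weakLimit 𝒰).adjoint v) := by
  refine tendsto_nhds_unique (U.tendsto_inner_weakLimit 𝒰 _ v) ?_
  have hadj := U.tendsto_inner_weakLimit 𝒰 u ((U.weakLimit 𝒰).adjoint v)
  rw [← ContinuousLinearMap.adjoint_inner_left] at hadj
  simpa only [U.inner_apply_right, ← U.weakLimit_apply_comm,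
    ContinuousLinearMap.adjoint_inner_right] using hadj

theorem isStarNormal_weakLimit : IsStarNormal (U.weakLimit 𝒰) := by
  refine ContinuousLinearMap.isStarNormal_iff_norm_eq_adjoint.2 fun v => ?_
  rw [@norm_eq_sqrt_re_inner ℂ, @norm_eq_sqrt_re_inner ℂ _ _ _ _ (ContinuousLinearMap.adjoint _ v),
    U.inner_weakLimit_weakLimit]

theorem weakLimit_bind_map_add (𝒱 : Ultrafilter G) (u : H) :
    U.weakLimit (𝒱.bind fun x => 𝒰.map (x + ·)) u = U.weakLimit 𝒱 (U.weakLimit 𝒰 u) :=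
  ext_inner_left ℂ fun v => tendsto_nhds_unique (U.tendsto_inner_weakLimit _ v u) <|
    tendsto_ultrafilter_bind
      (fun x => tendsto_map'_iff.2 (U.tendsto_inner_add_weakLimit 𝒰 x v u))
      (U.tendsto_inner_weakLimit 𝒱 v _)

theorem norm_inner_weakLimit_le (v u : H) : ‖inner ℂ v (U.weakLimit 𝒰 u)‖ ≤ ‖v‖ * ‖u‖ :=
  le_of_tendsto' (U.tendsto_inner_weakLimit 𝒰 v u).norm fun x =>
    (norm_inner_le_norm _ _).trans_eq (by rw [LinearIsometry.norm_map])

theorem norm_weakLimit_bind_le {ι : Type*} {𝒲 : Ultrafilter ι} {𝒱 : ι → Ultrafilter G} {ξ : H}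
    {c : ℝ} (hc : Tendsto (fun n => ‖U.weakLimit (𝒱 n) ξ‖) 𝒲 (𝓝 c)) :
    ‖U.weakLimit (𝒲.bind 𝒱) ξ‖ ≤ c := by
  set w := U.weakLimit (𝒲.bind 𝒱) ξ
  have hweak : Tendsto (fun n => inner ℂ w (U.weakLimit (𝒱 n) ξ)) 𝒲 (𝓝 (inner ℂ w w)) := by
    obtain ⟨l, -, hl⟩ := exists_norm_le_tendsto_ultrafilter 𝒲 fun n =>
      U.norm_inner_weakLimit_le (𝒱 n) w ξ
    rwa [tendsto_nhds_unique (U.tendsto_inner_weakLimit (𝒲.bind 𝒱) w ξ)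
      (tendsto_ultrafilter_bind (fun n => U.tendsto_inner_weakLimit (𝒱 n) w ξ) hl)]
  have hle : ‖w‖ * ‖w‖ ≤ ‖w‖ * c := by
    rw [← inner_self_eq_norm_mul_norm (𝕜 := ℂ), inner_self_re_eq_norm]
    exact le_of_tendsto_of_tendsto' hweak.norm (hc.const_mul ‖w‖) fun n => norm_inner_le_norm _ _
  rcases (norm_nonneg w).eq_or_lt with hw | hw
  · exact hw ▸ ge_of_tendsto' hc fun n => norm_nonneg _
  · exact le_of_mul_le_mul_left hle hw

theorem exists_ultrafilter_norm_weakLimit_le (F : Filter G) [F.NeBot] (ξ : H) :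
    ∃ 𝒰 : Ultrafilter G, ↑𝒰 ≤ F ∧
      ∀ 𝒱 : Ultrafilter G, ↑𝒱 ≤ F → ‖U.weakLimit 𝒰 ξ‖ ≤ ‖U.weakLimit 𝒱 ξ‖ := by
  set N : Set ℝ := (fun 𝒱 : Ultrafilter G => ‖U.weakLimit 𝒱 ξ‖) '' {𝒱 | ↑𝒱 ≤ F}
  have hbdd : BddBelow N := ⟨0, forall_mem_image.2 fun 𝒱 _ => norm_nonneg _⟩
  obtain ⟨u, -, hu, huN⟩ := exists_seq_tendsto_sInf (S := N) ⟨_, _, Ultrafilter.of_le F, rfl⟩ hbdd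
  choose 𝒱 h𝒱F h𝒱 using huN
  refine ⟨(hyperfilter ℕ).bind 𝒱, ultrafilter_bind_le (.of_forall h𝒱F), fun 𝒱' h𝒱' => ?_⟩
  refine (U.norm_weakLimit_bind_le ?_).trans (csInf_le hbdd ⟨𝒱', h𝒱', rfl⟩)
  exact (funext h𝒱 : _ = u) ▸ hu.mono_left hyperfilter_le_atTop

theorem tendsto_apply_of_norm_le_norm_weakLimit {w : H} (hw : ‖w‖ ≤ ‖U.weakLimit 𝒰 w‖) :
    Tendsto (fun x => U x w) 𝒰 (𝓝 (U.weakLimit 𝒰 w)) := by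
  set c := U.weakLimit 𝒰 w
  have hlim : Tendsto (fun x => ‖w‖ ^ 2 - 2 * (inner ℂ c (U x w)).re + ‖c‖ ^ 2) 𝒰
      (𝓝 (‖w‖ ^ 2 - 2 * (inner ℂ c c).re + ‖c‖ ^ 2)) :=
    (((Complex.continuous_re.tendsto _).comp (U.tendsto_inner_weakLimit 𝒰 c w)).const_mul 2
      |>.const_sub _).add_const _
  have hexpand : ∀ x, ‖w‖ ^ 2 - 2 * (inner ℂ c (U x w)).re + ‖c‖ ^ 2 = ‖U x w - c‖ ^ 2 :=
    fun x => by rw [@norm_sub_sq ℂ, LinearIsometry.norm_map, inner_re_symm]; rfl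
  have hself : (inner ℂ c c).re = ‖c‖ ^ 2 := by
    simpa using inner_self_eq_norm_sq (𝕜 := ℂ) c
  simp only [hexpand, hself] at hlim
  have hzero : ‖w‖ ^ 2 - 2 * ‖c‖ ^ 2 + ‖c‖ ^ 2 = 0 := by
    refine le_antisymm ?_ (ge_of_tendsto' hlim fun x => by positivity)
    linarith [pow_le_pow_left₀ (norm_nonneg w) hw 2]
  rw [hzero] at hlim
  rw [tendsto_iff_norm_sub_tendsto_zero]
  simpa using hlim.sqrt

end WeakLimit

section CoefficientSupport

variable {ι : Type*} (η : ι → H)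

/-- The set of `x` at which one of the matrix coefficients `⟪η i, U x w⟫` does not vanish. -/
def coeffSupport (w : H) : Set G := {x | ∃ i, inner ℂ (η i) (U x w) ≠ 0}

variable {U η}

theorem notMem_coeffSupport_iff {w : H} {x : G} :
    x ∉ U.coeffSupport η w ↔ ∀ i, inner ℂ (η i) (U x w) = 0 := by
  simp [coeffSupport]

theorem inner_weakLimit_eq_zero_of_notMem [CompleteSpace H] {𝒰 : Ultrafilter G} {ξ : H} {z : G}
    (hz : {l | z + l ∈ U.coeffSupport η ξ} ∉ 𝒰) (i : ι) :
    inner ℂ (η i) (U z (U.weakLimit 𝒰 ξ)) = 0 := by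
  refine tendsto_nhds_unique (U.tendsto_inner_add_weakLimit 𝒰 z (η i) ξ)
    (tendsto_const_nhds.congr' ?_)
  filter_upwards [Ultrafilter.compl_mem_iff_notMem.2 hz] with l hl
  exact (notMem_coeffSupport_iff.1 hl i).symm

variable [Fintype ι] {ε : ℝ} {w ξ : H}

theorem exists_norm_sub_lt_imp_sub_mem_stabilizer (hε : 0 < ε)
    (hgap : ∀ x ∈ U.coeffSupport η w, ε ≤ ∑ i, ‖inner ℂ (η i) (U x w)‖) :
    ∃ δ > 0, ∀ x y, ‖U x w - U y w‖ < δ →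
      x - y ∈ AddAction.stabilizer G (U.coeffSupport η w) := by
  have _ : 0 ≤ ∑ i, ‖η i‖ := Finset.sum_nonneg fun i _ => norm_nonneg _
  refine ⟨ε / (∑ i, ‖η i‖ + 1), by positivity, fun x y hxy => ?_⟩
  rw [lt_div_iff₀ (by positivity)] at hxy
  have hclose : ∀ z, ∑ i, ‖inner ℂ (η i) (U (z + x) w) - inner ℂ (η i) (U (z + y) w)‖ < ε := by
    intro z
    calc ∑ i, ‖inner ℂ (η i) (U (z + x) w) - inner ℂ (η i) (U (z + y) w)‖
        ≤ ∑ i, ‖η i‖ * ‖U x w - U y w‖ := Finset.sum_le_sum fun i _ => by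
          rw [← inner_sub_right, U.add_apply, U.add_apply, ← map_sub]
          exact (norm_inner_le_norm _ _).trans_eq (by rw [LinearIsometry.norm_map])
      _ ≤ ‖U x w - U y w‖ * (∑ i, ‖η i‖ + 1) := by
          rw [← Finset.sum_mul, mul_comm]
          gcongr
          exact le_add_of_nonneg_right zero_le_one
      _ < ε := hxy
  have himp : ∀ x y, (∀ z, ∑ i, ‖inner ℂ (η i) (U (z + x) w) - inner ℂ (η i) (U (z + y) w)‖ < ε) →
      ∀ z, z + x ∈ U.coeffSupport η w → z + y ∈ U.coeffSupport η w := by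
    intro x y h z hx
    by_contra hy
    simpa [notMem_coeffSupport_iff.1 hy, (hgap _ hx).not_gt] using h z
  have hiff : ∀ z, z + x ∈ U.coeffSupport η w ↔ z + y ∈ U.coeffSupport η w := fun z =>
    ⟨himp x y hclose z, himp y x (fun z => by simpa only [norm_sub_rev] using hclose z) z⟩
  refine AddAction.mem_stabilizer_iff.2 (Set.ext fun z => ?_)
  rw [Set.mem_vadd_set_iff_neg_vadd_mem, vadd_eq_add]
  convert (hiff (z - x)).symm using 2 <;> abel

theorem exists_finite_cover_vadd_stabilizer (hε : 0 < ε)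
    (hgap : ∀ x ∈ U.coeffSupport η w, ε ≤ ∑ i, ‖inner ℂ (η i) (U x w)‖)
    (hlim : ∀ 𝒱 : Ultrafilter G, U.coeffSupport η w ∈ 𝒱 → ∃ c, Tendsto (fun x => U x w) 𝒱 (𝓝 c)) :
    ∃ t ⊆ range fun x : G => x +ᵥ (AddAction.stabilizer G (U.coeffSupport η w) : Set G),
      t.Finite ∧ U.coeffSupport η w ⊆ ⋃₀ t := by
  obtain ⟨δ, hδ, hclose⟩ := exists_norm_sub_lt_imp_sub_mem_stabilizer hε hgap
  refine exists_finite_subset_sUnion_of_ultrafilter fun 𝒱 h𝒱 => ?_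
  obtain ⟨c, hc⟩ := hlim 𝒱 h𝒱
  have hnear : ∀ᶠ x in (𝒱 : Filter G), dist (U x w) c < δ / 2 :=
    Metric.tendsto_nhds.1 hc _ (half_pos hδ)
  obtain ⟨x₀, hx₀⟩ := hnear.exists
  refine ⟨_, ⟨x₀, rfl⟩, Filter.mem_of_superset hnear fun x hx => ?_⟩
  rw [Set.mem_vadd_set_iff_neg_vadd_mem, vadd_eq_add, neg_add_eq_sub]
  refine hclose x x₀ ?_
  rw [← dist_eq_norm]
  linarith [dist_triangle_right (U x w) (U x₀ w) c, show dist (U x w) c < δ / 2 from hx]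

variable [CompleteSpace H] {𝒰 : Ultrafilter G}

theorem le_sum_norm_inner_weakLimit
    (hgap : ∀ x ∈ U.coeffSupport η ξ, ε ≤ ∑ i, ‖inner ℂ (η i) (U x ξ)‖) {z : G}
    (hz : {l | z + l ∈ U.coeffSupport η ξ} ∈ 𝒰) :
    ε ≤ ∑ i, ‖inner ℂ (η i) (U z (U.weakLimit 𝒰 ξ))‖ := by
  refine ge_of_tendsto (tendsto_finsetSum _ fun i _ =>
    (U.tendsto_inner_add_weakLimit 𝒰 z (η i) ξ).norm) ?_
  filter_upwards [hz] with l hl using hgap _ hl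

theorem mem_coeffSupport_weakLimit_iff (hε : 0 < ε)
    (hgap : ∀ x ∈ U.coeffSupport η ξ, ε ≤ ∑ i, ‖inner ℂ (η i) (U x ξ)‖) {z : G} :
    z ∈ U.coeffSupport η (U.weakLimit 𝒰 ξ) ↔ {l | z + l ∈ U.coeffSupport η ξ} ∈ 𝒰 := by
  refine ⟨fun ⟨i, hi⟩ => by_contra fun hz => hi (inner_weakLimit_eq_zero_of_notMem hz i),
    fun hz => by_contra fun hcon => ?_⟩
  simpa [notMem_coeffSupport_iff.1 hcon, hε.not_ge] using le_sum_norm_inner_weakLimit hgap hz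

theorem stabilizer_coeffSupport_weakLimit_subset (hε : 0 < ε)
    (hgap : ∀ x ∈ U.coeffSupport η ξ, ε ≤ ∑ i, ‖inner ℂ (η i) (U x ξ)‖)
    (h𝒰 : U.coeffSupport η ξ ∈ 𝒰) :
    (AddAction.stabilizer G (U.coeffSupport η (U.weakLimit 𝒰 ξ)) : Set G)
      ⊆ U.coeffSupport η ξ - U.coeffSupport η ξ := by
  intro y hy
  have hzero : 0 ∈ U.coeffSupport η (U.weakLimit 𝒰 ξ) := by
    simpa [mem_coeffSupport_weakLimit_iff hε hgap] using h𝒰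
  have hyE : y ∈ U.coeffSupport η (U.weakLimit 𝒰 ξ) := by
    simpa [AddAction.mem_stabilizer_iff.1 hy] using Set.vadd_mem_vadd_set (a := y) hzero
  obtain ⟨l, hl, hyl⟩ :=
    𝒰.nonempty_of_mem (inter_mem h𝒰 ((mem_coeffSupport_weakLimit_iff hε hgap).1 hyE))
  exact Set.mem_sub.2 ⟨y + l, hyl, l, hl, add_sub_cancel_right y l⟩

theorem exists_tendsto_apply_weakLimit_of_minimal {F : Filter G}
    (hF : ∀ x, map (x + ·) F ≤ F) (hε : 0 < ε)
    (hgap : ∀ x ∈ U.coeffSupport η ξ, ε ≤ ∑ i, ‖inner ℂ (η i) (U x ξ)‖)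
    (h𝒰 : ↑𝒰 ≤ F)
    (hmin : ∀ 𝒱 : Ultrafilter G, ↑𝒱 ≤ F ⊓ 𝓟 (U.coeffSupport η ξ) →
      ‖U.weakLimit 𝒰 ξ‖ ≤ ‖U.weakLimit 𝒱 ξ‖)
    (𝒱 : Ultrafilter G) (h𝒱 : U.coeffSupport η (U.weakLimit 𝒰 ξ) ∈ 𝒱) :
    ∃ c, Tendsto (fun x => U x (U.weakLimit 𝒰 ξ)) 𝒱 (𝓝 c) := by
  refine ⟨_, U.tendsto_apply_of_norm_le_norm_weakLimit 𝒱 ?_⟩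
  rw [← U.weakLimit_bind_map_add]
  refine hmin _ (ultrafilter_bind_le ?_)
  filter_upwards [h𝒱] with x hx
  exact le_inf ((map_mono h𝒰).trans (hF x))
    (le_principal_iff.2 ((mem_coeffSupport_weakLimit_iff hε hgap).1 hx))

theorem weakLimit_adjoint_apply_eq_zero
    (hcyc : ∀ v, (∀ x, inner ℂ v (U x ξ) = 0) → v = 0) {v : H}
    (hv : ∀ z, inner ℂ (U.weakLimit 𝒰 v) (U z (U.weakLimit 𝒰 ξ)) = 0) :
    (U.weakLimit 𝒰).adjoint v = 0 := by
  set T := U.weakLimit 𝒰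
  have hTT : (T.adjoint ∘L T) v = 0 := hcyc _ fun x => by
    rw [ContinuousLinearMap.comp_apply, ContinuousLinearMap.adjoint_inner_left,
      U.weakLimit_apply_comm, hv]
  have hT : v ∈ ((T.adjoint ∘L T : H →L[ℂ] H) : H →ₗ[ℂ] H).ker := hTT
  rw [ContinuousLinearMap.ker_adjoint_comp_self] at hT
  exact (ContinuousLinearMap.IsStarNormal.adjoint_apply_eq_zero_iff
    (U.isStarNormal_weakLimit 𝒰) v).2 hT

end CoefficientSupport

end UnitaryRep

/-- The cosets of those subgroups of `G` which are contained in `D`. -/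
def cosetsOfSubgroupsIn {G : Type*} [AddCommGroup G] (D : Set G) : Set (Set G) :=
  {A | ∃ (g : G) (P : AddSubgroup G), (P : Set G) ⊆ D ∧ A = g +ᵥ (P : Set G)}

theorem preimage_sub_mem_cosetsOfSubgroupsIn {G : Type*} [AddCommGroup G] {D A : Set G}
    (z : G) (hA : A ∈ cosetsOfSubgroupsIn D) : {l | z - l ∈ A} ∈ cosetsOfSubgroupsIn D := by
  obtain ⟨g, P, hP, rfl⟩ := hA
  refine ⟨z - g, P, hP, Set.ext fun l => ?_⟩
  rw [Set.mem_vadd_set_iff_neg_vadd_mem, SetLike.mem_coe, ← neg_mem_iff]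
  simp [Set.mem_vadd_set_iff_neg_vadd_mem, add_comm, add_left_comm, sub_eq_add_neg]

theorem map_add_left_avoiding_cosetsOfSubgroupsIn_le {G : Type*} [AddCommGroup G] (D : Set G)
    (x : G) :
    map (x + ·) (avoiding (cosetsOfSubgroupsIn D)) ≤ avoiding (cosetsOfSubgroupsIn D) := by
  refine le_iInf₂ fun A ⟨g, P, hP, hA⟩ => ?_
  have hmem : ((-x + g) +ᵥ (P : Set G))ᶜ ∈ avoiding (cosetsOfSubgroupsIn D) :=
    mem_iInf_of_mem _ (mem_iInf_of_mem ⟨_, P, hP, rfl⟩ (mem_principal_self _))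
  rw [le_principal_iff, mem_map]
  convert hmem using 1
  ext y
  simp [hA, Set.mem_vadd_set_iff_neg_vadd_mem, add_assoc, add_comm, add_left_comm]

theorem UnitaryRep.exists_finite_coset_cover_coeffSupport {G H ι : Type*} [AddCommGroup G]
    [NormedAddCommGroup H] [InnerProductSpace ℂ H] [CompleteSpace H] [Fintype ι]
    {U : UnitaryRep G H} {η : ι → H} {ξ : H} {ε : ℝ}
    (hcyc : ∀ v, (∀ x, inner ℂ v (U x ξ) = 0) → v = 0) (hε : 0 < ε)
    (hgap : ∀ x ∈ U.coeffSupport η ξ, ε ≤ ∑ i, ‖inner ℂ (η i) (U x ξ)‖) :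
    ∃ t ⊆ cosetsOfSubgroupsIn (U.coeffSupport η ξ - U.coeffSupport η ξ),
      t.Finite ∧ U.coeffSupport η ξ ⊆ ⋃₀ t := by
  set Λ := U.coeffSupport η ξ
  refine exists_finite_subset_sUnion_of_ultrafilter fun 𝒲 h𝒲 => ?_
  by_contra! havoid
  set F := avoiding (cosetsOfSubgroupsIn (Λ - Λ))
  have hne : (F ⊓ 𝓟 Λ).NeBot :=
    𝒲.neBot.mono (le_inf (le_avoiding_iff.2 havoid) (le_principal_iff.2 h𝒲))
  obtain ⟨𝒰, h𝒰, hmin⟩ := U.exists_ultrafilter_norm_weakLimit_le (F ⊓ 𝓟 Λ) ξ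
  obtain ⟨h𝒰F, h𝒰Λ⟩ := le_inf_iff.1 h𝒰
  rw [le_principal_iff] at h𝒰Λ
  set w := U.weakLimit 𝒰 ξ
  set E := U.coeffSupport η w
  have hgapE : ∀ x ∈ E, ε ≤ ∑ i, ‖inner ℂ (η i) (U x w)‖ := fun x hx =>
    le_sum_norm_inner_weakLimit hgap ((mem_coeffSupport_weakLimit_iff hε hgap).1 hx)
  obtain ⟨t, ht, htfin, hEt⟩ := exists_finite_cover_vadd_stabilizer hε hgapE
    (exists_tendsto_apply_weakLimit_of_minimal
      (map_add_left_avoiding_cosetsOfSubgroupsIn_le _) hε hgap h𝒰F hmin)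
  have hreflect : ∀ z, {l | z - l ∈ E} ∉ 𝒰 := by
    intro z hz
    obtain ⟨A, hA, hzA⟩ := (Ultrafilter.finite_biUnion_mem_iff htfin
      (s := fun A => {l | z - l ∈ A})).1 (mem_of_superset hz fun l hl => by simpa using hEt hl)
    refine le_avoiding_iff.1 h𝒰F _ (preimage_sub_mem_cosetsOfSubgroupsIn z ?_) hzA
    obtain ⟨x, rfl⟩ := ht hA
    exact ⟨x, _, stabilizer_coeffSupport_weakLimit_subset hε hgap h𝒰Λ, rfl⟩
  have hzero : ∀ i z, inner ℂ (U.weakLimit 𝒰 (η i)) (U z w) = 0 := by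
    intro i z
    refine tendsto_nhds_unique (U.tendsto_inner_neg_weakLimit 𝒰 (η i) (U z w))
      (tendsto_const_nhds.congr' ?_)
    filter_upwards [Ultrafilter.compl_mem_iff_notMem.2 (hreflect z)] with l hl
    rw [← U.add_apply, neg_add_eq_sub, notMem_coeffSupport_iff.1 hl i]
  have hη : ∀ i, inner ℂ (η i) w = 0 := fun i => by
    rw [← ContinuousLinearMap.adjoint_inner_left, weakLimit_adjoint_apply_eq_zero hcyc (hzero i),
      inner_zero_left]
  have h0 : (0 : G) ∈ E :=
    (mem_coeffSupport_weakLimit_iff hε hgap).2 (by simpa using h𝒰Λ)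
  simpa [hη, hε.not_ge] using hgapE 0 h0

end UnitaryRepresentations

section HilbertLimits

universe u v

namespace UnitaryRep

variable {G : Type*} {V : Type v} [AddCommGroup G] [SeminormedAddCommGroup V]
  [InnerProductSpace ℂ V]

/-- The extension of a unitary representation to the Hilbert space completion. -/
def completion (U : UnitaryRep G V) : UnitaryRep G (UniformSpace.Completion V) where
  toFun x :=
    { toLinearMap := ((U x).toContinuousLinearMap.completion :
        UniformSpace.Completion V →ₗ[ℂ] UniformSpace.Completion V)
      norm_map' := fun v => by
        induction v using UniformSpace.Completion.induction_on with
        | hp => exact isClosed_eq (by fun_prop) (by fun_prop)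
        | ih v => simp }
  map_zero_eq_one' := by
    ext v
    induction v using UniformSpace.Completion.induction_on with
    | hp => exact isClosed_eq (LinearIsometry.continuous _) continuous_id
    | ih v => simp
  map_add_eq_mul' x y := by
    ext v
    induction v using UniformSpace.Completion.induction_on with
    | hp => exact isClosed_eq (LinearIsometry.continuous _) (LinearIsometry.continuous _)
    | ih v => simp [AddChar.map_add_eq_mul]

@[simp] theorem completion_apply_coe (U : UnitaryRep G V) (x : G) (v : V) :
    U.completion x (v : UniformSpace.Completion V) = (U x v : V) :=
  ContinuousLinearMap.completion_apply_coe _ v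

theorem eq_zero_of_inner_completion_apply_eq_zero {U : UnitaryRep G V} {ξ : V}
    (hspan : Submodule.span ℂ (range fun x => U x ξ) = ⊤) {v : UniformSpace.Completion V}
    (hv : ∀ x, inner ℂ v (U.completion x (ξ : UniformSpace.Completion V)) = 0) : v = 0 := by
  have hcoe : ∀ u : V, inner ℂ v (u : UniformSpace.Completion V) = 0 := by
    intro u
    have hu : u ∈ Submodule.span ℂ (range fun x => U x ξ) := hspan ▸ Submodule.mem_top
    induction hu using Submodule.span_induction with
    | mem u hu =>
      obtain ⟨x, rfl⟩ := hu
      exact completion_apply_coe U x ξ ▸ hv x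
    | zero => rw [UniformSpace.Completion.coe_zero, inner_zero_right]
    | add u u' _ _ h h' => rw [UniformSpace.Completion.coe_add, inner_add_right, h, h', add_zero]
    | smul c u _ h => rw [UniformSpace.Completion.coe_smul, inner_smul_right, h, mul_zero]
  refine ext_inner_right ℂ fun u => ?_
  rw [inner_zero_left]
  induction u using UniformSpace.Completion.induction_on with
  | hp => exact isClosed_eq (by fun_prop) (by fun_prop)
  | ih u => exact hcoe u

theorem exists_cyclic_completion {κ : Type*} (U : UnitaryRep G V) {ξ : V}
    (hspan : Submodule.span ℂ (range fun x => U x ξ) = ⊤) (f : κ → V →L[ℂ] ℂ) :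
    ∃ (H : Type v) (_ : NormedAddCommGroup H) (_ : InnerProductSpace ℂ H) (_ : CompleteSpace H)
      (U' : UnitaryRep G H) (ξ' : H) (η : κ → H),
      (∀ v, (∀ x, inner ℂ v (U' x ξ') = 0) → v = 0) ∧
      ∀ i x, f i (U x ξ) = inner ℂ (η i) (U' x ξ') := by
  refine ⟨UniformSpace.Completion V, inferInstance, inferInstance, inferInstance, U.completion, ξ,
    fun i => (InnerProductSpace.toDual ℂ _).symm (f i).fromCompletion,
    fun v => eq_zero_of_inner_completion_apply_eq_zero hspan, fun i x => ?_⟩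
  rw [InnerProductSpace.toDual_symm_apply, completion_apply_coe,
    ContinuousLinearMap.fromCompletion_apply_coe]

end UnitaryRep

section LimitCore

variable {ι V : Type*} [AddCommGroup V] [Module ℂ V] {E : ι → Type*}
  [∀ n, NormedAddCommGroup (E n)] [∀ n, InnerProductSpace ℂ (E n)]

/-- The limit of the inner products pulled back along linear maps `T n`. -/
abbrev limitInnerCore {l : Filter ι} [l.NeBot] (T : ∀ n, V →ₗ[ℂ] E n) (I : V → V → ℂ)
    (hI : ∀ v w, Tendsto (fun n => inner ℂ (T n v) (T n w)) l (𝓝 (I v w))) :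
    PreInnerProductSpace.Core ℂ V where
  inner := I
  conj_inner_symm v w := tendsto_nhds_unique ((hI w v).star) <|
    (hI v w).congr fun n => (inner_conj_symm _ _).symm
  re_inner_nonneg v := ge_of_tendsto' ((Complex.continuous_re.tendsto _).comp (hI v v))
    fun n => inner_self_nonneg (𝕜 := ℂ)
  add_left v v' w := tendsto_nhds_unique (hI (v + v') w) <| by
    simpa only [map_add, inner_add_left] using (hI v w).add (hI v' w)
  smul_left v w c := tendsto_nhds_unique (hI (c • v) w) <| by
    simpa only [map_smul, inner_smul_left] using (hI v w).const_mul _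

theorem exists_tendsto_inner_ultrafilter (𝒰 : Ultrafilter ι) {v w : ∀ n, E n} {A B : ℝ}
    (hv : ∀ n, ‖v n‖ ≤ A) (hw : ∀ n, ‖w n‖ ≤ B) :
    ∃ c : ℂ, Tendsto (fun n => inner ℂ (v n) (w n)) 𝒰 (𝓝 c) := by
  obtain ⟨c, -, hc⟩ := exists_norm_le_tendsto_ultrafilter 𝒰 fun n =>
    (norm_inner_le_norm (𝕜 := ℂ) (v n) (w n)).trans
      (mul_le_mul (hv n) (hw n) (norm_nonneg _) ((norm_nonneg _).trans (hv n)))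
  exact ⟨c, hc⟩

end LimitCore

/-- Translation on finitely supported functions, sending `single y c` to `single (x + y) c`. -/
def finsuppTranslation (G : Type*) [AddCommGroup G] : AddChar G (Module.End ℂ (G →₀ ℂ)) where
  toFun x := Finsupp.lmapDomain ℂ ℂ (x + ·)
  map_zero_eq_one' := by
    ext
    simp
  map_add_eq_mul' x y := by
    ext
    simp [add_assoc]

theorem finsuppTranslation_apply_single {G : Type*} [AddCommGroup G] (x y : G) (c : ℂ) :
    finsuppTranslation G x (Finsupp.single y c) = Finsupp.single (x + y) c :=
  Finsupp.mapDomain_single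

theorem span_finsuppTranslation_apply_single (G : Type*) [AddCommGroup G] :
    Submodule.span ℂ (range fun x => finsuppTranslation G x (Finsupp.single 0 1)) = ⊤ := by
  simp only [finsuppTranslation_apply_single, add_zero]
  exact Finsupp.basisSingleOne.span_eq

namespace UnitaryRep

variable {G : Type u} [AddCommGroup G]

section OrbitMap

variable {E : Type*} [NormedAddCommGroup E] [InnerProductSpace ℂ E]

/-- The linear extension of the orbit map `x ↦ U x ξ`. -/
def orbitMap (U : UnitaryRep G E) (ξ : E) : (G →₀ ℂ) →ₗ[ℂ] E :=
  Finsupp.linearCombination ℂ fun x => U x ξ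

theorem orbitMap_finsuppTranslation (U : UnitaryRep G E) (ξ : E) (x : G) (v : G →₀ ℂ) :
    U.orbitMap ξ (finsuppTranslation G x v) = U x (U.orbitMap ξ v) := by
  refine (Finsupp.linearCombination_mapDomain ..).trans ?_
  simp [orbitMap, Finsupp.linearCombination_apply, map_finsuppSum, U.add_apply]

theorem norm_orbitMap_le (U : UnitaryRep G E) (ξ : E) (v : G →₀ ℂ) :
    ‖U.orbitMap ξ v‖ ≤ (∑ x ∈ v.support, ‖v x‖) * ‖ξ‖ := by
  rw [orbitMap, Finsupp.linearCombination_apply, Finsupp.sum, Finset.sum_mul]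
  exact norm_sum_le_of_le _ fun x _ => by rw [norm_smul, LinearIsometry.norm_map]

end OrbitMap

theorem exists_cyclic_tendsto_inner {ι κ : Type*} (𝒰 : Ultrafilter ι) {E : ι → Type*}
    [∀ n, NormedAddCommGroup (E n)] [∀ n, InnerProductSpace ℂ (E n)]
    (U : ∀ n, UnitaryRep G (E n)) {ξ : ∀ n, E n} {η : κ → ∀ n, E n} {C : ℝ}
    (hξ : ∀ n, ‖ξ n‖ ≤ C) (hη : ∀ i n, ‖η i n‖ ≤ C) :
    ∃ (H : Type u) (_ : NormedAddCommGroup H) (_ : InnerProductSpace ℂ H) (_ : CompleteSpace H)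
      (U' : UnitaryRep G H) (ξ' : H) (η' : κ → H),
      (∀ v, (∀ x, inner ℂ v (U' x ξ') = 0) → v = 0) ∧
      ∀ i x, Tendsto (fun n => inner ℂ (η i n) (U n x (ξ n))) 𝒰
        (𝓝 (inner ℂ (η' i) (U' x ξ'))) := by
  let T n : (G →₀ ℂ) →ₗ[ℂ] E n := (U n).orbitMap (ξ n)
  have hT : ∀ n v, ‖T n v‖ ≤ (∑ x ∈ v.support, ‖v x‖) * C := fun n v =>
    ((U n).norm_orbitMap_le _ v).trans (by gcongr; exact hξ n)
  choose I hI using fun v w => exists_tendsto_inner_ultrafilter 𝒰 (hT · v) (hT · w)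
  let core := limitInnerCore T I hI
  let _ : SeminormedAddCommGroup (G →₀ ℂ) :=
    @InnerProductSpace.Core.toSeminormedAddCommGroup ℂ _ _ _ _ core
  let _ : InnerProductSpace ℂ (G →₀ ℂ) := InnerProductSpace.ofCore core
  have hnorm : ∀ v, Tendsto (fun n => ‖T n v‖) 𝒰 (𝓝 ‖v‖) := fun v => by
    simp only [@norm_eq_sqrt_re_inner ℂ]
    exact ((Complex.continuous_re.tendsto _).comp (hI v v)).sqrt
  let translation : UnitaryRep G (G →₀ ℂ) :=
    { toFun := fun x =>
        { toLinearMap := finsuppTranslation G x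
          norm_map' := fun v => tendsto_nhds_unique (hnorm _) <| by
            simpa only [T, orbitMap_finsuppTranslation, LinearIsometry.norm_map] using hnorm v }
      map_zero_eq_one' := LinearIsometry.ext fun v =>
        LinearMap.congr_fun (finsuppTranslation G).map_zero_eq_one v
      map_add_eq_mul' := fun x y => LinearIsometry.ext fun v =>
        LinearMap.congr_fun ((finsuppTranslation G).map_add_eq_mul x y) v }
  choose f hf using fun i v => exists_tendsto_inner_ultrafilter 𝒰 (hη i) (hT · v)
  let functional i : (G →₀ ℂ) →L[ℂ] ℂ := LinearMap.mkContinuous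
    { toFun := f i
      map_add' := fun v w => tendsto_nhds_unique (hf i _) <| by
        simpa only [map_add, inner_add_right] using (hf i v).add (hf i w)
      map_smul' := fun c v => tendsto_nhds_unique (hf i _) <| by
        simpa only [map_smul, inner_smul_right, RingHom.id_apply, smul_eq_mul] using
          (hf i v).const_mul c } C fun v =>
      le_of_tendsto_of_tendsto' (hf i v).norm ((hnorm v).const_mul C) fun n =>
        (norm_inner_le_norm _ _).trans (by gcongr; exact hη i n)
  obtain ⟨H, i₁, i₂, i₃, U', ξ', η', hcyc, hη'⟩ :=
    translation.exists_cyclic_completion (span_finsuppTranslation_apply_single G) functional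
  refine ⟨H, i₁, i₂, i₃, U', ξ', η', hcyc, fun i x => ?_⟩
  rw [← hη']
  change Tendsto _ _ (𝓝 (f i (finsuppTranslation G x (Finsupp.single 0 1))))
  simpa [T, orbitMap, finsuppTranslation_apply_single] using hf i (Finsupp.single x 1)

section Diagonal

variable {X : Type*}

theorem norm_circle_mul (c : Circle) (z : ℂ) : ‖(c : ℂ) * z‖ = ‖z‖ := by
  rw [norm_mul, Circle.norm_coe, one_mul]

/-- The unitary representation on `ℓ²(X)` in which `x` multiplies the `γ`-th coordinate by
`χ γ x`. -/
def diagonal (χ : X → AddChar G Circle) : UnitaryRep G (lp (fun _ : X => ℂ) 2) where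
  toFun x :=
    { toFun := fun v => ⟨fun γ => χ γ x * v γ, (memℓp_gen_iff (by norm_num)).2 <|
        ((memℓp_gen_iff (by norm_num)).1 (lp.memℓp v)).congr fun γ => by rw [norm_circle_mul]⟩
      map_add' := fun v w => lp.ext <| funext fun γ => mul_add ..
      map_smul' := fun c v => lp.ext <| funext fun γ => mul_left_comm ..
      norm_map' := fun v => by
        simp only [lp.norm_eq_tsum_rpow (p := 2) (by norm_num)]
        exact congrArg (· ^ _) (tsum_congr fun γ => congrArg (· ^ _) (norm_circle_mul _ _)) }
  map_zero_eq_one' := LinearIsometry.ext fun v => lp.ext <| funext fun γ => by simp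
  map_add_eq_mul' x y := LinearIsometry.ext fun v => lp.ext <| funext fun γ => by
    simp [AddChar.map_add_eq_mul, mul_assoc]

theorem diagonal_apply_apply (χ : X → AddChar G Circle) (x : G) (v : lp (fun _ : X => ℂ) 2)
    (γ : X) : diagonal χ x v γ = χ γ x * v γ :=
  rfl

theorem exists_lp_two_of_sq_norm_le {f : X → ℂ} {ω : X → ℝ} (hω : Summable ω)
    (hf : ∀ γ, ‖f γ‖ ^ 2 ≤ ω γ) :
    ∃ v : lp (fun _ : X => ℂ) 2, ⇑v = f ∧ ‖v‖ ≤ √(∑' γ, ω γ) := by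
  have hsum : Summable fun γ => ‖f γ‖ ^ 2 := hω.of_nonneg_of_le (fun _ => sq_nonneg _) hf
  refine ⟨⟨f, (memℓp_gen_iff (by norm_num)).2 (by simpa using hsum)⟩, rfl, ?_⟩
  rw [lp.norm_eq_tsum_rpow (by norm_num), Real.sqrt_eq_rpow]
  simp only [ENNReal.toReal_ofNat, Real.rpow_two]
  exact Real.rpow_le_rpow (tsum_nonneg fun γ => sq_nonneg ‖f γ‖) (hsum.tsum_le_tsum hf hω)
    (by norm_num)

theorem exists_inner_diagonal_eq_tsum {κ : Type*} (χ : X → AddChar G Circle) {B : κ → X → ℂ}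
    {ω : X → ℝ} (hω : Summable ω) (hω₀ : ∀ γ, 0 ≤ ω γ) (hB : ∀ i γ, ‖B i γ‖ ≤ ω γ) :
    ∃ (ξ : lp (fun _ : X => ℂ) 2) (η : κ → lp (fun _ : X => ℂ) 2),
      ‖ξ‖ ≤ √(∑' γ, ω γ) ∧ (∀ i, ‖η i‖ ≤ √(∑' γ, ω γ)) ∧
      ∀ i x, inner ℂ (η i) (diagonal χ x ξ) = ∑' γ, B i γ * χ γ x := by
  obtain ⟨ξ, hξ, hξ_norm⟩ := exists_lp_two_of_sq_norm_le (f := fun γ => (√(ω γ) : ℂ)) hω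
    fun γ => by simp [Real.sq_sqrt (hω₀ γ)]
  choose η hη hη_norm using fun i => exists_lp_two_of_sq_norm_le
    (f := fun γ => star (B i γ / √(ω γ))) hω fun γ => by
      rw [norm_star, norm_div, div_pow, Complex.norm_real, Real.norm_eq_abs, sq_abs,
        Real.sq_sqrt (hω₀ γ)]
      refine div_le_of_le_mul₀ (hω₀ γ) (hω₀ γ) ?_
      rw [← sq]
      exact pow_le_pow_left₀ (norm_nonneg _) (hB i γ) 2
  refine ⟨ξ, η, hξ_norm, hη_norm, fun i x => ?_⟩
  rw [lp.inner_eq_tsum]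
  refine tsum_congr fun γ => ?_
  rw [diagonal_apply_apply, hξ, hη, RCLike.inner_apply]
  have hcancel : B i γ / √(ω γ) * √(ω γ) = B i γ := by
    refine div_mul_cancel_of_imp fun h => norm_le_zero_iff.1 ?_
    rw [Complex.ofReal_eq_zero, Real.sqrt_eq_zero (hω₀ γ)] at h
    exact h ▸ hB i γ
  simp only [starRingEnd_apply, star_star]
  linear_combination (χ γ x : ℂ) * hcancel

end Diagonal

theorem exists_cyclic_inner_eq_of_tendsto_tsum {X κ : Type*} (χ : X → AddChar G Circle)
    {a : κ → G → ℂ} {B : ℕ → κ → X → ℂ} {ω : ℕ → X → ℝ} {C : ℝ} (hω₀ : ∀ n γ, 0 ≤ ω n γ)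
    (hω : ∀ n, Summable (ω n)) (hC : ∀ n, ∑' γ, ω n γ ≤ C) (hB : ∀ n i γ, ‖B n i γ‖ ≤ ω n γ)
    (ha : ∀ i x, Tendsto (fun n => ∑' γ, B n i γ * χ γ x) atTop (𝓝 (a i x))) :
    ∃ (H : Type u) (_ : NormedAddCommGroup H) (_ : InnerProductSpace ℂ H) (_ : CompleteSpace H)
      (U : UnitaryRep G H) (ξ : H) (η : κ → H),
      (∀ v, (∀ x, inner ℂ v (U x ξ) = 0) → v = 0) ∧ ∀ i x, a i x = inner ℂ (η i) (U x ξ) := by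
  choose ξ η hξ hη hinner using fun n =>
    exists_inner_diagonal_eq_tsum χ (hω n) (hω₀ n) (hB n)
  have hsqrt : ∀ n, √(∑' γ, ω n γ) ≤ √C := fun n => Real.sqrt_le_sqrt (hC n)
  obtain ⟨H, i₁, i₂, i₃, U, ξ', η', hcyc, hlim⟩ :=
    exists_cyclic_tendsto_inner (hyperfilter ℕ) (fun _ => diagonal χ)
      (fun n => (hξ n).trans (hsqrt n)) (η := fun i n => η n i)
      (fun i n => (hη n i).trans (hsqrt n))
  refine ⟨H, i₁, i₂, i₃, U, ξ', η', hcyc, fun i x => ?_⟩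
  refine tendsto_nhds_unique ((ha i x).mono_left hyperfilter_le_atTop) ?_
  simpa only [hinner] using hlim i x

end UnitaryRep

end HilbertLimits

section FourierPairs

variable {d : ℕ}

/-- The measure with masses `a` integrates every Schwartz function absolutely. -/
def SchwartzSummable (a : Rd d → ℂ) : Prop :=
  ∀ φ : SchwartzMap (Rd d) ℂ, Summable fun x => ‖a x‖ * ‖φ x‖

namespace SchwartzSummable

variable {a a' : Rd d → ℂ}

theorem summable_mul (ha : SchwartzSummable a) (φ : SchwartzMap (Rd d) ℂ) :
    Summable fun x => a x * φ x :=
  .of_norm <| by simpa only [norm_mul] using ha φ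

theorem of_norm_le (ha : SchwartzSummable a) {C : ℝ} (h : ∀ x, ‖a' x‖ ≤ C * ‖a x‖) :
    SchwartzSummable a' := fun φ =>
  ((ha φ).mul_left C).of_nonneg_of_le (fun _ => by positivity) fun x => by
    rw [← mul_assoc]
    exact mul_le_mul_of_nonneg_right (h x) (norm_nonneg _)

theorem add (ha : SchwartzSummable a) (ha' : SchwartzSummable a') :
    SchwartzSummable fun x => a x + a' x := fun φ =>
  ((ha φ).add (ha' φ)).of_nonneg_of_le (fun _ => by positivity) fun x => by
    rw [← add_mul]
    exact mul_le_mul_of_nonneg_right (norm_add_le _ _) (norm_nonneg _)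

theorem comp_sub_right (ha : SchwartzSummable a) (w : Rd d) :
    SchwartzSummable fun x => a (x - w) := fun φ => by
  refine ((Equiv.subRight w).summable_iff.2 (ha (compSubConstCLM ℂ (-w) φ))).congr fun x => ?_
  simp

end SchwartzSummable

/-- The measure `Σ a(x) δ_x` has the measure `Σ b(γ) δ_γ` as its Fourier transform. -/
structure IsFourierPair (a b : Rd d → ℂ) : Prop where
  left : SchwartzSummable a
  right : SchwartzSummable b
  tsum_fourier : ∀ φ : SchwartzMap (Rd d) ℂ, ∑' x, a x * 𝓕 φ x = ∑' γ, b γ * φ γ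

theorem RepMeasure.isFourierPair {a b : Rd d → ℂ} {f : TemperedDist d} (ha : RepMeasure a f)
    (hb : RepMeasure b (fourierTD f)) : IsFourierPair a b :=
  ⟨ha.2.1, hb.2.1, fun φ => (ha.2.2 (𝓕 φ)).symm.trans (hb.2.2 φ)⟩

namespace IsFourierPair

variable {a b a' b' : Rd d → ℂ}

theorem add (h : IsFourierPair a b) (h' : IsFourierPair a' b') :
    IsFourierPair (fun x => a x + a' x) (fun γ => b γ + b' γ) where
  left := h.left.add h'.left
  right := h.right.add h'.right
  tsum_fourier φ := by
    simp only [add_mul]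
    rw [(h.left.summable_mul _).tsum_add (h'.left.summable_mul _),
      (h.right.summable_mul _).tsum_add (h'.right.summable_mul _), h.tsum_fourier, h'.tsum_fourier]

theorem const_mul (h : IsFourierPair a b) (c : ℂ) :
    IsFourierPair (fun x => c * a x) (fun γ => c * b γ) where
  left := h.left.of_norm_le fun x => (norm_mul _ _).le
  right := h.right.of_norm_le fun γ => (norm_mul _ _).le
  tsum_fourier φ := by simp only [mul_assoc, tsum_mul_left, h.tsum_fourier]

theorem modulate (h : IsFourierPair a b) (w : Rd d) :
    IsFourierPair (fun x => e2pi x w * a x) (fun γ => b (γ - w)) where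
  left := h.left.of_norm_le (C := 1) fun x => by simp
  right := h.right.comp_sub_right w
  tsum_fourier φ := by
    have := h.tsum_fourier (compSubConstCLM ℂ (-w) φ)
    simp only [fourier_compSubConst, e2pi_neg_right, inv_inv] at this
    rw [← (Equiv.subRight w).tsum_eq fun γ => b γ * _] at this
    simpa [mul_comm, mul_left_comm, mul_assoc] using this

end IsFourierPair

/-- The Schwartz function `y ↦ ψ ((y - x) / δ)`. -/
def rescale (ψ : SchwartzMap (Rd d) ℂ) {δ : ℝ} (hδ : 0 < δ) (x : Rd d) :
    SchwartzMap (Rd d) ℂ :=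
  compSubConstCLM ℂ x <| compCLMOfContinuousLinearEquiv ℂ
    (ContinuousLinearEquiv.smulLeft (Units.mk0 δ⁻¹ (inv_ne_zero hδ.ne'))) ψ

theorem rescale_apply (ψ : SchwartzMap (Rd d) ℂ) {δ : ℝ} (hδ : 0 < δ) (x y : Rd d) :
    rescale ψ hδ x y = ψ (δ⁻¹ • (y - x)) :=
  rfl

/-- The factor `δ^d (𝓕⁻ ψ)(δ γ)` by which smoothing with `ψ` at scale `δ` multiplies the mass at
the frequency `γ`. -/
def smoothingWeight (ψ : SchwartzMap (Rd d) ℂ) (δ : ℝ) (γ : Rd d) : ℂ :=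
  (δ ^ d : ℝ) * 𝓕⁻ ψ (δ • γ)

theorem fourierInv_rescale (ψ : SchwartzMap (Rd d) ℂ) {δ : ℝ} (hδ : 0 < δ) (x γ : Rd d) :
    𝓕⁻ (rescale ψ hδ x) γ = smoothingWeight ψ δ γ * e2pi x γ := by
  have hsubst : ∀ v : Rd d, e2pi γ (v + x) * rescale ψ hδ x (v + x)
      = e2pi x γ * (e2pi (δ • γ) (δ⁻¹ • v) * ψ (δ⁻¹ • v)) := fun v => by
    rw [rescale_apply, add_sub_cancel_right, e2pi_smul_comm, smul_inv_smul₀ hδ.ne', e2pi_add_right,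
      e2pi_comm γ x]
    ring
  have hscale := Measure.integral_comp_smul (volume : Measure (Rd d))
    (fun v => e2pi (δ • γ) v * ψ v) δ⁻¹
  rw [finrank_euclideanSpace_fin, inv_pow, inv_inv, abs_of_pos (pow_pos hδ d)] at hscale
  rw [SchwartzMap.fourierInv_coe, fourierInv_eq_integral_e2pi, ← integral_add_right_eq_self _ x]
  simp only [hsubst]
  rw [integral_const_mul, hscale, smoothingWeight, SchwartzMap.fourierInv_coe,
    fourierInv_eq_integral_e2pi, Complex.real_smul]
  ring

namespace IsFourierPair

variable {a b : Rd d → ℂ}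

theorem tsum_mul_rescale (h : IsFourierPair a b) (ψ : SchwartzMap (Rd d) ℂ) {δ : ℝ} (hδ : 0 < δ)
    (x : Rd d) :
    ∑' y, a y * rescale ψ hδ x y = ∑' γ, b γ * smoothingWeight ψ δ γ * e2pi x γ := by
  have := h.tsum_fourier (𝓕⁻ (rescale ψ hδ x))
  rw [FourierTransform.fourier_fourierInv_eq] at this
  simpa only [fourierInv_rescale, mul_assoc] using this

theorem summable_norm_mul_smoothingWeight (h : IsFourierPair a b) (ψ : SchwartzMap (Rd d) ℂ) {δ : ℝ}
    (hδ : 0 < δ) : Summable fun γ => ‖b γ * smoothingWeight ψ δ γ‖ :=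
  (h.right (𝓕⁻ (rescale ψ hδ 0))).congr fun γ => by simp [fourierInv_rescale]

end IsFourierPair

theorem exists_schwartz_bump (d : ℕ) :
    ∃ ψ : SchwartzMap (Rd d) ℂ, ψ 0 = 1 ∧ ∀ y, 1 ≤ ‖y‖ → ψ y = 0 := by
  let β : ContDiffBump (0 : Rd d) := ⟨1 / 2, 1, by norm_num, by norm_num⟩
  have hsupp : HasCompactSupport fun y => (β y : ℂ) :=
    β.hasCompactSupport.comp_left (g := fun r : ℝ => (r : ℂ)) Complex.ofReal_zero
  refine ⟨hsupp.toSchwartzMap (Complex.ofRealCLM.contDiff.comp β.contDiff), ?_, fun y hy => ?_⟩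
  · exact (congrArg _ (β.one_of_mem_closedBall (by simp [β.rIn_pos.le]))).trans Complex.ofReal_one
  · exact (congrArg _ (β.zero_of_le_dist (by simpa using hy))).trans Complex.ofReal_zero

theorem exists_forall_dist_lt_imp_eq {X : Type*} [MetricSpace X] {A : Set X} {x : X} {r : ℝ}
    (hr : 0 < r) (hfin : (A ∩ ball x r).Finite) :
    ∃ δ > 0, ∀ y ∈ A, dist y x < δ → y = x := by
  have hmem : ((A ∩ ball x r) \ {x})ᶜ ∈ 𝓝 x :=
    (hfin.subset sdiff_subset).isClosed.isOpen_compl.mem_nhds (by simp)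
  obtain ⟨δ, hδ, hball⟩ := Metric.mem_nhds_iff.1 hmem
  refine ⟨min δ r, lt_min hδ hr, fun y hy hdist => by_contra fun hne => ?_⟩
  exact hball (hdist.trans_le (min_le_left _ _)) ⟨⟨hy, hdist.trans_le (min_le_right _ _)⟩, hne⟩

theorem UniformlyDiscrete.exists_forall_dist_lt_imp_eq {A : Set (Rd d)} (hA : UniformlyDiscrete A)
    (x : Rd d) : ∃ δ > 0, ∀ y ∈ A, dist y x < δ → y = x := by
  obtain ⟨η, hη, hsep⟩ := hA
  refine _root_.exists_forall_dist_lt_imp_eq (half_pos hη) (Set.Subsingleton.finite ?_)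
  rintro y ⟨hy, hyx⟩ z ⟨hz, hzx⟩
  by_contra hne
  have := hsep y hy z hz hne
  have := dist_triangle_right y z x
  rw [mem_ball] at hyx hzx
  linarith

section Isolation

variable {a : Rd d → ℂ} {ψ : SchwartzMap (Rd d) ℂ} (hψ₀ : ψ 0 = 1)
  (hψ : ∀ y, 1 ≤ ‖y‖ → ψ y = 0)

include hψ

theorem rescale_eq_zero_of_le_dist {δ : ℝ} (hδ : 0 < δ) {x y : Rd d} (hxy : δ ≤ dist y x) :
    rescale ψ hδ x y = 0 := by
  rw [rescale_apply]
  refine hψ _ ?_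
  rwa [norm_smul, norm_inv, Real.norm_of_nonneg hδ.le, ← dist_eq_norm, inv_mul_eq_div,
    one_le_div hδ]

include hψ₀

theorem tsum_mul_rescale_eq_of_isolated {δ : ℝ} (hδ : 0 < δ) {x : Rd d}
    (hx : ∀ y, a y ≠ 0 → dist y x < δ → y = x) : ∑' y, a y * rescale ψ hδ x y = a x := by
  rw [tsum_eq_single x fun y hy => ?_]
  · simp [rescale_apply, hψ₀]
  · by_cases ha : a y = 0
    · rw [ha, zero_mul]
    · rw [rescale_eq_zero_of_le_dist hψ hδ (not_lt.1 fun h => hy (hx y ha h)), mul_zero]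

end Isolation

theorem IsFourierPair.right_unique {a b b' : Rd d → ℂ} (h : IsFourierPair a b)
    (h' : IsFourierPair a b') (hb : LocFinite {γ | b γ ≠ 0}) (hb' : LocFinite {γ | b' γ ≠ 0}) :
    b = b' := by
  obtain ⟨ψ, hψ₀, hψ⟩ := exists_schwartz_bump d
  funext γ
  obtain ⟨δ, hδ, hγ⟩ := exists_forall_dist_lt_imp_eq one_pos (hb γ 1)
  obtain ⟨δ', hδ', hγ'⟩ := exists_forall_dist_lt_imp_eq one_pos (hb' γ 1)
  have hmin : 0 < min δ δ' := lt_min hδ hδ'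
  calc b γ = ∑' y, b y * rescale ψ hmin γ y := .symm <| tsum_mul_rescale_eq_of_isolated hψ₀ hψ _
        fun y hy hyd => hγ y hy (hyd.trans_le (min_le_left _ _))
    _ = ∑' y, b' y * rescale ψ hmin γ y := (h.tsum_fourier _).symm.trans (h'.tsum_fourier _)
    _ = b' γ := tsum_mul_rescale_eq_of_isolated hψ₀ hψ _
        fun y hy hyd => hγ' y hy (hyd.trans_le (min_le_right _ _))

end FourierPairs

section MassBounds

variable {d : ℕ}

theorem exists_norm_le_div_two_pow {E F : Type*} [NormedAddCommGroup E] [NormedSpace ℝ E]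
    [NormedAddCommGroup F] [NormedSpace ℝ F] (f : SchwartzMap E F) (n : ℕ) :
    ∃ D, 0 ≤ D ∧ ∀ y, ∃ k : ℕ, ‖y‖ < 2 ^ k ∧ ‖f y‖ ≤ D / (2 ^ k) ^ n := by
  obtain ⟨C₀, hC₀, h₀⟩ := f.decay 0 0
  obtain ⟨C, -, h⟩ := f.decay n 0
  simp only [norm_iteratedFDeriv_zero, pow_zero, one_mul] at h₀ h
  refine ⟨max C₀ (2 ^ n * C), by positivity, fun y => ?_⟩
  have hex : ∃ k : ℕ, ‖y‖ < 2 ^ k := pow_unbounded_of_one_lt _ one_lt_two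
  classical
  refine ⟨Nat.find hex, Nat.find_spec hex, ?_⟩
  rcases hk : Nat.find hex with _ | k
  · simpa using .inl (h₀ y)
  · have hle : 2 ^ k ≤ ‖y‖ := not_lt.1 (Nat.find_min hex (by omega))
    rw [le_div_iff₀ (by positivity)]
    calc ‖f y‖ * (2 ^ (k + 1)) ^ n = 2 ^ n * ((2 ^ k) ^ n * ‖f y‖) := by ring
      _ ≤ 2 ^ n * (‖y‖ ^ n * ‖f y‖) := by gcongr
      _ ≤ max C₀ (2 ^ n * C) := le_max_of_le_right (by gcongr; exact h y)

theorem tsum_enorm_mul_smoothingWeight_le (b : Rd d → ℂ) {ψ : SchwartzMap (Rd d) ℂ} {D : ℝ}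
    (hψ : ∀ y, ∃ k : ℕ, ‖y‖ < 2 ^ k ∧ ‖𝓕⁻ ψ y‖ ≤ D / (2 ^ k) ^ (d + 1)) {δ : ℝ}
    (hδ : 0 < δ) :
    ∑' γ, ‖b γ * smoothingWeight ψ δ γ‖ₑ ≤
      ∑' k : ℕ, ENNReal.ofReal (δ ^ d * (D / (2 ^ k) ^ (d + 1))) * ballVar b (2 ^ k / δ) := by
  simp only [ballVar, ← ENNReal.tsum_mul_left]
  rw [ENNReal.tsum_comm]
  refine ENNReal.tsum_le_tsum fun γ => ?_
  obtain ⟨k, hγ, hk⟩ := hψ (δ • γ)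
  refine le_trans ?_ (ENNReal.le_tsum k)
  rw [norm_smul, Real.norm_of_nonneg hδ.le, mul_comm, ← lt_div_iff₀ hδ] at hγ
  rw [if_pos hγ, enorm_mul, mul_comm]
  refine mul_le_mul_left ?_ _
  rw [← ofReal_norm, smoothingWeight, norm_mul, Complex.norm_real,
    Real.norm_of_nonneg (pow_pos hδ d).le]
  gcongr

theorem exists_tsum_norm_mul_smoothingWeight_le {b : Rd d → ℂ}
    (hb : ∃ C r₀ : ℝ, ∀ r ≥ r₀, ballVar b r ≤ ENNReal.ofReal (C * r ^ d))
    (ψ : SchwartzMap (Rd d) ℂ) :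
    ∃ K : ℝ, ∀ᶠ δ in 𝓝[>] (0 : ℝ), ∑' γ, ‖b γ * smoothingWeight ψ δ γ‖ ≤ K := by
  obtain ⟨C, r₀, hb⟩ := hb
  obtain ⟨D, hD, hψ⟩ := exists_norm_le_div_two_pow (𝓕⁻ ψ) (d + 1)
  refine ⟨D * max C 0 * 2, ?_⟩
  filter_upwards [self_mem_nhdsWithin, (tendsto_inv_nhdsGT_zero (𝕜 := ℝ)).eventually_ge_atTop r₀]
    with δ (hδ : 0 < δ) hδr
  have hterm : ∀ k : ℕ,
      ENNReal.ofReal (δ ^ d * (D / (2 ^ k) ^ (d + 1))) * ballVar b (2 ^ k / δ) ≤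
        ENNReal.ofReal (D * max C 0 * (1 / 2) ^ k) := fun k => by
    have hr : r₀ ≤ 2 ^ k / δ := hδr.trans <| by
      rw [div_eq_mul_inv]
      exact le_mul_of_one_le_left (by positivity) (one_le_pow₀ one_le_two)
    calc _ ≤ ENNReal.ofReal (δ ^ d * (D / (2 ^ k) ^ (d + 1))) *
          ENNReal.ofReal (max C 0 * (2 ^ k / δ) ^ d) := by
          gcongr
          refine (hb _ hr).trans (ENNReal.ofReal_le_ofReal ?_)
          gcongr
          exact le_max_left _ _
      _ = ENNReal.ofReal (D * max C 0 * (1 / 2) ^ k) := by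
          rw [← ENNReal.ofReal_mul (by positivity)]
          congr 1
          rw [div_pow _ δ, one_div, inv_pow]
          field_simp
          ring
  have htotal : ∑' γ, ‖b γ * smoothingWeight ψ δ γ‖ₑ ≤ ENNReal.ofReal (D * max C 0 * 2) := by
    refine ((tsum_enorm_mul_smoothingWeight_le b hψ hδ).trans
      (ENNReal.tsum_le_tsum hterm)).trans_eq ?_
    rw [← ENNReal.ofReal_tsum_of_nonneg (fun k => by positivity)
      (summable_geometric_two.mul_left _), tsum_mul_left, tsum_geometric_two]
  simpa only [ENNReal.tsum_toReal_eq (fun _ => enorm_ne_top), toReal_enorm] using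
    ENNReal.toReal_le_of_le_ofReal (by positivity) htotal

theorem exists_unitaryRep_of_isFourierPair {ι : Type*} [Finite ι] {a b : ι → Rd d → ℂ}
    (hpair : ∀ s, IsFourierPair (a s) (b s))
    (hb : ∀ s, ∃ C r₀ : ℝ, ∀ r ≥ r₀, ballVar (b s) r ≤ ENNReal.ofReal (C * r ^ d))
    (ha : ∀ s, UniformlyDiscrete {x | a s x ≠ 0}) :
    ∃ (H : Type) (_ : NormedAddCommGroup H) (_ : InnerProductSpace ℂ H) (_ : CompleteSpace H)
      (U : UnitaryRep (Rd d) H) (ξ : H) (η : ι → H),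
      (∀ v, (∀ x, inner ℂ v (U x ξ) = 0) → v = 0) ∧ ∀ s x, a s x = inner ℂ (η s) (U x ξ) := by
  cases nonempty_fintype ι
  obtain ⟨ψ, hψ₀, hψ⟩ := exists_schwartz_bump d
  choose K hK using fun s => exists_tsum_norm_mul_smoothingWeight_le (hb s) ψ
  obtain ⟨δ, hδ, hδK⟩ := exists_seq_forall_of_frequently
    (eventually_mem_nhdsWithin.and (eventually_all.2 hK)).frequently
  have hsum : ∀ n s, Summable fun γ => ‖b s γ * smoothingWeight ψ (δ n) γ‖ := fun n s =>
    (hpair s).summable_norm_mul_smoothingWeight ψ (hδK n).1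
  refine UnitaryRep.exists_cyclic_inner_eq_of_tendsto_tsum e2piChar (C := ∑ s, K s)
    (B := fun n s γ => b s γ * smoothingWeight ψ (δ n) γ)
    (ω := fun n γ => ∑ s, ‖b s γ * smoothingWeight ψ (δ n) γ‖)
    (fun n γ => Finset.sum_nonneg fun _ _ => norm_nonneg _)
    (fun n => summable_sum fun s _ => hsum n s) (fun n => ?_)
    (fun n s γ => Finset.single_le_sum (f := fun s => ‖b s γ * smoothingWeight ψ (δ n) γ‖)
      (fun _ _ => norm_nonneg _) (Finset.mem_univ s)) fun s x => ?_
  · rw [Summable.tsum_finsetSum fun s _ => hsum n s]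
    exact Finset.sum_le_sum fun s _ => (hδK n).2 s
  · obtain ⟨r, hr, hx⟩ := (ha s).exists_forall_dist_lt_imp_eq x
    refine tendsto_nhds_of_eventually_eq ?_
    filter_upwards [(tendsto_nhds_of_tendsto_nhdsWithin hδ).eventually_lt_const hr] with n hn
    simp only [coe_e2piChar]
    rw [← (hpair s).tsum_mul_rescale ψ (hδK n).1 x]
    exact tsum_mul_rescale_eq_of_isolated hψ₀ hψ _ fun y hy hyx => hx y hy (hyx.trans hn)

end MassBounds

section Lattices

theorem exists_basis_le_span {E : Type*} [NormedAddCommGroup E] [NormedSpace ℝ E]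
    [FiniteDimensional ℝ E] (L : Submodule ℤ E) [DiscreteTopology L] :
    ∃ b : Module.Basis (Fin (Module.finrank ℝ E)) ℝ E, L ≤ Submodule.span ℤ (range b) := by
  set b₀ : Module.Free.ChooseBasisIndex ℤ L → E := (↑) ∘ Module.Free.chooseBasis ℤ L with hb₀
  have hspan : Submodule.span ℤ (range b₀) = L := by
    rw [hb₀, range_comp, ← L.coe_subtype, ← Submodule.map_span, Module.Basis.span_eq,
      Submodule.map_subtype_top]
  have hli : LinearIndependent ℝ b₀ := by
    have : DiscreteTopology (Submodule.span ℤ (range b₀)) := by rwa [hspan]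
    rw [linearIndependent_iff_card_eq_finrank_span,
      Real.finrank_eq_int_finrank_of_discrete this, Set.finrank, hspan,
      Module.finrank_eq_card_chooseBasisIndex]
  set e := Module.Basis.extend hli.linearIndepOn_id
  have := Module.Finite.finite_basis e
  cases nonempty_fintype (hli.linearIndepOn_id.extend (subset_univ (range b₀)))
  refine ⟨e.reindex (Fintype.equivFinOfCardEq (Module.finrank_eq_card_basis e).symm), ?_⟩
  rw [Module.Basis.range_reindex, Module.Basis.range_extend]
  exact hspan.ge.trans (Submodule.span_mono (hli.linearIndepOn_id.subset_extend _))

variable {d : ℕ}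

theorem UniformlyDiscrete.discreteTopology_of_subset_sub {Λ : Set (Rd d)}
    (hΛ : UniformlyDiscrete Λ) {P : AddSubgroup (Rd d)} (hP : (P : Set (Rd d)) ⊆ Λ - Λ) :
    DiscreteTopology P := by
  obtain ⟨r, hr, hsep⟩ := hΛ
  refine DiscreteTopology.of_forall_le_dist hr fun x y hxy => ?_
  obtain ⟨u, hu, v, hv, huv⟩ := hP (x - y).2
  simp only [AddSubgroup.coe_sub] at huv
  rw [Subtype.dist_eq, dist_eq_norm, ← huv, ← dist_eq_norm]
  refine hsep u hu v hv fun h => hxy ?_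
  rwa [h, sub_self, eq_comm, sub_eq_zero, SetLike.coe_eq_coe] at huv

/-- The `k`-th vector of the basis dual to `β`, i.e. the Riesz representative of the coordinate
functional `β.coord k`. -/
def dualVec (β : Module.Basis (Fin d) ℝ (Rd d)) (k : Fin d) : Rd d :=
  (InnerProductSpace.toDual ℝ (Rd d)).symm (LinearMap.toContinuousLinearMap (β.coord k))

theorem inner_dualVec (β : Module.Basis (Fin d) ℝ (Rd d)) (k : Fin d) (x : Rd d) :
    ⟪x, dualVec β k⟫ = β.repr x k := by
  rw [real_inner_comm, dualVec, InnerProductSpace.toDual_symm_apply]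
  simp

theorem mem_span_int_iff_e2pi_dualVec {β : Module.Basis (Fin d) ℝ (Rd d)} {x : Rd d} :
    x ∈ Submodule.span ℤ (range β) ↔ ∀ k, e2pi x (dualVec β k) = 1 := by
  simp [β.mem_span_iff_repr_mem ℤ, e2pi_eq_one_iff, inner_dualVec, eq_comm]

theorem isFullRankLattice_span (β : Module.Basis (Fin d) ℝ (Rd d)) :
    IsFullRankLattice (Submodule.span ℤ (range β) : Set (Rd d)) := by
  let e := (EuclideanSpace.basisFun (Fin d) ℝ).toBasis.equiv β (Equiv.refl _)
  have hrepr (y : Rd d) (k) : β.repr (e y) k = y k := by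
    simp [e, Module.Basis.equiv]
  refine ⟨e.toLinearMap, e.bijective, Set.ext fun x => ?_⟩
  rw [SetLike.mem_coe, β.mem_span_iff_repr_mem ℤ]
  constructor
  · refine fun hx => ⟨e.symm x, fun k => ?_, e.apply_symm_apply x⟩
    obtain ⟨n, hn⟩ := hx k
    exact ⟨n, by rw [← hrepr, e.apply_symm_apply, ← hn, algebraMap_int_eq, eq_intCast]⟩
  · rintro ⟨y, hy, rfl⟩ k
    obtain ⟨n, hn⟩ := hy k
    exact ⟨n, by rw [LinearEquiv.coe_coe, hrepr, hn, algebraMap_int_eq, eq_intCast]⟩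

theorem exists_basis_dualVec_eq_nsmul (β : Module.Basis (Fin d) ℝ (Rd d)) {N : ℕ} (hN : N ≠ 0) :
    ∃ β' : Module.Basis (Fin d) ℝ (Rd d), ∀ k, dualVec β' k = N • dualVec β k := by
  refine ⟨β.map (LinearEquiv.smulOfNeZero ℝ (Rd d) (N : ℝ) (by positivity)).symm, fun k => ?_⟩
  refine ext_inner_left ℝ fun x => ?_
  rw [← Nat.cast_smul_eq_nsmul ℝ, inner_smul_right, inner_dualVec, inner_dualVec]
  simp

/-- The restriction to the subgroup `L` of the character `x ↦ e2pi x γ`. -/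
def latticeChar (L : Submodule ℤ (Rd d)) (γ : Rd d) : AddChar L Circle :=
  (e2piChar γ).compAddMonoidHom L.subtype.toAddMonoidHom

variable {L : Submodule ℤ (Rd d)} {m : Rd d}

theorem coe_latticeChar (l : L) (γ : Rd d) : (latticeChar L γ l : ℂ) = e2pi l γ :=
  coe_e2piChar γ l

theorem latticeChar_eq_one_iff : latticeChar L m = 1 ↔ ∀ l ∈ L, e2pi l m = 1 := by
  simp [DFunLike.ext_iff, ← Circle.coe_inj, coe_latticeChar]

theorem latticeChar_pow (N : ℕ) : latticeChar L m ^ N = latticeChar L (N • m) := by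
  ext l
  simp [AddChar.pow_apply, coe_latticeChar, e2pi_nsmul_right]

theorem addChar_eq_of_eq_on_basis {ι X : Type*} [AddCommGroup X] (b : Module.Basis ι ℤ X)
    {χ ψ : AddChar X Circle} (h : ∀ i, χ (b i) = ψ (b i)) : χ = ψ := by
  have : χ.toAddMonoidHom.toIntLinearMap = ψ.toAddMonoidHom.toIntLinearMap := b.ext h
  exact DFunLike.ext _ _ fun x => congrArg (fun f => Additive.toMul (f x)) this

theorem exists_norm_le_latticeChar_eq {β : Module.Basis (Fin d) ℝ (Rd d)}
    (χ : AddChar (Submodule.span ℤ (range β)) Circle) :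
    ∃ γ, ‖γ‖ ≤ ∑ j, ‖dualVec β j‖ ∧ latticeChar _ γ = χ := by
  refine ⟨∑ j, ((χ (β.restrictScalars ℤ j) : ℂ).arg / (2 * Real.pi)) • dualVec β j,
    norm_sum_le_of_le _ fun j _ => ?_,
    addChar_eq_of_eq_on_basis (β.restrictScalars ℤ) fun i => Circle.ext ?_⟩
  · rw [norm_smul, Real.norm_eq_abs, abs_div, abs_of_pos Real.two_pi_pos]
    refine mul_le_of_le_one_left (norm_nonneg _) ((div_le_one Real.two_pi_pos).2 ?_)
    exact (Complex.abs_arg_le_pi _).trans (by linarith [Real.pi_pos])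
  have harg := Complex.norm_mul_exp_arg_mul_I (χ (β.restrictScalars ℤ i) : ℂ)
  rw [Circle.norm_coe, Complex.ofReal_one, one_mul] at harg
  rw [coe_latticeChar, e2pi, inner_sum, Module.Basis.restrictScalars_apply, ← harg]
  simp only [inner_smul_right, inner_dualVec, Module.Basis.repr_self, Finsupp.single_apply,
    mul_ite, mul_one, mul_zero, Finset.sum_ite_eq, Finset.mem_univ, if_true]
  congr 1
  push_cast
  field_simp

variable (d) in
/-- A translate of a full-rank lattice, presented by one of its points and a lattice basis. -/
structure LatticeCoset where
  base : Rd d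
  basis : Module.Basis (Fin d) ℝ (Rd d)

namespace LatticeCoset

/-- The lattice of which a `LatticeCoset` is a translate. -/
abbrev lattice (p : LatticeCoset d) : Submodule ℤ (Rd d) :=
  Submodule.span ℤ (range p.basis)

instance : Membership (Rd d) (LatticeCoset d) :=
  ⟨fun p x => x - p.base ∈ p.lattice⟩

theorem mem_iff_e2pi_dualVec {p : LatticeCoset d} {x : Rd d} :
    x ∈ p ↔ ∀ k, e2pi (x - p.base) (dualVec p.basis k) = 1 :=
  mem_span_int_iff_e2pi_dualVec

/-- The factor `x ↦ 1 - e^{2πi⟨x - p.base, m⟩}` vanishes on `p`, and on `q` it is either a nonzero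
constant or involves a character of infinite order: these are the factors by which functions on
`q` can be divided. -/
def Separates (m : Rd d) (p q : LatticeCoset d) : Prop :=
  latticeChar p.lattice m = 1 ∧ (¬ IsOfFinOrder (latticeChar q.lattice m) ∨
    latticeChar q.lattice m = 1 ∧ e2pi (q.base - p.base) m ≠ 1)

theorem exists_superset_of_forall_not_separates {p q : LatticeCoset d}
    (h : ∀ m, ¬ Separates m p q) : ∃ r : LatticeCoset d, (∀ x ∈ p, x ∈ r) ∧ ∀ x ∈ q, x ∈ r := by
  have hdual (k) : latticeChar p.lattice (dualVec p.basis k) = 1 :=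
    latticeChar_eq_one_iff.2 fun l hl => mem_span_int_iff_e2pi_dualVec.1 hl k
  have htors (k) : IsOfFinOrder (latticeChar q.lattice (dualVec p.basis k)) := by
    by_contra hk
    exact h _ ⟨hdual k, .inl hk⟩
  set M := ∏ k, orderOf (latticeChar q.lattice (dualVec p.basis k))
  have hM : M ≠ 0 := Finset.prod_ne_zero_iff.2 fun k _ => (htors k).orderOf_pos.ne'
  have hqM (k) : latticeChar q.lattice (M • dualVec p.basis k) = 1 := by
    rw [← latticeChar_pow, ← orderOf_dvd_iff_pow_eq_one]
    exact Finset.dvd_prod_of_mem _ (Finset.mem_univ k)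
  have hbase (k) : e2pi (q.base - p.base) (M • dualVec p.basis k) = 1 := by
    by_contra hk
    exact h _ ⟨by rw [← latticeChar_pow, hdual, one_pow], .inr ⟨hqM k, hk⟩⟩
  obtain ⟨β, hβ⟩ := exists_basis_dualVec_eq_nsmul p.basis hM
  refine ⟨⟨p.base, β⟩, fun x hx => ?_, fun x hx => ?_⟩ <;>
    refine mem_iff_e2pi_dualVec.2 fun k => ?_ <;> simp only [hβ]
  · rw [e2pi_nsmul_right, mem_iff_e2pi_dualVec.1 hx, one_pow]
  · rw [← sub_add_sub_cancel x q.base, e2pi_add_left, hbase,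
      latticeChar_eq_one_iff.1 (hqM k) _ hx, one_mul]

theorem exists_separated_cover {Λ : Set (Rd d)} (s : Finset (LatticeCoset d))
    (hs : ∀ x ∈ Λ, ∃ p ∈ s, x ∈ p) :
    ∃ s : Finset (LatticeCoset d), (∀ x ∈ Λ, ∃ p ∈ s, x ∈ p) ∧
      ∀ p ∈ s, ∀ q ∈ s, p ≠ q → ∃ m, Separates m p q := by
  classical
  induction hn : s.card using Nat.strong_induction_on generalizing s with | _ n ih
  subst hn
  by_cases hsep : ∀ p ∈ s, ∀ q ∈ s, p ≠ q → ∃ m, Separates m p q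
  · exact ⟨s, hs, hsep⟩
  push Not at hsep
  obtain ⟨p, hp, q, hq, hpq, hsep⟩ := hsep
  obtain ⟨r, hpr, hqr⟩ := exists_superset_of_forall_not_separates hsep
  have hcard : (insert r ((s.erase p).erase q)).card < s.card := by
    have hq' : q ∈ s.erase p := Finset.mem_erase.2 ⟨hpq.symm, hq⟩
    have := Finset.card_insert_le r ((s.erase p).erase q)
    have := Finset.card_erase_lt_of_mem hq'
    have := Finset.card_erase_lt_of_mem hp
    omega
  refine ih _ hcard _ (fun x hx => ?_) rfl
  obtain ⟨p', hp', hxp'⟩ := hs x hx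
  by_cases h : p' = p ∨ p' = q
  · refine ⟨r, Finset.mem_insert_self _ _, ?_⟩
    rcases h with rfl | rfl
    exacts [hpr x hxp', hqr x hxp']
  · rw [not_or] at h
    exact ⟨p', by simp [h, hp'], hxp'⟩

theorem exists_superset_of_mem_cosetsOfSubgroupsIn {Λ : Set (Rd d)} (hΛ : UniformlyDiscrete Λ)
    {A : Set (Rd d)} (hA : A ∈ cosetsOfSubgroupsIn (Λ - Λ)) :
    ∃ p : LatticeCoset d, ∀ x ∈ A, x ∈ p := by
  obtain ⟨g, P, hP, rfl⟩ := hA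
  have : DiscreteTopology (AddSubgroup.toIntSubmodule P) := hΛ.discreteTopology_of_subset_sub hP
  obtain ⟨b, hb⟩ := exists_basis_le_span (AddSubgroup.toIntSubmodule P)
  refine ⟨⟨g, b.reindex (finCongr finrank_euclideanSpace_fin)⟩, ?_⟩
  rintro _ ⟨y, hy, rfl⟩
  change g + y - g ∈ Submodule.span ℤ (range (b.reindex _))
  rw [add_sub_cancel_left, Module.Basis.range_reindex]
  exact hb hy

theorem exists_separated_cover_of_cosets {Λ : Set (Rd d)} (hΛ : UniformlyDiscrete Λ)
    {t : Set (Set (Rd d))} (ht : t ⊆ cosetsOfSubgroupsIn (Λ - Λ)) (hfin : t.Finite)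
    (hcov : Λ ⊆ ⋃₀ t) :
    ∃ s : Finset (LatticeCoset d), (∀ x ∈ Λ, ∃ p ∈ s, x ∈ p) ∧
      ∀ p ∈ s, ∀ q ∈ s, p ≠ q → ∃ m, Separates m p q := by
  have : Nonempty (LatticeCoset d) := ⟨⟨0, (EuclideanSpace.basisFun (Fin d) ℝ).toBasis⟩⟩
  choose! p hp using fun A (hA : A ∈ t) => exists_superset_of_mem_cosetsOfSubgroupsIn hΛ (ht hA)
  classical
  refine exists_separated_cover (hfin.toFinset.image p) fun x hx => ?_
  obtain ⟨A, hA, hxA⟩ := hcov hx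
  exact ⟨p A, Finset.mem_image_of_mem _ (hfin.mem_toFinset.2 hA), hp A hA x hxA⟩

end LatticeCoset

end Lattices

section MeanValues

variable {X : Type*}

/-- `c` is the mean value of `f` along the finite sets `F n`, the limit being taken along a fixed
nonprincipal ultrafilter so that every bounded function has a mean value. -/
def HasMean (F : ℕ → Finset X) (f : X → ℂ) (c : ℂ) : Prop :=
  Tendsto (fun n => (∑ x ∈ F n, f x) / ((F n).card : ℂ)) (hyperfilter ℕ : Filter ℕ) (𝓝 c)

variable {F : ℕ → Finset X} {f g : X → ℂ} {c c' : ℂ} {C : ℝ}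

namespace HasMean

theorem unique (h : HasMean F f c) (h' : HasMean F f c') : c = c' :=
  tendsto_nhds_unique h h'

theorem const_mul (z : ℂ) (h : HasMean F f c) : HasMean F (fun x => z * f x) (z * c) := by
  simpa only [HasMean, ← Finset.mul_sum, mul_div_assoc] using Tendsto.const_mul z h

theorem sub (hf : HasMean F f c) (hg : HasMean F g c') :
    HasMean F (fun x => f x - g x) (c - c') := by
  simpa only [HasMean, Finset.sum_sub_distrib, sub_div] using Tendsto.sub hf hg

theorem sum {κ : Type*} (s : Finset κ) {f : κ → X → ℂ} {c : κ → ℂ}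
    (h : ∀ k ∈ s, HasMean F (f k) (c k)) :
    HasMean F (fun x => ∑ k ∈ s, f k x) (∑ k ∈ s, c k) := by
  simpa only [HasMean, Finset.sum_comm (s := F _), Finset.sum_div] using tendsto_finsetSum s h

theorem re_le (hf : HasMean F f c) (hC : 0 ≤ C) (h : ∀ x, (f x).re ≤ C) : c.re ≤ C := by
  refine le_of_tendsto ((Complex.continuous_re.tendsto c).comp hf) (.of_forall fun n => ?_)
  rw [Function.comp_apply, Complex.div_natCast_re, Complex.re_sum]
  refine div_le_of_le_mul₀ (Nat.cast_nonneg _) hC ?_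
  simpa [mul_comm] using Finset.sum_le_card_nsmul (F n) (fun x => (f x).re) C fun x _ => h x

end HasMean

theorem exists_hasMean (F : ℕ → Finset X) (hf : ∀ x, ‖f x‖ ≤ C) : ∃ c, HasMean F f c := by
  obtain ⟨c, -, hc⟩ := exists_norm_le_tendsto_ultrafilter (hyperfilter ℕ) (C := max C 0)
    (f := fun n => (∑ x ∈ F n, f x) / ((F n).card : ℂ)) fun n => by
      rw [norm_div, Complex.norm_natCast]
      refine div_le_of_le_mul₀ (Nat.cast_nonneg _) (le_max_right _ _) ?_
      simpa [mul_comm] using norm_sum_le_of_le (F n) fun x _ => (hf x).trans (le_max_left C 0)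
  exact ⟨c, hc⟩

variable [AddCommGroup X]

/-- The trigonometric polynomial `x ↦ ∑ χ, t χ * χ x` on the group `X` with coefficients `t`. The
algebra of trigonometric polynomials is `trigPoly.range`. -/
def trigPoly : MonoidAlgebra ℂ (AddChar X Circle) →ₐ[ℂ] (X → ℂ) :=
  MonoidAlgebra.lift ℂ (X → ℂ) (AddChar X Circle)
    { toFun := fun χ x => (χ x : ℂ)
      map_one' := rfl
      map_mul' := fun _ _ => rfl }

theorem trigPoly_apply (t : MonoidAlgebra ℂ (AddChar X Circle)) (x : X) :
    trigPoly t x = ∑ χ ∈ t.coeff.support, t.coeff χ * (χ x : ℂ) := by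
  rw [trigPoly, MonoidAlgebra.lift_apply, Finsupp.sum, Finset.sum_apply]
  rfl

theorem trigPoly_single (χ : AddChar X Circle) (z : ℂ) (x : X) :
    trigPoly (MonoidAlgebra.single χ z) x = z * (χ x : ℂ) := by
  rw [trigPoly, MonoidAlgebra.lift_single]
  rfl

theorem addChar_mem_range_trigPoly (χ : AddChar X Circle) :
    (fun x => (χ x : ℂ)) ∈ (trigPoly (X := X)).range :=
  ⟨MonoidAlgebra.single χ 1, funext fun x => (trigPoly_single χ 1 x).trans (one_mul _)⟩

/-- The averages over the finite sets `F n` of every nontrivial character tend to `0`. -/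
structure IsAveraging (F : ℕ → Finset X) : Prop where
  nonempty : ∀ n, (F n).Nonempty
  tendsto_addChar : ∀ χ : AddChar X Circle, χ ≠ 1 →
    Tendsto (fun n => (∑ x ∈ F n, (χ x : ℂ)) / ((F n).card : ℂ)) atTop (𝓝 0)

/-- `u` is the family of Fourier–Bohr coefficients of `f` with respect to the means along `F`. -/
def HasFourierCoeffs (F : ℕ → Finset X) (f : X → ℂ) (u : AddChar X Circle → ℂ) : Prop :=
  ∀ χ, HasMean F (fun x => f x * (χ⁻¹ x : Circle)) (u χ)

theorem exists_hasFourierCoeffs (F : ℕ → Finset X) (hf : ∀ x, ‖f x‖ ≤ C) :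
    ∃ u, HasFourierCoeffs F f u := by
  choose u hu using fun χ : AddChar X Circle => exists_hasMean F
    (f := fun x => f x * (χ⁻¹ x : Circle)) (C := C) fun x => by
      simpa only [norm_mul, Circle.norm_coe, mul_one] using hf x
  exact ⟨u, hu⟩

variable {u u' : AddChar X Circle → ℂ} {χ : AddChar X Circle}

namespace HasFourierCoeffs

theorem unique (h : HasFourierCoeffs F f u) (h' : HasFourierCoeffs F f u') : u = u' :=
  funext fun χ => (h χ).unique (h' χ)

theorem sub (hf : HasFourierCoeffs F f u) (hg : HasFourierCoeffs F g u') :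
    HasFourierCoeffs F (f - g) (u - u') := fun χ => by
  simpa only [Pi.sub_apply, sub_mul] using (hf χ).sub (hg χ)

theorem mul_one_sub (hf : HasFourierCoeffs F f u) (z : ℂ) (ψ : AddChar X Circle) :
    HasFourierCoeffs F (fun x => (1 - z * ψ x) * f x) fun χ => u χ - z * u (χ / ψ) := fun χ => by
  convert (hf χ).sub ((hf (χ / ψ)).const_mul z) using 2 with x
  rw [inv_div, AddChar.div_apply, Circle.coe_mul, AddChar.inv_apply]
  ring

end HasFourierCoeffs

namespace IsAveraging

open scoped Classical in
theorem hasMean_addChar (hF : IsAveraging F) (χ : AddChar X Circle) :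
    HasMean F (fun x => (χ x : ℂ)) (if χ = 1 then 1 else 0) := by
  split_ifs with hχ
  · have hcard (n) : ((F n).card : ℂ) ≠ 0 := by simp [(hF.nonempty n).ne_empty]
    simp [HasMean, hχ, hcard]
  · exact (hF.tendsto_addChar χ hχ).mono_left hyperfilter_le_atTop

theorem hasFourierCoeffs_trigPoly (hF : IsAveraging F) (t : MonoidAlgebra ℂ (AddChar X Circle)) :
    HasFourierCoeffs F (trigPoly t) t.coeff := fun χ => by
  classical
  convert HasMean.sum t.coeff.support fun ψ _ =>
    (hF.hasMean_addChar (ψ * χ⁻¹)).const_mul (t.coeff ψ) using 1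
  · ext x
    rw [trigPoly_apply, Finset.sum_mul]
    simp [AddChar.mul_apply, mul_assoc]
  · simp [mul_inv_eq_one]

theorem eq_zero_of_mem_range_trigPoly (hF : IsAveraging F) (hf : f ∈ (trigPoly (X := X)).range)
    (h : HasFourierCoeffs F f 0) : f = 0 := by
  obtain ⟨t, rfl⟩ := hf
  have ht := (hF.hasFourierCoeffs_trigPoly t).unique h
  ext x
  exact (trigPoly_apply t x).trans (Finset.sum_eq_zero fun χ _ => by rw [ht]; simp)

theorem sum_norm_sq_le (hF : IsAveraging F) (hu : HasFourierCoeffs F f u) (hf : ∀ x, ‖f x‖ ≤ C)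
    (s : Finset (AddChar X Circle)) : ∑ χ ∈ s, ‖u χ‖ ^ 2 ≤ C ^ 2 := by
  classical
  set t : MonoidAlgebra ℂ (AddChar X Circle) :=
    ∑ χ ∈ s, MonoidAlgebra.single χ (u χ) with ht
  have hcoeff {χ} (hχ : χ ∈ s) : t.coeff χ = u χ := by
    simp [ht, Finsupp.finsetSum_apply, Finsupp.single_apply, hχ]
  have heval (x) : trigPoly t x = ∑ χ ∈ s, u χ * (χ x : ℂ) := by
    simp only [ht, map_sum, Finset.sum_apply, trigPoly_single]
  have hmean {g : X → ℂ} {v} (hv : HasFourierCoeffs F g v) (hvu : ∀ χ ∈ s, v χ = u χ) :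
      HasMean F (fun x => g x * starRingEnd ℂ (trigPoly t x)) (∑ χ ∈ s, ‖u χ‖ ^ 2 : ℝ) := by
    convert HasMean.sum s fun χ _ => (hv χ).const_mul (starRingEnd ℂ (u χ)) using 1
    · ext x
      simp only [heval, map_sum, Finset.mul_sum, map_mul, AddChar.inv_apply',
        Circle.coe_inv_eq_conj]
      exact Finset.sum_congr rfl fun χ _ => by ring
    · push_cast
      exact Finset.sum_congr rfl fun χ hχ => by rw [hvu χ hχ, Complex.conj_mul']
  have key := (((hmean hu fun _ _ => rfl).const_mul 2).sub
    (hmean (hF.hasFourierCoeffs_trigPoly t) fun _ hχ => hcoeff hχ)).re_le (sq_nonneg C) fun x => ?_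
  · rw [← Complex.ofReal_ofNat, ← Complex.ofReal_mul, ← Complex.ofReal_sub,
      Complex.ofReal_re] at key
    linarith
  · have hfx : ‖f x‖ ^ 2 ≤ C ^ 2 := pow_le_pow_left₀ (norm_nonneg _) (hf x) 2
    have hsq := sq_nonneg ‖f x - trigPoly t x‖
    rw [← Complex.normSq_eq_norm_sq, Complex.normSq_sub, Complex.normSq_eq_norm_sq] at hsq
    rw [Complex.mul_conj, Complex.sub_re, Complex.ofReal_re]
    simp only [Complex.mul_re, Complex.re_ofNat, Complex.im_ofNat, zero_mul, sub_zero] at hsq ⊢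
    linarith

theorem finite_setOf_le_norm (hF : IsAveraging F) (hu : HasFourierCoeffs F f u)
    (hf : ∀ x, ‖f x‖ ≤ C) {ε : ℝ} (hε : 0 < ε) : {χ | ε ≤ ‖u χ‖}.Finite := by
  by_contra hinf
  obtain ⟨N, hN⟩ := exists_nat_gt (C ^ 2 / ε ^ 2)
  obtain ⟨s, hs, rfl⟩ := Set.Infinite.exists_subset_card_eq hinf N
  have hsum : s.card • ε ^ 2 ≤ ∑ χ ∈ s, ‖u χ‖ ^ 2 :=
    Finset.card_nsmul_le_sum _ _ _ fun χ hχ => pow_le_pow_left₀ hε.le (hs hχ) 2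
  rw [div_lt_iff₀ (by positivity), ← nsmul_eq_mul] at hN
  exact (hN.trans_le hsum).not_ge (hF.sum_norm_sq_le hu hf s)

end IsAveraging

theorem exists_norm_eq_of_norm_ne_zero {G : Type*} [CommGroup G] {u : G → ℂ}
    (hu : ∀ ε > 0, {χ | ε ≤ ‖u χ‖}.Finite) (z : Circle) {ψ : G} (hψ : ¬ IsOfFinOrder ψ) {χ : G}
    (hχ : u χ ≠ 0) : ∃ s, u s - z * u (s / ψ) ≠ 0 ∧ ‖u (s / ψ)‖ = ‖u χ‖ := by
  by_contra! hne
  have hconst (j : ℕ) : ‖u (χ * ψ ^ j)‖ = ‖u χ‖ := by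
    induction j with
    | zero => rw [pow_zero, mul_one]
    | succ j ih =>
      have hdiv : χ * ψ ^ (j + 1) / ψ = χ * ψ ^ j := by
        rw [pow_succ, ← mul_assoc, mul_div_cancel_right]
      have hzero := not_imp_not.1 (hne (χ * ψ ^ (j + 1))) (by rw [hdiv, ih])
      rw [sub_eq_zero.1 hzero, norm_mul, Circle.norm_coe, one_mul, hdiv, ih]
  have hinj : Function.Injective fun j : ℕ => χ * ψ ^ j :=
    (mul_right_injective χ).comp (injective_pow_iff_not_isOfFinOrder.2 hψ)
  exact Set.infinite_of_injective_forall_mem hinj (fun j => (hconst j).ge)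
    (hu _ (norm_pos_iff.2 hχ))

theorem finite_support_of_finite_support_sub {G : Type*} [CommGroup G] {u : G → ℂ}
    (hu : ∀ ε > 0, {χ | ε ≤ ‖u χ‖}.Finite) {z : Circle} {ψ : G}
    (hψ : ¬ IsOfFinOrder ψ ∨ ψ = 1 ∧ z ≠ 1)
    (hfin : (Function.support fun χ => u χ - z * u (χ / ψ)).Finite) :
    (Function.support u).Finite := by
  rcases hψ with hψ | ⟨rfl, hz⟩
  · refine (hfin.biUnion (t := fun s => {χ | u χ ≠ 0 ∧ ‖u (s / ψ)‖ = ‖u χ‖}) fun s _ => ?_).subset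
      fun χ hχ => ?_
    · rcases eq_or_ne (u (s / ψ)) 0 with h0 | h0
      · refine Set.finite_empty.subset fun χ hχ => hχ.1 ?_
        rw [← norm_eq_zero, ← hχ.2, h0, norm_zero]
      · exact (hu _ (norm_pos_iff.2 h0)).subset fun χ hχ => hχ.2.le
    · obtain ⟨s, hs, hsχ⟩ := exists_norm_eq_of_norm_ne_zero hu z hψ hχ
      exact Set.mem_biUnion hs ⟨hχ, hsχ⟩
  · refine hfin.subset fun χ hχ => ?_
    rw [Function.mem_support, div_one, ← one_sub_mul]
    exact mul_ne_zero (sub_ne_zero.2 fun h => hz (Circle.ext h.symm)) hχ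

namespace IsAveraging

variable {κ : Type*} {s : Finset κ} {z : κ → Circle} {ψ : κ → AddChar X Circle}

theorem prod_mul_mem_range_trigPoly (z : κ → Circle) (ψ : κ → AddChar X Circle)
    (hf : f ∈ (trigPoly (X := X)).range) :
    (fun x => (∏ k ∈ s, (1 - (z k : ℂ) * ψ k x)) * f x) ∈ (trigPoly (X := X)).range := by
  have hprod : ∏ k ∈ s, (1 - (z k : ℂ) • fun x => (ψ k x : ℂ)) ∈ (trigPoly (X := X)).range :=
    prod_mem fun k _ => sub_mem (one_mem _) (Subalgebra.smul_mem _ (addChar_mem_range_trigPoly _) _)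
  convert mul_mem hprod hf using 1
  ext x
  simp [Finset.prod_apply]

theorem finite_support_of_prod_mul (hF : IsAveraging F)
    (hψ : ∀ k ∈ s, ¬ IsOfFinOrder (ψ k) ∨ ψ k = 1 ∧ z k ≠ 1)
    (hf : ∀ x, ‖f x‖ ≤ C) (hu : HasFourierCoeffs F f u)
    (hprod : (fun x => (∏ k ∈ s, (1 - (z k : ℂ) * ψ k x)) * f x) ∈ (trigPoly (X := X)).range) :
    (Function.support u).Finite := by
  classical
  induction s using Finset.induction_on generalizing f u C with
  | empty =>
    obtain ⟨t, ht⟩ := hprod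
    simp only [Finset.prod_empty, one_mul] at ht
    rw [hu.unique (ht ▸ hF.hasFourierCoeffs_trigPoly t)]
    exact t.coeff.hasFiniteSupport
  | insert k s hk ih =>
    refine finite_support_of_finite_support_sub
      (fun ε hε => hF.finite_setOf_le_norm hu hf hε) (hψ k (Finset.mem_insert_self k s)) ?_
    refine ih (C := 2 * C) (fun j hj => hψ j (Finset.mem_insert_of_mem hj)) (fun x => ?_)
      (hu.mul_one_sub (z k) (ψ k)) ?_
    · rw [norm_mul]
      refine mul_le_mul ?_ (hf x) (norm_nonneg _) zero_le_two
      refine (norm_sub_le _ _).trans ?_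
      rw [norm_mul, Circle.norm_coe, Circle.norm_coe, norm_one]
      norm_num
    · convert hprod using 2 with x
      rw [Finset.prod_insert hk]
      ring

theorem hasFourierCoeffs_prod_mul (z : κ → Circle) (ψ : κ → AddChar X Circle)
    (h : HasFourierCoeffs F f 0) :
    HasFourierCoeffs F (fun x => (∏ k ∈ s, (1 - (z k : ℂ) * ψ k x)) * f x) 0 := by
  classical
  induction s using Finset.induction_on with
  | empty => simpa
  | insert k s hk ih =>
    convert ih.mul_one_sub (z k) (ψ k) using 1
    · simp only [Finset.prod_insert hk, mul_assoc]
    · ext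
      simp

theorem exists_trigPoly_of_prod_mul (hF : IsAveraging F)
    (hψ : ∀ k ∈ s, ¬ IsOfFinOrder (ψ k) ∨ ψ k = 1 ∧ z k ≠ 1)
    (hf : ∀ x, ‖f x‖ ≤ C)
    (hprod : (fun x => (∏ k ∈ s, (1 - (z k : ℂ) * ψ k x)) * f x) ∈ (trigPoly (X := X)).range) :
    ∃ p ∈ (trigPoly (X := X)).range, ∀ x, ∏ k ∈ s, (1 - (z k : ℂ) * ψ k x) ≠ 0 → f x = p x := by
  obtain ⟨u, hu⟩ := exists_hasFourierCoeffs F hf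
  have hfin := hF.finite_support_of_prod_mul hψ hf hu hprod
  set t : MonoidAlgebra ℂ (AddChar X Circle) := .ofCoeff (Finsupp.ofSupportFinite u hfin)
  have hzero : HasFourierCoeffs F (f - trigPoly t) 0 :=
    sub_self u ▸ hu.sub (hF.hasFourierCoeffs_trigPoly t)
  refine ⟨trigPoly t, ⟨t, rfl⟩, fun x hx => ?_⟩
  have hdiff := hF.eq_zero_of_mem_range_trigPoly (sub_mem hprod
    (prod_mul_mem_range_trigPoly (s := s) z ψ ⟨t, rfl⟩)) (by
      convert hasFourierCoeffs_prod_mul (s := s) z ψ hzero using 1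
      ext x
      simp [mul_sub])
  have := congrFun hdiff x
  simp only [Pi.sub_apply, Pi.zero_apply, ← mul_sub] at this
  exact sub_eq_zero.1 ((mul_eq_zero.1 this).resolve_left hx)

end IsAveraging

end MeanValues

section Averaging

variable {X ι : Type*} [AddCommGroup X] [Fintype ι] [DecidableEq ι]

open Classical in
theorem sum_range_circle_div_tendsto (w : Circle) :
    Tendsto (fun n : ℕ => (∑ j ∈ Finset.range (n + 1), (w : ℂ) ^ j) / ((n + 1 : ℕ) : ℂ)) atTop
      (𝓝 (if w = 1 then 1 else 0)) := by
  split_ifs with hw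
  · refine tendsto_const_nhds.congr fun n => ?_
    simp [hw, div_self (Nat.cast_add_one_ne_zero (R := ℂ) n)]
  · have hw' : (w : ℂ) - 1 ≠ 0 := sub_ne_zero.2 fun h => hw (Circle.ext h)
    refine squeeze_zero_norm (a := fun n : ℕ => 2 / ‖(w : ℂ) - 1‖ * (1 / ((n : ℝ) + 1)))
      (fun n => ?_) (by
        simpa using tendsto_one_div_add_atTop_nhds_zero_nat.const_mul (2 / ‖(w : ℂ) - 1‖))
    rw [geom_sum_eq (sub_ne_zero.1 hw'), norm_div, norm_div, Complex.norm_natCast, mul_one_div,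
      Nat.cast_add_one]
    gcongr
    refine (norm_sub_le _ _).trans_eq ?_
    rw [norm_pow, Circle.norm_coe, one_pow, norm_one, one_add_one_eq_two]

/-- The elements of a free abelian group whose coordinates in the basis `b` lie in
`{0, …, n}`. -/
def basisBox (b : Module.Basis ι ℤ X) (n : ℕ) : Finset X :=
  (Fintype.piFinset fun _ : ι => Finset.range (n + 1)).map
    ⟨fun k => b.equivFun.symm fun i => (k i : ℤ), fun _ _ h => funext fun i =>
      Nat.cast_injective (congrFun (b.equivFun.symm.injective h) i)⟩

theorem sum_addChar_basisBox (b : Module.Basis ι ℤ X) (n : ℕ) (χ : AddChar X Circle) :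
    ∑ x ∈ basisBox b n, (χ x : ℂ) = ∏ i, ∑ j ∈ Finset.range (n + 1), (χ (b i) : ℂ) ^ j := by
  rw [Finset.prod_univ_sum, basisBox, Finset.sum_map]
  refine Finset.sum_congr rfl fun k _ => ?_
  have hχ : χ (∑ i, k i • b i) = ∏ i, χ (b i) ^ k i :=
    (map_prod χ.toMonoidHom (fun i => Multiplicative.ofAdd (k i • b i)) _).trans
      (Finset.prod_congr rfl fun i _ => χ.map_nsmul_eq_pow _ _)
  calc (χ (b.equivFun.symm fun i => (k i : ℤ)) : ℂ) = Circle.coeHom (χ (∑ i, k i • b i)) := by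
        simp only [Module.Basis.equivFun_symm_apply, natCast_zsmul]; rfl
    _ = ∏ i, (χ (b i) : ℂ) ^ k i := by simp only [hχ, map_prod, map_pow]; rfl

theorem isAveraging_basisBox (b : Module.Basis ι ℤ X) : IsAveraging (basisBox b) where
  nonempty n := by simp [basisBox]
  tendsto_addChar χ hχ := by
    obtain ⟨i, hi⟩ : ∃ i, χ (b i) ≠ 1 := by
      contrapose! hχ
      exact addChar_eq_of_eq_on_basis b hχ
    have hcard (n : ℕ) : ((basisBox b n).card : ℂ) = ∏ _i : ι, ((n + 1 : ℕ) : ℂ) := by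
      simp [basisBox]
    have hlim := tendsto_finsetProd Finset.univ fun i _ => sum_range_circle_div_tendsto (χ (b i))
    rw [Finset.prod_eq_zero (Finset.mem_univ i) (if_neg hi)] at hlim
    simpa only [sum_addChar_basisBox, hcard, Finset.prod_div_distrib] using hlim

end Averaging

section LatticeCosets

theorem mem_range_trigPoly_of_hasSum {X Γ : Type*} [AddCommGroup X] {κ : Γ → AddChar X Circle}
    {g : Γ → ℂ} {f : X → ℂ} (hκ : (κ '' {γ | g γ ≠ 0}).Finite)
    (hf : ∀ x, HasSum (fun γ => g γ * κ γ x) (f x)) : f ∈ (trigPoly (X := X)).range := by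
  set V : Submodule ℂ (X → ℂ) :=
    Submodule.span ℂ ((fun χ x => (χ x : ℂ)) '' (κ '' {γ | g γ ≠ 0}))
  have : FiniteDimensional ℂ V := .span_of_finite ℂ (hκ.image _)
  have hle : V ≤ Subalgebra.toSubmodule (trigPoly (X := X)).range :=
    Submodule.span_le.2 (image_subset_iff.2 fun χ _ => addChar_mem_range_trigPoly χ)
  refine hle (V.closed_of_finiteDimensional.mem_of_tendsto
    (Pi.hasSum.2 hf : HasSum (fun γ x => g γ * (κ γ x : ℂ)) f)
    (.of_forall fun s => sum_mem fun γ _ => ?_))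
  by_cases hγ : g γ = 0
  · simp only [hγ, zero_mul]
    exact V.zero_mem
  · exact V.smul_mem (g γ) (Submodule.subset_span ⟨κ γ, ⟨γ, hγ, rfl⟩, rfl⟩)

variable {d : ℕ}

namespace LocFinite

variable {A B : Set (Rd d)}

theorem mono (hB : LocFinite B) (h : A ⊆ B) : LocFinite A :=
  fun x r => (hB x r).subset (inter_subset_inter_left _ h)

theorem union (hA : LocFinite A) (hB : LocFinite B) : LocFinite (A ∪ B) := fun x r => by
  rw [union_inter_distrib_right]
  exact (hA x r).union (hB x r)

theorem preimage_sub_right (hA : LocFinite A) (v : Rd d) : LocFinite {x | x - v ∈ A} := by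
  intro x r
  refine ((hA (x - v) r).preimage sub_left_injective.injOn (f := (· - v))).subset ?_
  rintro y ⟨hy, hyr⟩
  exact ⟨hy, by simpa using hyr⟩

end LocFinite

/-- The measure with masses `a` has as its Fourier transform a pure point measure with locally
finite support. -/
def HasLocFiniteSpectrum (a : Rd d → ℂ) : Prop :=
  ∃ b, IsFourierPair a b ∧ LocFinite {γ | b γ ≠ 0}

theorem HasLocFiniteSpectrum.one_sub_mul {a : Rd d → ℂ} (ha : HasLocFiniteSpectrum a) (z : ℂ)
    (m : Rd d) : HasLocFiniteSpectrum fun x => (1 - z * e2pi x m) * a x := by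
  obtain ⟨b, hab, hb⟩ := ha
  refine ⟨fun γ => b γ + -z * b (γ - m), ?_,
    (hb.union (hb.preimage_sub_right m)).mono fun γ hγ => ?_⟩
  · convert hab.add ((hab.modulate m).const_mul (-z)) using 2 with x
    ring
  · by_contra hno
    simp_all [not_or]

theorem HasLocFiniteSpectrum.prod_one_sub_mul {κ : Type*} {a : Rd d → ℂ}
    (ha : HasLocFiniteSpectrum a) (s : Finset κ) (z : κ → ℂ) (m : κ → Rd d) :
    HasLocFiniteSpectrum fun x => (∏ k ∈ s, (1 - z k * e2pi x (m k))) * a x := by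
  classical
  induction s using Finset.induction_on with
  | empty => simpa using ha
  | insert k s hk ih =>
    simpa only [Finset.prod_insert hk, mul_assoc] using ih.one_sub_mul (z k) (m k)

namespace LatticeCoset

variable {p : LatticeCoset d} {a b : Rd d → ℂ}

theorem exists_pos_forall_mem_dist_lt_imp_eq (p : LatticeCoset d) :
    ∃ δ > 0, ∀ x ∈ p, ∀ y ∈ p, dist y x < δ → y = x := by
  obtain ⟨δ, hδ, h⟩ := exists_forall_dist_lt_imp_eq (A := (p.lattice : Set (Rd d))) (x := 0)
    one_pos (by simpa [inter_comm] using ZSpan.setFinite_inter p.basis isBounded_ball)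
  refine ⟨δ, hδ, fun x hx y hy hxy => sub_eq_zero.1 (h (y - x) ?_ ?_)⟩
  · simpa using p.lattice.sub_mem hy hx
  · rwa [dist_zero_right, ← dist_eq_norm]

theorem spectrum_sub_eq (hab : IsFourierPair a b) (hb : LocFinite {γ | b γ ≠ 0})
    (ha : ∀ x, a x ≠ 0 → x ∈ p) {m : Rd d} (hm : latticeChar p.lattice m = 1) (γ : Rd d) :
    b (γ - m) = e2pi p.base m * b γ := by
  have hmod : (fun x => e2pi x m * a x) = fun x => e2pi p.base m * a x := by
    ext x
    by_cases hx : a x = 0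
    · simp [hx]
    · rw [← sub_add_cancel x p.base, e2pi_add_left,
        latticeChar_eq_one_iff.1 hm _ (ha x hx), one_mul]
  refine congrFun ((hab.modulate m).right_unique (hmod ▸ hab.const_mul _)
    (hb.preimage_sub_right m) (hb.mono fun γ hγ => right_ne_zero_of_mul hγ)) γ

theorem finite_image_latticeChar (hab : IsFourierPair a b) (hb : LocFinite {γ | b γ ≠ 0})
    (ha : ∀ x, a x ≠ 0 → x ∈ p) : (latticeChar p.lattice '' {γ | b γ ≠ 0}).Finite := by
  set r := ∑ j, ‖dualVec p.basis j‖
  refine ((hb 0 (r + 1)).image (latticeChar p.lattice)).subset ?_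
  rintro _ ⟨γ, hγ, rfl⟩
  obtain ⟨γ', hγ', hχ⟩ := exists_norm_le_latticeChar_eq (latticeChar p.lattice γ)
  have hm : latticeChar p.lattice (γ - γ') = 1 := by
    refine latticeChar_eq_one_iff.2 fun l hl => ?_
    have := congrArg ((↑) : Circle → ℂ) (DFunLike.congr_fun hχ ⟨l, hl⟩)
    simp only [coe_latticeChar] at this
    rw [sub_eq_add_neg, e2pi_add_right, ← this, ← e2pi_add_right, add_neg_cancel, e2pi_zero_right]
  refine ⟨γ', ⟨?_, by simpa using hγ'.trans_lt (lt_add_one r)⟩, hχ⟩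
  rw [mem_ofPred_eq, ← sub_sub_cancel γ γ', spectrum_sub_eq hab hb ha hm]
  exact mul_ne_zero (e2pi_ne_zero _ _) hγ

theorem mem_range_trigPoly_of_hasLocFiniteSpectrum (hspec : HasLocFiniteSpectrum a)
    (ha : ∀ x, a x ≠ 0 → x ∈ p) :
    (fun l : p.lattice => a (p.base + l)) ∈ (trigPoly (X := p.lattice)).range := by
  obtain ⟨b, hab, hb⟩ := hspec
  obtain ⟨ψ, hψ₀, hψ⟩ := exists_schwartz_bump d
  obtain ⟨δ, hδ, hiso⟩ := p.exists_pos_forall_mem_dist_lt_imp_eq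
  refine mem_range_trigPoly_of_hasSum (κ := latticeChar p.lattice)
    (g := fun γ => b γ * smoothingWeight ψ δ γ * e2pi p.base γ)
    ((finite_image_latticeChar hab hb ha).subset (image_mono fun γ hγ => ?_)) fun l => ?_
  · exact left_ne_zero_of_mul (left_ne_zero_of_mul hγ)
  · have hl : p.base + l ∈ p := by
      change p.base + l - p.base ∈ p.lattice
      rw [add_sub_cancel_left]
      exact l.2
    rw [← tsum_mul_rescale_eq_of_isolated hψ₀ hψ hδ fun y hy => hiso _ hl y (ha y hy),
      hab.tsum_mul_rescale]
    simp only [coe_latticeChar, mul_assoc, ← e2pi_add_left]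
    refine Summable.hasSum (.of_norm ?_)
    simpa [mul_assoc] using hab.summable_norm_mul_smoothingWeight ψ hδ

theorem exists_isTrigPoly_of_mem_range_trigPoly {f : p.lattice → ℂ}
    (hf : f ∈ (trigPoly (X := p.lattice)).range) :
    ∃ P : Rd d → ℂ, IsTrigPoly P ∧ ∀ l : p.lattice, P (p.base + l) = f l := by
  obtain ⟨t, rfl⟩ := hf
  choose w _ hw using fun χ : AddChar p.lattice Circle => exists_norm_le_latticeChar_eq χ
  set e := t.coeff.support.equivFin
  refine ⟨_, ⟨_, fun j => t.coeff (e.symm j) * e2pi (-p.base) (w (e.symm j)),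
    fun j => w (e.symm j), fun x => rfl⟩, fun l => ?_⟩
  rw [Equiv.sum_comp e.symm fun χ : t.coeff.support =>
    t.coeff χ * e2pi (-p.base) (w χ) * e2pi (p.base + (l : Rd d)) (w χ), AlgHom.toRingHom_eq_coe,
    RingHom.coe_coe, trigPoly_apply, ← Finset.sum_coe_sort t.coeff.support]
  refine Finset.sum_congr rfl fun χ _ => ?_
  rw [mul_assoc, ← e2pi_add_left, neg_add_cancel_left, ← coe_latticeChar, hw]

theorem exists_isTrigPoly_eq_of_separates {C : ℝ} (hspec : HasLocFiniteSpectrum a)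
    (hC : ∀ x, ‖a x‖ ≤ C) {s : Finset (LatticeCoset d)} (hcov : ∀ x, a x ≠ 0 → ∃ p ∈ s, x ∈ p)
    (q : LatticeCoset d) {m : LatticeCoset d → Rd d}
    (hm : ∀ p ∈ s, p ≠ q → Separates (m p) p q) :
    ∃ P : Rd d → ℂ, IsTrigPoly P ∧
      ∀ x ∈ q, (∀ p ∈ s, p ≠ q → e2pi (x - p.base) (m p) ≠ 1) → a x = P x := by
  classical
  have hprod := mem_range_trigPoly_of_hasLocFiniteSpectrum (p := q)
    (hspec.prod_one_sub_mul (s.erase q) (fun p => e2pi (-p.base) (m p)) m) fun x hx => by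
      obtain ⟨p, hp, hxp⟩ := hcov x (right_ne_zero_of_mul hx)
      by_contra hxq
      have hpq : p ≠ q := fun h => hxq (h ▸ hxp)
      refine Finset.prod_ne_zero_iff.1 (left_ne_zero_of_mul hx) p (Finset.mem_erase.2 ⟨hpq, hp⟩) ?_
      rw [← e2pi_add_left, neg_add_eq_sub, latticeChar_eq_one_iff.1 (hm p hp hpq).1 _ hxp, sub_self]
  have hfac (p : LatticeCoset d) (l : q.lattice) :
      1 - e2pi (-p.base) (m p) * e2pi (q.base + (l : Rd d)) (m p) =
        1 - (e2piChar (m p) (q.base - p.base) : ℂ) * latticeChar q.lattice (m p) l := by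
    rw [coe_e2piChar, coe_latticeChar, ← e2pi_add_left, ← e2pi_add_left, neg_add_eq_sub,
      add_sub_right_comm]
  simp only [hfac] at hprod
  have hbox := isAveraging_basisBox (q.basis.restrictScalars ℤ)
  obtain ⟨f, hf, hfa⟩ := hbox.exists_trigPoly_of_prod_mul
    (fun p hp => (hm p (Finset.mem_of_mem_erase hp) (Finset.ne_of_mem_erase hp)).2.imp_right
      (And.imp_right fun h => by rwa [Ne, ← Circle.coe_inj, coe_e2piChar]))
    (fun l : q.lattice => hC (q.base + l)) hprod
  obtain ⟨P, hP, hPf⟩ := exists_isTrigPoly_of_mem_range_trigPoly hf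
  refine ⟨P, hP, fun x hx hne => ?_⟩
  have hxl : q.base + ((⟨x - q.base, hx⟩ : q.lattice) : Rd d) = x := add_sub_cancel _ _
  have := hfa ⟨x - q.base, hx⟩ (Finset.prod_ne_zero_iff.2 fun p hp => ?_)
  · rwa [← hPf, hxl] at this
  · rw [← hfac, hxl, ← e2pi_add_left, neg_add_eq_sub]
    exact sub_ne_zero.2 (hne p (Finset.mem_of_mem_erase hp) (Finset.ne_of_mem_erase hp)).symm

end LatticeCoset

end LatticeCosets

section Hyperplanes

variable {E : Type*} [NormedAddCommGroup E] [NormedSpace ℝ E] [FiniteDimensional ℝ E]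

theorem finite_quotient_of_span_eq_top (L : Submodule ℤ E) [DiscreteTopology L] [IsZLattice ℝ L]
    (K : Submodule ℤ L) (hK : Submodule.span ℝ (L.subtype '' K) = ⊤) : Finite (L ⧸ K) := by
  have := ZLattice.module_free ℝ L
  have := ZLattice.module_finite ℝ L
  have : DiscreteTopology (K.map L.subtype) :=
    DiscreteTopology.of_subset ‹DiscreteTopology L› (Submodule.map_subtype_le L K)
  have : IsZLattice ℝ (K.map L.subtype) := ⟨hK⟩
  refine K.finiteQuotientOfFreeOfRankEq ?_
  rw [LinearEquiv.finrank_eq (K.equivMapOfInjective L.subtype L.injective_subtype),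
    ZLattice.rank ℝ, ZLattice.rank ℝ]

theorem isOfFinOrder_of_span_ker_eq_top (L : Submodule ℤ E) [DiscreteTopology L] [IsZLattice ℝ L]
    {χ : AddChar L Circle} (hχ : Submodule.span ℝ (L.subtype '' {l | χ l = 1}) = ⊤) :
    IsOfFinOrder χ := by
  let K : Submodule ℤ L := χ.toAddMonoidHom.ker.toIntSubmodule
  have := finite_quotient_of_span_eq_top L K hχ
  refine isOfFinOrder_iff_pow_eq_one.2 ⟨Nat.card (L ⧸ K), Nat.card_pos, ?_⟩
  ext l
  have hl : Nat.card (L ⧸ K) • l ∈ K := by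
    rw [← Submodule.Quotient.mk_eq_zero, Submodule.Quotient.mk_smul]
    exact card_nsmul_eq_zero'
  rw [AddChar.pow_apply, ← AddChar.map_nsmul_eq_pow]
  exact congrArg Circle.coeHom hl

theorem exists_hyperplane_of_not_isOfFinOrder {E : Type*} [NormedAddCommGroup E]
    [InnerProductSpace ℝ E] [FiniteDimensional ℝ E] (L : Submodule ℤ E) [DiscreteTopology L]
    [IsZLattice ℝ L] {χ : AddChar L Circle} (hχ : ¬ IsOfFinOrder χ) :
    ∃ w : E, w ≠ 0 ∧ ∀ l : L, χ l = 1 → ⟪(l : E), w⟫ = 0 := by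
  obtain ⟨w, hw, hw₀⟩ := Submodule.exists_mem_ne_zero_of_ne_bot fun h =>
    hχ (isOfFinOrder_of_span_ker_eq_top L (Submodule.orthogonal_eq_bot_iff.1 h))
  exact ⟨w, hw₀, fun l hl =>
    (Submodule.mem_orthogonal _ _).1 hw l (Submodule.subset_span ⟨l, hl, rfl⟩)⟩

/-- `A` lies in the union of finitely many affine hyperplanes `{x | ⟪x, w⟫ = c}`, encoded by the
pairs `(w, c)`. -/
def CoveredByHyperplanes {E : Type*} [NormedAddCommGroup E] [InnerProductSpace ℝ E]
    (A : Set E) : Prop :=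
  ∃ W : Set (E × ℝ), W.Finite ∧ (∀ p ∈ W, p.1 ≠ 0) ∧ ∀ x ∈ A, ∃ p ∈ W, ⟪x, p.1⟫ = p.2

namespace CoveredByHyperplanes

variable {E : Type*} [NormedAddCommGroup E] [InnerProductSpace ℝ E] {A B : Set E}

theorem empty : CoveredByHyperplanes (∅ : Set E) :=
  ⟨∅, finite_empty, fun _ h => h.elim, fun _ h => h.elim⟩

theorem mono (hB : CoveredByHyperplanes B) (h : A ⊆ B) : CoveredByHyperplanes A :=
  let ⟨W, hfin, hne, hcov⟩ := hB
  ⟨W, hfin, hne, fun x hx => hcov x (h hx)⟩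

theorem biUnion {ι : Type*} (s : Finset ι) {A : ι → Set E}
    (h : ∀ i ∈ s, CoveredByHyperplanes (A i)) : CoveredByHyperplanes (⋃ i ∈ s, A i) := by
  choose! W hfin hne hcov using h
  refine ⟨⋃ i ∈ s, W i, s.finite_toSet.biUnion hfin, ?_, ?_⟩
  · simp only [mem_iUnion₂]
    rintro p ⟨i, hi, hp⟩
    exact hne i hi p hp
  · simp only [mem_iUnion₂]
    rintro x ⟨i, hi, hx⟩
    obtain ⟨p, hp, hpx⟩ := hcov i hi x hx
    exact ⟨p, ⟨i, hi, hp⟩, hpx⟩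

theorem of_sub_orthogonal {w : E} (hw : w ≠ 0) (h : ∀ x ∈ A, ∀ y ∈ A, ⟪x - y, w⟫ = 0) :
    CoveredByHyperplanes A := by
  obtain rfl | ⟨y, hy⟩ := A.eq_empty_or_nonempty
  · exact .empty
  · refine ⟨{(w, ⟪y, w⟫)}, finite_singleton _, by simpa using hw, fun x hx => ⟨_, rfl, ?_⟩⟩
    simpa [inner_sub_left, sub_eq_zero] using h x hx y hy

theorem exists_ray_escaping [FiniteDimensional ℝ E] (hA : CoveredByHyperplanes A) :
    ∃ u : E, ∀ y : E, ∀ r : ℝ, ∀ᶠ n : ℕ in atTop, ∀ x ∈ A, r ≤ dist x (y + n • u) := by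
  obtain ⟨W, hfin, hne, hcov⟩ := hA
  have := hfin.to_subtype
  obtain ⟨f, hf⟩ := Module.exists_dual_forall_apply_ne_zero (K := ℝ)
    (fun p : W => p.1.1) fun p => hne _ p.2
  set u : E := (InnerProductSpace.toDual ℝ E).symm (LinearMap.toContinuousLinearMap f)
  have hu (p) (hp : p ∈ W) : 0 < |⟪u, p.1⟫| := by
    rw [abs_pos, InnerProductSpace.toDual_symm_apply]
    exact hf ⟨p, hp⟩
  refine ⟨u, fun y r => ?_⟩
  have hfar : ∀ᶠ n : ℕ in atTop, ∀ p ∈ W, |p.2 - ⟪y, p.1⟫| + r * ‖p.1‖ ≤ n * |⟪u, p.1⟫| :=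
    (hfin.eventually_all).2 fun p hp =>
      (tendsto_natCast_atTop_atTop.atTop_mul_const (hu p hp)).eventually_ge_atTop _
  filter_upwards [hfar] with n hn x hx
  obtain ⟨p, hp, hpx⟩ := hcov x hx
  have hinner : n * ⟪u, p.1⟫ = p.2 - ⟪y, p.1⟫ - ⟪x - (y + n • u), p.1⟫ := by
    rw [← Nat.cast_smul_eq_nsmul ℝ, inner_sub_left, inner_add_left, real_inner_smul_left, hpx]
    ring
  refine le_of_mul_le_mul_right ?_ (norm_pos_iff.2 (hne p hp))
  have hnp : n * |⟪u, p.1⟫| ≤ |p.2 - ⟪y, p.1⟫| + |⟪x - (y + n • u), p.1⟫| := by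
    rw [← Nat.abs_cast (R := ℝ) n, ← abs_mul, hinner]
    exact abs_sub _ _
  have hcs := abs_real_inner_le_norm (x - (y + n • u)) p.1
  rw [dist_eq_norm]
  linarith [hn p hp]

end CoveredByHyperplanes

variable {d : ℕ}

theorem LatticeCoset.coveredByHyperplanes_of_separates {m : Rd d} {p q : LatticeCoset d}
    (h : Separates m p q) : CoveredByHyperplanes {x | x ∈ q ∧ e2pi (x - p.base) m = 1} := by
  obtain ⟨-, hinf | ⟨htriv, hne⟩⟩ := h
  · obtain ⟨w, hw, horth⟩ := exists_hyperplane_of_not_isOfFinOrder q.lattice hinf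
    refine .of_sub_orthogonal hw fun x hx y hy => ?_
    have hxy : x - y ∈ q.lattice := by simpa using q.lattice.sub_mem hx.1 hy.1
    have hone : e2pi (x - y) m = 1 := by
      rw [← sub_sub_sub_cancel_right x y p.base, sub_eq_add_neg (x - p.base), e2pi_add_left,
        e2pi_neg_left, hx.2, hy.2, inv_one, mul_one]
    exact horth ⟨x - y, hxy⟩
      (Circle.ext ((coe_latticeChar _ _).trans (hone.trans Circle.coe_one.symm)))
  · refine CoveredByHyperplanes.empty.mono fun x hx => hne ?_
    rw [← hx.2, ← sub_add_sub_cancel x q.base p.base, e2pi_add_left,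
      latticeChar_eq_one_iff.1 htriv _ hx.1, one_mul]

end Hyperplanes

section AlmostPeriodicity

variable {G : Type*} [AddCommGroup G]

variable (G) in
/-- The space of almost periodic functions on the discrete group `G`, in Bochner's form: every
ultrafilter of translates of `h` has a uniform limit. -/
def almostPeriodic : Submodule ℂ (G → ℂ) where
  carrier := {h | ∀ 𝒰 : Ultrafilter G, ∃ k, TendstoUniformly (fun t y => h (y + t)) k 𝒰}
  add_mem' {h h'} hh hh' 𝒰 := by
    obtain ⟨k, hk⟩ := hh 𝒰
    obtain ⟨k', hk'⟩ := hh' 𝒰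
    exact ⟨k + k', hk.add hk'⟩
  zero_mem' 𝒰 := ⟨0, fun _ hu => .of_forall fun _ _ => refl_mem_uniformity hu⟩
  smul_mem' c h hh 𝒰 := by
    obtain ⟨k, hk⟩ := hh 𝒰
    exact ⟨c • k, (uniformContinuous_const_smul c).comp_tendstoUniformly hk⟩

theorem mem_almostPeriodic_of_compactSpace {K : Type*} [TopologicalSpace K] [CompactSpace K]
    {F : K → G → ℂ} (hF : ∀ z, TendstoUniformly F (F z) (𝓝 z)) {h : G → ℂ}
    (hh : ∀ t, ∃ z, ∀ y, h (y + t) = F z y) : h ∈ almostPeriodic G := by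
  choose z hz using hh
  refine fun 𝒰 => ⟨F (𝒰.map z).lim, fun u hu => ?_⟩
  have hlim : Tendsto z 𝒰 (𝓝 (𝒰.map z).lim) := (𝒰.map z).le_nhds_lim
  filter_upwards [hlim.eventually (hF _ u hu)] with t ht y
  simpa only [hz] using ht y

theorem eq_zero_of_mem_almostPeriodic {h : G → ℂ} (hh : h ∈ almostPeriodic G) {ι : Type*}
    {l : Filter ι} [l.NeBot] {u : ι → G} (hu : ∀ y, Tendsto (fun n => h (y + u n)) l (𝓝 0)) :
    h = 0 := by
  obtain ⟨k, hk⟩ := hh ((Ultrafilter.of l).map u)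
  have hk₀ (y : G) : k y = 0 :=
    tendsto_nhds_unique (hk.tendsto_at y : Tendsto _ (map u (Ultrafilter.of l)) _)
      (tendsto_map'_iff.2 ((hu y).mono_left (Ultrafilter.of_le l)))
  ext x
  refine norm_le_zero_iff.1 (le_of_forall_gt fun ε hε => ?_)
  obtain ⟨t, ht⟩ := (Metric.tendstoUniformly_iff.1 hk ε hε).exists
  simpa [hk₀] using ht (x - t)

theorem tsum_mul_addChar_mem_almostPeriodic {Γ : Type*} {g : Γ → ℂ}
    (hg : Summable fun γ => ‖g γ‖) (κ : Γ → AddChar G Circle) :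
    (fun y => ∑' γ, g γ * κ γ y) ∈ almostPeriodic G := by
  have hsum (z : Γ → Circle) (y : G) : Summable fun γ => g γ * (κ γ y * z γ) :=
    .of_norm (hg.congr fun γ => by
      rw [norm_mul, norm_mul, Circle.norm_coe, Circle.norm_coe, mul_one, mul_one])
  have hdist (z z₀ : Γ → Circle) (γ : Γ) : ‖g γ‖ * dist (z γ) (z₀ γ) ≤ ‖g γ‖ * 2 := by
    gcongr
    refine (dist_le_norm_add_norm (z γ : ℂ) (z₀ γ)).trans ?_
    rw [Circle.norm_coe, Circle.norm_coe, one_add_one_eq_two]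
  refine mem_almostPeriodic_of_compactSpace (K := Γ → Circle)
    (F := fun z y => ∑' γ, g γ * (κ γ y * z γ)) (fun z₀ => ?_)
    fun t => ⟨fun γ => κ γ t, fun y => by simp [AddChar.map_add_eq_mul]⟩
  have hcont : Continuous fun z : Γ → Circle => ∑' γ, ‖g γ‖ * dist (z γ) (z₀ γ) :=
    continuous_tsum (fun γ => by fun_prop) (hg.mul_right 2) fun γ z => by
      rw [Real.norm_of_nonneg (by positivity)]
      exact hdist z z₀ γ
  refine Metric.tendstoUniformly_iff.2 fun ε hε => ?_
  filter_upwards [hcont.continuousAt.eventually_lt_const (by simpa using hε)] with z hz y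
  refine hz.trans_le' ?_
  rw [dist_comm, dist_eq_norm, ← (hsum z y).tsum_sub (hsum z₀ y)]
  refine tsum_of_norm_bounded (Summable.hasSum ?_) fun γ => ?_
  · exact (hg.mul_right 2).of_nonneg_of_le (fun γ => by positivity) (hdist z z₀)
  · rw [← mul_sub, ← mul_sub, norm_mul, norm_mul, Circle.norm_coe, one_mul, ← dist_eq_norm]
    rfl

theorem mem_almostPeriodic_of_quasiperiodic {E ι : Type*} [NormedAddCommGroup E] [NormedSpace ℝ E]
    [Finite ι] (β : Module.Basis ι ℝ E) {χ : Submodule.span ℤ (range β) → Circle}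
    {h : E → ℂ} (hcont : Continuous h)
    (hχ : ∀ (l : Submodule.span ℤ (range β)) (y : E), h (y + (l : E)) = χ l * h y) :
    h ∈ almostPeriodic E := by
  have := Fintype.ofFinite ι
  have := Module.Finite.of_basis β
  have := FiniteDimensional.proper_real E
  let D := closedBall (0 : E) (∑ i, ‖β i‖)
  let F (z : Circle × D) (y : E) : ℂ := z.1 * h (y + z.2)
  have : CompactSpace D := isCompact_iff_compactSpace.1 (isCompact_closedBall _ _)
  have hfract (y : E) : ∃ v : D, ∃ l : Submodule.span ℤ (range β), v + (l : E) = y :=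
    ⟨⟨ZSpan.fract β y, mem_closedBall_zero_iff.2 (ZSpan.norm_fract_le β y)⟩, ZSpan.floor β y,
      by simp [ZSpan.fract_apply]⟩
  refine mem_almostPeriodic_of_compactSpace (F := F) (fun z₀ => ?_) fun t => ?_
  · have hD : TendstoUniformly (fun z (v : D) => F z v) (fun v : D => F z₀ v) (𝓝 z₀) :=
      Continuous.tendstoUniformly _ (by unfold F; fun_prop) z₀
    refine Metric.tendstoUniformly_iff.2 fun ε hε => ?_
    filter_upwards [Metric.tendstoUniformly_iff.1 hD ε hε] with z hz y
    obtain ⟨v, l, rfl⟩ := hfract y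
    have hl (z) : F z (v + l) = χ l * F z v := by
      dsimp only [F]
      rw [add_right_comm, hχ, mul_left_comm]
    rw [hl, hl, dist_eq_norm, ← mul_sub, norm_mul, Circle.norm_coe, one_mul, ← dist_eq_norm]
    exact hz v
  · obtain ⟨v, l, rfl⟩ := hfract t
    exact ⟨(χ l, v), fun y => by rw [← add_assoc, hχ]⟩

end AlmostPeriodicity

section AlmostPeriodicMeasures

variable {d : ℕ} {a : Rd d → ℂ}

namespace LocFinite

variable {φ : Rd d → ℂ}

theorem locallyFinite_support_mul_translate (ha : LocFinite {x | a x ≠ 0})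
    (hφ : HasCompactSupport φ) :
    LocallyFinite fun x => Function.support fun y => a x * φ (x - y) := by
  obtain ⟨r, -, hr⟩ := hφ.exists_pos_le_norm
  refine fun y => ⟨ball y 1, ball_mem_nhds y one_pos, (ha y (r + 1)).subset ?_⟩
  rintro x ⟨z, hz, hzy⟩
  refine ⟨left_ne_zero_of_mul hz, ?_⟩
  have hxz : dist x z < r := by
    rw [dist_eq_norm]
    exact not_le.1 fun h => right_ne_zero_of_mul hz (hr _ h)
  exact (dist_triangle x z y).trans_lt (add_lt_add hxz hzy)

theorem summable_mul_translate (ha : LocFinite {x | a x ≠ 0}) (hφ : HasCompactSupport φ)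
    (y : Rd d) : Summable fun x => a x * φ (x - y) :=
  summable_of_hasFiniteSupport ((ha.locallyFinite_support_mul_translate hφ).point_finite y)

theorem continuous_tsum_mul_translate (ha : LocFinite {x | a x ≠ 0}) (hφ : HasCompactSupport φ)
    (hcont : Continuous φ) : Continuous fun y => ∑' x, a x * φ (x - y) := by
  have hlf := ha.locallyFinite_support_mul_translate hφ
  simpa only [tsum_eq_finsum (hlf.point_finite _)] using
    continuous_finsum (fun x => by fun_prop) hlf

end LocFinite

variable (d) in
/-- The masses `a` of the strongly almost periodic pure point measures with locally finite support:
those all of whose smoothings `y ↦ ∑ x, a x φ(x - y)` are almost periodic functions. -/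
def almostPeriodicMeasures : Submodule ℂ (Rd d → ℂ) where
  carrier := {a | LocFinite {x | a x ≠ 0} ∧ ∀ φ : SchwartzMap (Rd d) ℂ, HasCompactSupport φ →
    (fun y => ∑' x, a x * φ (x - y)) ∈ almostPeriodic (Rd d)}
  add_mem' {a a'} ha ha' := by
    refine ⟨(ha.1.union ha'.1).mono (Function.support_add a a'), fun φ hφ => ?_⟩
    convert add_mem (ha.2 φ hφ) (ha'.2 φ hφ) using 2 with y
    simp only [Pi.add_apply, add_mul]
    exact (ha.1.summable_mul_translate hφ y).tsum_add (ha'.1.summable_mul_translate hφ y)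
  zero_mem' := ⟨fun x r => by simp, fun φ _ => by
    simp only [Pi.zero_apply, zero_mul, tsum_zero]
    exact zero_mem _⟩
  smul_mem' c a ha := by
    refine ⟨ha.1.mono (Function.support_const_smul_subset c a), fun φ hφ => ?_⟩
    convert Submodule.smul_mem _ c (ha.2 φ hφ) using 2 with y
    simp only [Pi.smul_apply, smul_eq_mul, mul_assoc, tsum_mul_left]

theorem IsFourierPair.mem_almostPeriodicMeasures {b : Rd d → ℂ} (h : IsFourierPair a b)
    (ha : LocFinite {x | a x ≠ 0}) : a ∈ almostPeriodicMeasures d := by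
  refine ⟨ha, fun φ _ => ?_⟩
  convert tsum_mul_addChar_mem_almostPeriodic (h.summable_norm_mul_smoothingWeight φ one_pos)
    e2piChar using 2 with y
  simpa only [rescale_apply, inv_one, one_smul, coe_e2piChar] using h.tsum_mul_rescale φ one_pos y

theorem eq_zero_of_mem_almostPeriodicMeasures (ha : a ∈ almostPeriodicMeasures d)
    (hcov : CoveredByHyperplanes {x | a x ≠ 0}) : a = 0 := by
  ext x
  obtain ⟨ψ, hψ₀, hψ⟩ := exists_schwartz_bump d
  obtain ⟨δ, hδ, hx⟩ := exists_forall_dist_lt_imp_eq one_pos (ha.1 x 1)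
  have hsupp : HasCompactSupport (rescale ψ hδ 0) :=
    .of_support_subset_isCompact (isCompact_closedBall 0 δ) fun y hy =>
      not_lt.1 fun h => hy (rescale_eq_zero_of_le_dist hψ hδ h.le)
  obtain ⟨u, hu⟩ := hcov.exists_ray_escaping
  have hzero := eq_zero_of_mem_almostPeriodic (ha.2 _ hsupp) (l := atTop)
    (u := fun n : ℕ => n • u) fun y => ?_
  · rw [← tsum_mul_rescale_eq_of_isolated hψ₀ hψ hδ hx]
    simpa only [rescale_apply, sub_zero] using congrFun hzero x
  · refine tendsto_const_nhds.congr' ?_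
    filter_upwards [hu y δ] with n hn
    refine ((tsum_congr fun x => ?_).trans tsum_zero).symm
    by_cases hax : a x = 0
    · rw [hax, zero_mul]
    · have := rescale_eq_zero_of_le_dist hψ hδ (hn x hax)
      rw [rescale_apply] at this ⊢
      rw [sub_zero, this, mul_zero]

namespace LatticeCoset

theorem locFinite (q : LatticeCoset d) : LocFinite {x | x ∈ q} :=
  LocFinite.preimage_sub_right (A := q.lattice)
    (fun x r => by simpa [inter_comm] using ZSpan.setFinite_inter q.basis isBounded_ball) q.base

theorem indicator_e2pi_mem_almostPeriodicMeasures (q : LatticeCoset d) (ω : Rd d) :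
    indicator {x | x ∈ q} (fun x => e2pi x ω) ∈ almostPeriodicMeasures d := by
  have hlf : LocFinite {x | indicator {x | x ∈ q} (fun x => e2pi x ω) x ≠ 0} :=
    q.locFinite.mono fun x hx => mem_of_indicator_ne_zero hx
  refine ⟨hlf, fun φ hφ => mem_almostPeriodic_of_quasiperiodic q.basis
    (χ := latticeChar q.lattice ω) (hlf.continuous_tsum_mul_translate hφ φ.continuous)
    fun l y => ?_⟩
  have hl (x) : x + (l : Rd d) ∈ q ↔ x ∈ q := by
    change x + (l : Rd d) - q.base ∈ q.lattice ↔ x - q.base ∈ q.lattice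
    rw [add_sub_right_comm, add_mem_cancel_right l.2]
  rw [coe_latticeChar, ← tsum_mul_left, ← (Equiv.addRight (l : Rd d)).tsum_eq]
  refine tsum_congr fun x => ?_
  by_cases hx : x ∈ q
  · simp [hl, hx, e2pi_add_left, mul_assoc, mul_left_comm]
  · simp [hl, hx]

theorem indicator_mem_almostPeriodicMeasures (q : LatticeCoset d) {P : Rd d → ℂ}
    (hP : IsTrigPoly P) : indicator {x | x ∈ q} P ∈ almostPeriodicMeasures d := by
  obtain ⟨n, c, w, hw⟩ := hP
  convert sum_mem (t := Finset.univ) fun i _ => Submodule.smul_mem _ (c i)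
    (q.indicator_e2pi_mem_almostPeriodicMeasures (w i)) using 1
  ext x
  by_cases hx : x ∈ q
  · simp [hx, hw]
  · simp [hx]

/-- The points at which the functions `x ↦ 1 - e^{2πi⟨x - p.base, m p q⟩}` fail to single out one
coset `q ∈ s` from the other cosets `p ∈ s`. -/
def collisions (s : Finset (LatticeCoset d)) (m : LatticeCoset d → LatticeCoset d → Rd d) :
    Set (Rd d) :=
  {x | ∃ p ∈ s, ∃ q ∈ s, p ≠ q ∧ x ∈ q ∧ e2pi (x - p.base) (m p q) = 1}

variable {s : Finset (LatticeCoset d)} {m : LatticeCoset d → LatticeCoset d → Rd d}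
  (hm : ∀ p ∈ s, ∀ q ∈ s, p ≠ q → Separates (m p q) p q)

include hm

theorem coveredByHyperplanes_collisions : CoveredByHyperplanes (collisions s m) := by
  classical
  have hcov := CoveredByHyperplanes.biUnion s.offDiag
    (A := fun pq => {x | x ∈ pq.2 ∧ e2pi (x - pq.1.base) (m pq.1 pq.2) = 1}) fun pq hpq => by
      obtain ⟨hp, hq, hne⟩ := Finset.mem_offDiag.1 hpq
      exact coveredByHyperplanes_of_separates (hm _ hp _ hq hne)
  refine hcov.mono ?_
  rintro x ⟨p, hp, q, hq, hne, hx⟩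
  exact mem_biUnion (Finset.mem_offDiag.2 ⟨hp, hq, hne⟩ : (p, q) ∈ s.offDiag) hx

theorem eq_sum_indicator_of_notMem_collisions (hcov : ∀ x, a x ≠ 0 → ∃ q ∈ s, x ∈ q)
    {P : LatticeCoset d → Rd d → ℂ}
    (hP : ∀ q ∈ s, ∀ x ∈ q, (∀ p ∈ s, p ≠ q → e2pi (x - p.base) (m p q) ≠ 1) → a x = P q x)
    {x : Rd d} (hx : x ∉ collisions s m) :
    a x = ∑ q ∈ s, indicator {x | x ∈ q} (P q) x := by
  have hx' : ∀ q ∈ s, x ∈ q → ∀ p ∈ s, p ≠ q → e2pi (x - p.base) (m p q) ≠ 1 :=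
    fun q hq hxq p hp hpq hone => hx ⟨p, hp, q, hq, hpq, hxq, hone⟩
  by_cases hxs : ∃ q ∈ s, x ∈ q
  · obtain ⟨q, hq, hxq⟩ := hxs
    have hxp : ∀ p ∈ s, p ≠ q → x ∉ p := fun p hp hpq hxp =>
      hx' q hq hxq p hp hpq (latticeChar_eq_one_iff.1 (hm p hp q hq hpq).1 _ hxp)
    rw [Finset.sum_eq_single_of_mem q hq fun p hp hpq => by simp [hxp p hp hpq]]
    simp [hxq, hP q hq x hxq (hx' q hq hxq)]
  · push Not at hxs
    rw [Finset.sum_eq_zero fun q hq => by simp [hxs q hq]]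
    exact of_not_not fun h => (hcov x h).elim fun q hq => hxs q hq.1 hq.2

end LatticeCoset

theorem HasLocFiniteSpectrum.exists_isTrigPoly_eq_sum_indicator {C : ℝ}
    (hspec : HasLocFiniteSpectrum a) (hC : ∀ x, ‖a x‖ ≤ C) {s : Finset (LatticeCoset d)}
    (hcov : ∀ x, a x ≠ 0 → ∃ q ∈ s, x ∈ q)
    (hsep : ∀ p ∈ s, ∀ q ∈ s, p ≠ q → ∃ m, LatticeCoset.Separates m p q) :
    ∃ P : LatticeCoset d → Rd d → ℂ, (∀ q ∈ s, IsTrigPoly (P q)) ∧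
      a = ∑ q ∈ s, indicator {x | x ∈ q} (P q) := by
  choose! m hm using hsep
  choose! P hP hPa using fun q hq => LatticeCoset.exists_isTrigPoly_eq_of_separates hspec hC hcov q
    (m := fun p => m p q) fun p hp hpq => hm p hp q hq hpq
  have hlf : LocFinite {x | a x ≠ 0} := fun x r =>
    (s.finite_toSet.biUnion fun q _ => q.locFinite x r).subset fun y hy =>
      let ⟨_, hq, hyq⟩ := hcov y hy.1
      mem_biUnion hq ⟨hyq, hy.2⟩
  have hap : a - ∑ q ∈ s, indicator {x | x ∈ q} (P q) ∈ almostPeriodicMeasures d :=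
    sub_mem (hspec.choose_spec.1.mem_almostPeriodicMeasures hlf)
      (sum_mem fun q hq => q.indicator_mem_almostPeriodicMeasures (hP q hq))
  refine ⟨P, hP, sub_eq_zero.1 (eq_zero_of_mem_almostPeriodicMeasures hap
    ((LatticeCoset.coveredByHyperplanes_collisions hm).mono fun x hx => ?_))⟩
  by_contra hgood
  refine hx (sub_eq_zero.2 ?_)
  rw [Finset.sum_apply]
  exact LatticeCoset.eq_sum_indicator_of_notMem_collisions hm hcov hPa hgood

end AlmostPeriodicMeasures

section LatticeCombs

variable {d : ℕ}

/-- The masses of a generalized lattice Dirac comb: a finite sum of trigonometric polynomials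
restricted to translates of full-rank lattices. -/
def IsGeneralizedLatticeComb (a : Rd d → ℂ) : Prop :=
  ∃ (J : ℕ) (L : Fin J → Set (Rd d)) (v : Fin J → Rd d) (P : Fin J → Rd d → ℂ),
    (∀ j, IsFullRankLattice (L j)) ∧ (∀ j, IsTrigPoly (P j)) ∧
    ∀ x : Rd d, a x = ∑ j, indicator ((fun y => v j + y) '' L j) (P j) x

theorem LatticeCoset.image_add_base (q : LatticeCoset d) :
    (fun y => q.base + y) '' (q.lattice : Set (Rd d)) = {x | x ∈ q} := by
  rw [image_add_left]
  ext x
  exact (neg_add_eq_sub q.base x ▸ Iff.rfl : -q.base + x ∈ q.lattice ↔ x - q.base ∈ q.lattice)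

theorem isGeneralizedLatticeComb_sum_indicator {s : Finset (LatticeCoset d)}
    {P : LatticeCoset d → Rd d → ℂ} (hP : ∀ q ∈ s, IsTrigPoly (P q)) :
    IsGeneralizedLatticeComb (∑ q ∈ s, indicator {x | x ∈ q} (P q)) := by
  let e := s.equivFin
  refine ⟨s.card, fun j => (e.symm j).1.lattice, fun j => (e.symm j).1.base,
    fun j => P (e.symm j), fun j => isFullRankLattice_span _, fun j => hP _ (e.symm j).2,
    fun x => ?_⟩
  simp only [LatticeCoset.image_add_base]
  rw [Finset.sum_apply, ← Finset.sum_coe_sort,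
    ← Equiv.sum_comp e.symm fun q : s => indicator {x | x ∈ q.1} (P q) x]

end LatticeCombs

end

/-- (Second part of Theorem 9.) Under the hypotheses of
Statement 3, if moreover the union of the supports is uniformly discrete, then
every `μ_s` with locally finite spectrum is a generalized lattice Dirac comb
`Σ_j Σ_{λ ∈ λ_j + L_j} P_j(λ) δ_λ` with full-rank lattices `L_j` and
trigonometric polynomials `P_j`. -/
theorem statement4 {d S : ℕ} (a : Fin S → Rd d → ℂ) (f : Fin S → TemperedDist d)
    (b : Fin S → Rd d → ℂ)
    (hrep : ∀ s, RepMeasure (a s) (f s))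
    (hud : ∀ s, UniformlyDiscrete {x | a s x ≠ 0})
    (hrepF : ∀ s, RepMeasure (b s) (fourierTD (f s)))
    (hvar : ∀ s, ∃ C r₀ : ℝ, ∀ r ≥ r₀, ballVar (b s) r ≤ ENNReal.ofReal (C * r ^ d))
    (hinf : ∃ ε > (0:ℝ), ∀ x : Rd d, (∃ s, a s x ≠ 0) → ε ≤ ∑ s, ‖a s x‖)
    (hU : UniformlyDiscrete (⋃ s, {x | a s x ≠ 0})) :
    ∀ s, LocFinite {x | b s x ≠ 0} →
      ∃ (J : ℕ) (L : Fin J → Set (Rd d)) (v : Fin J → Rd d) (P : Fin J → Rd d → ℂ),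
        (∀ j, IsFullRankLattice (L j)) ∧ (∀ j, IsTrigPoly (P j)) ∧
        ∀ x : Rd d, a s x = ∑ j, Set.indicator ((fun y => v j + y) '' (L j)) (P j) x := by
  intro s hs
  have hpair : ∀ s, IsFourierPair (a s) (b s) := fun s => (hrep s).isFourierPair (hrepF s)
  obtain ⟨H, _, _, _, U, ξ, η, hcyc, ha⟩ := exists_unitaryRep_of_isFourierPair hpair hvar hud
  have hsupp : U.coeffSupport η ξ = ⋃ s, {x | a s x ≠ 0} := by
    ext x
    simp [UnitaryRep.coeffSupport, ha]
  obtain ⟨ε, hε, hgap⟩ := hinf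
  simp only [ha] at hgap
  obtain ⟨t, ht, hfin, htcov⟩ :=
    UnitaryRep.exists_finite_coset_cover_coeffSupport hcyc hε fun x hx => hgap x hx
  obtain ⟨cosets, hcov, hsep⟩ :=
    LatticeCoset.exists_separated_cover_of_cosets (hsupp ▸ hU) ht hfin htcov
  have hbound : ∀ x, ‖a s x‖ ≤ ‖η s‖ * ‖ξ‖ := fun x => by
    rw [ha]
    exact (norm_inner_le_norm _ _).trans_eq (by rw [LinearIsometry.norm_map])
  have hspec : HasLocFiniteSpectrum (a s) := ⟨b s, hpair s, hs⟩
  obtain ⟨P, hP, hcomb⟩ := hspec.exists_isTrigPoly_eq_sum_indicator hbound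
    (fun x hx => hcov x (hsupp ▸ mem_iUnion_of_mem s hx)) hsep
  exact hcomb ▸ isGeneralizedLatticeComb_sum_indicator hP
end
end

section
/- If a tempered distribution f on ℝ^d has locally finite support Λ, then there exist K < ∞ (independent of λ) and complex numbers p_k(λ) such that f = Σ_{λ∈Λ} Σ_{‖k‖≤K} p_k(λ) D^k δ_λ, with k ∈ (ℕ∪{0})^d. -/
open MeasureTheory SchwartzMap Metric Set
open scoped Pointwise RealInnerProductSpace ENNReal NNReal

noncomputable section

/-!
By continuity `f` is bounded by finitely many Schwartz seminorms, hence sees only derivatives up to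
some order `K`. Let `a` be an isolated point of the support and let `φ` vanish near all other points
of it and be flat to order `K` at `a`. Cutting `φ` off to the ball of radius `ε` around `a` does not
change `f φ`: each derivative of the cut-off costs a factor `ε⁻¹`, but by Taylor's formula the
flatness of `φ` gains one factor `ε` more, so all the relevant seminorms are `O(ε)` and `f φ = 0`.
Hence near `a` the functional `f` vanishes on the common kernel of the finitely many functionals
`D^k δ_a`, `‖k‖ ≤ K`, and is therefore a linear combination of them. A test function of compact
support meets only finitely many points of the support of `f`, and cut-offs separate these.
-/

open Distribution Filter Topology
open scoped ContDiff LineDeriv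

section Vanishing

variable {E F G 𝓓 : Type*} [NormedAddCommGroup E] [NormedSpace ℝ E] [FiniteDimensional ℝ E]
  [NormedAddCommGroup F] [NormedSpace ℝ F]

theorem exists_sum_eq_tsupport_subset {ι : Type*} [Fintype ι]
    {U : ι → Set E} (hU : ∀ i, IsOpen (U i)) (φ : 𝓢(E, F)) (hφ : HasCompactSupport φ)
    (hcover : tsupport φ ⊆ ⋃ i, U i) :
    ∃ ψ : ι → 𝓢(E, F), φ = ∑ i, ψ i ∧ ∀ i, tsupport (ψ i) ⊆ U i := by
  obtain ⟨ρ, hρ⟩ := SmoothPartitionOfUnity.exists_isSubordinate (modelWithCornersSelf ℝ E)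
    (isClosed_tsupport φ) U hU hcover
  have hsmooth (i : ι) : ContDiff ℝ ∞ fun x => ρ i x • φ x :=
    (ρ i).contMDiff.contDiff.smul (φ.smooth ⊤)
  have hcompact (i : ι) : HasCompactSupport fun x => ρ i x • φ x := hφ.smul_left
  refine ⟨fun i => (hcompact i).toSchwartzMap (hsmooth i), ?_, fun i =>
    (tsupport_smul_subset_left (ρ i) φ).trans (hρ i)⟩
  ext x
  simp only [_root_.sum_apply, HasCompactSupport.toSchwartzMap_toFun, ← Finset.sum_smul]
  by_cases hx : x ∈ tsupport φ
  · rw [← finsum_eq_sum_of_fintype, ρ.sum_eq_one hx, one_smul]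
  · rw [image_eq_zero_of_notMem_tsupport hx, smul_zero]

variable [AddCommGroup G] [FunLike 𝓓 𝓢(E, F) G] [AddMonoidHomClass 𝓓 𝓢(E, F) G] {f : 𝓓}

theorem map_eq_zero_of_disjoint_dsupport {φ : 𝓢(E, F)}
    (hφ : HasCompactSupport φ) (hdisj : Disjoint (tsupport φ) (dsupport f)) : f φ = 0 := by
  have hlocal (x : tsupport φ) :
      ∃ U : Set E, IsVanishingOn f U ∧ IsOpen U ∧ (x : E) ∈ U :=
    (notMem_dsupport_iff _).1 (hdisj.notMem_of_mem_left x.2)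
  choose U hfU hU hxU using hlocal
  obtain ⟨t, ht⟩ := hφ.isCompact.elim_finite_subcover U hU
    fun x hx => mem_iUnion.2 ⟨⟨x, hx⟩, hxU _⟩
  obtain ⟨ψ, hsum, hψ⟩ := exists_sum_eq_tsupport_subset (U := fun i : t => U i)
    (fun i => hU i) φ hφ (by rwa [iUnion_subtype])
  rw [hsum, map_sum]
  exact Finset.sum_eq_zero fun i _ => hfU i _ (hψ i)

theorem map_eq_of_eventuallyEq_on_dsupport {φ ψ : 𝓢(E, F)}
    (hφ : HasCompactSupport φ) (hψ : HasCompactSupport ψ)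
    (h : ∀ x ∈ dsupport f, φ =ᶠ[𝓝 x] ψ) : f φ = f ψ := by
  rw [← sub_eq_zero, ← map_sub]
  refine map_eq_zero_of_disjoint_dsupport ?_ (disjoint_right.2 fun x hx => ?_)
  · rw [sub_eq_add_neg]
    exact hφ.add hψ.neg
  · refine notMem_tsupport_iff_eventuallyEq.2 ?_
    filter_upwards [h x hx] with y hy
    simp [hy]

end Vanishing

theorem tdSupport_eq_dsupport {d : ℕ} (f : TemperedDist d) : tdSupport f = dsupport f := by
  ext x
  refine ⟨fun hx => (mem_dsupport_iff_forall_exists_ne x).2 fun U hxU hU => ?_,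
    fun hx U hU hxU => ?_⟩
  · obtain ⟨φ, -, hφ⟩ := hx U hU hxU
    exact ⟨φ, hφ⟩
  · obtain ⟨φ, hsub, hne⟩ := not_isVanishingOn_iff.1 <|
      (hasBasis_nhds_isOpen_isBounded x).mem_dsupport.1 hx (U ∩ ball x 1)
        ⟨⟨hxU, mem_ball_self one_pos⟩, hU.inter isOpen_ball,
          isBounded_ball.subset inter_subset_right⟩
    refine ⟨φ, ?_, hsub.trans inter_subset_left, hne⟩
    exact isCompact_of_isClosed_isBounded (isClosed_tsupport φ)
      (isBounded_ball.subset (hsub.trans inter_subset_right))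

section Taylor

variable {E F : Type*} [NormedAddCommGroup E] [NormedSpace ℝ E] [NormedAddCommGroup F]
  [NormedSpace ℝ F]

theorem norm_iteratedFDeriv_le_of_iteratedFDeriv_eq_zero {g : E → F} {n : ℕ} (hg : ContDiff ℝ n g)
    {s : Set E} (hs : Convex ℝ s) {a : E} (ha : a ∈ s)
    (hzero : ∀ i < n, iteratedFDeriv ℝ i g a = 0) {M : ℝ}
    (hM : ∀ x ∈ s, ‖iteratedFDeriv ℝ n g x‖ ≤ M) {i : ℕ} (hi : i ≤ n) {x : E} (hx : x ∈ s) :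
    ‖iteratedFDeriv ℝ i g x‖ ≤ M * ‖x - a‖ ^ (n - i) := by
  induction hi using Nat.decreasingInduction generalizing x with
  | self => simpa using hM x hx
  | @of_succ i hi ih =>
    have hM₀ : 0 ≤ M := (norm_nonneg _).trans (hM a ha)
    have hfderiv : ∀ y ∈ s ∩ closedBall a ‖x - a‖,
        ‖fderiv ℝ (iteratedFDeriv ℝ i g) y‖ ≤ M * ‖x - a‖ ^ (n - (i + 1)) := fun y hy => by
      rw [norm_fderiv_iteratedFDeriv]
      refine (ih hy.1).trans ?_
      have : ‖y - a‖ ≤ ‖x - a‖ := mem_closedBall_iff_norm.1 hy.2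
      gcongr
    have hdiff : Differentiable ℝ (iteratedFDeriv ℝ i g) :=
      hg.differentiable_iteratedFDeriv (mod_cast hi)
    have hmvt := (hs.inter (convex_closedBall a ‖x - a‖)).norm_image_sub_le_of_norm_fderiv_le
      (𝕜 := ℝ) (fun y _ => hdiff y) hfderiv ⟨ha, mem_closedBall_self (norm_nonneg _)⟩
      ⟨hx, mem_closedBall_iff_norm.2 le_rfl⟩
    rwa [hzero i hi, sub_zero, mul_assoc, ← pow_succ,
      show n - (i + 1) + 1 = n - i by omega] at hmvt

end Taylor

section Bump

variable {E : Type*} [NormedAddCommGroup E] [NormedSpace ℝ E] [FiniteDimensional ℝ E]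

theorem exists_norm_iteratedFDeriv_contDiffBump_le {R : ℝ} (hR : 1 < R) (n : ℕ) :
    ∃ B, ∀ (a : E) (χ : ContDiffBump a), χ.rOut = R * χ.rIn →
      ∀ i ≤ n, ∀ x, ‖iteratedFDeriv ℝ i χ x‖ ≤ B * χ.rOut⁻¹ ^ i := by
  let χ₀ : ContDiffBump (0 : E) := ⟨R⁻¹, 1, by positivity, inv_lt_one_of_one_lt₀ hR⟩
  have hbounded (i : ℕ) : ∃ B, ∀ x, ‖iteratedFDeriv ℝ i χ₀ x‖ ≤ B :=
    (χ₀.contDiff.continuous_iteratedFDeriv le_rfl).bounded_above_of_compact_support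
      (χ₀.hasCompactSupport.iteratedFDeriv i)
  choose B hB using hbounded
  obtain ⟨B', hB'⟩ := ((Finset.Iic n).image B).exists_le
  refine ⟨B', fun a χ hχ i hi x => ?_⟩
  have hratio : R * χ.rOut⁻¹ = χ.rIn⁻¹ := by
    have : R ≠ 0 := by positivity
    rw [hχ]
    field_simp
  have hscale : ⇑χ = fun y => (fun z => χ₀ (χ.rOut⁻¹ • z)) (y - a) := by
    funext y
    simp [χ₀, ContDiffBump.apply, smul_smul, hratio, (eq_div_of_mul_eq χ.rIn_pos.ne' hχ.symm).symm]
  rw [hscale, iteratedFDeriv_comp_sub (f := fun z => χ₀ (χ.rOut⁻¹ • z)),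
    iteratedFDeriv_comp_const_smul _ χ₀.contDiff, norm_smul, norm_pow, norm_inv,
    Real.norm_of_nonneg χ.rOut_pos.le, mul_comm]
  have hBi : ‖iteratedFDeriv ℝ i χ₀ (χ.rOut⁻¹ • (x - a))‖ ≤ B' :=
    (hB i _).trans (hB' _ (Finset.mem_image_of_mem B (Finset.mem_Iic.2 hi)))
  have : 0 ≤ χ.rOut⁻¹ := inv_nonneg.2 χ.rOut_pos.le
  gcongr

end Bump

section CutOff

variable {E F : Type*} [NormedAddCommGroup E] [NormedSpace ℝ E] [FiniteDimensional ℝ E]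
  [NormedAddCommGroup F] [NormedSpace ℝ F] {a : E} (χ : ContDiffBump a) (φ : 𝓢(E, F))

theorem coe_smulLeftCLM_contDiffBump : ⇑(smulLeftCLM F χ φ) = fun x => χ x • φ x :=
  smulLeftCLM_apply (χ.hasCompactSupport.hasTemperateGrowth χ.contDiff) φ

theorem hasCompactSupport_smulLeftCLM_contDiffBump : HasCompactSupport (smulLeftCLM F χ φ) := by
  rw [coe_smulLeftCLM_contDiffBump]
  exact χ.hasCompactSupport.smul_right

theorem smulLeftCLM_contDiffBump_eventuallyEq : smulLeftCLM F χ φ =ᶠ[𝓝 a] φ := by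
  filter_upwards [χ.eventuallyEq_one] with x hx
  simp [coe_smulLeftCLM_contDiffBump, hx]

variable {χ} in
theorem smulLeftCLM_contDiffBump_eventuallyEq_zero {x : E} (hx : x ∉ tsupport χ) :
    smulLeftCLM F χ φ =ᶠ[𝓝 x] 0 := by
  filter_upwards [notMem_tsupport_iff_eventuallyEq.1 hx] with y hy
  simp [coe_smulLeftCLM_contDiffBump, hy]

end CutOff

section FiniteOrder

variable {𝕜 E F G : Type*} [RCLike 𝕜] [NormedAddCommGroup E] [NormedSpace ℝ E]
  [NormedAddCommGroup F] [NormedSpace ℝ F] [NormedSpace 𝕜 F] [SMulCommClass ℝ 𝕜 F]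
  [NormedAddCommGroup G] [NormedSpace 𝕜 G]

theorem exists_norm_le_sup_schwartzSeminormFamily (f : 𝓢(E, F) →L[𝕜] G) :
    ∃ (m : ℕ × ℕ) (C : ℝ≥0),
      ∀ φ, ‖f φ‖ ≤ C * (Finset.Iic m).sup (schwartzSeminormFamily 𝕜 E F) φ := by
  obtain ⟨s, C, -, hC⟩ := Seminorm.bound_of_continuous (schwartz_withSeminorms 𝕜 E F)
    ((normSeminorm 𝕜 G).comp f.toLinearMap) (continuous_norm.comp f.continuous)
  refine ⟨s.sup id, C, fun φ => (hC φ).trans ?_⟩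
  have hs : s ⊆ Finset.Iic (s.sup id) := fun i hi => Finset.mem_Iic.2 (Finset.le_sup (f := id) hi)
  exact mul_le_mul_of_nonneg_left (Finset.sup_mono (f := schwartzSeminormFamily 𝕜 E F) hs φ) C.2

end FiniteOrder

section Flat

theorem norm_iteratedFDeriv_smul_le_of_scaled {E F : Type*} [NormedAddCommGroup E]
    [NormedSpace ℝ E] [NormedAddCommGroup F] [NormedSpace ℝ F] {g : E → ℝ} {h : E → F} {n N : ℕ}
    (hg : ContDiff ℝ n g) (hh : ContDiff ℝ n h) (hn : n ≤ N) {x : E} {ε B M : ℝ} (hε : 0 < ε)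
    (hgB : ∀ i ≤ n, ‖iteratedFDeriv ℝ i g x‖ ≤ B * ε⁻¹ ^ i)
    (hhM : ∀ i ≤ n, ‖iteratedFDeriv ℝ i h x‖ ≤ M * ε ^ (N - i)) :
    ‖iteratedFDeriv ℝ n (fun y => g y • h y) x‖ ≤ 2 ^ n * (B * M * ε ^ (N - n)) := by
  have hterm : ∀ i ∈ Finset.range (n + 1),
      (n.choose i : ℝ) * ‖iteratedFDeriv ℝ i g x‖ * ‖iteratedFDeriv ℝ (n - i) h x‖
        ≤ n.choose i * (B * M * ε ^ (N - n)) := fun i hi => by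
    have hin : i ≤ n := Nat.lt_succ_iff.1 (Finset.mem_range.1 hi)
    have hpow : ε ^ (N - (n - i)) = ε ^ i * ε ^ (N - n) := by
      rw [← pow_add, show N - (n - i) = i + (N - n) by omega]
    calc (n.choose i : ℝ) * ‖iteratedFDeriv ℝ i g x‖ * ‖iteratedFDeriv ℝ (n - i) h x‖
      _ ≤ n.choose i * ((B * ε⁻¹ ^ i) * (M * ε ^ (N - (n - i)))) := by
        rw [mul_assoc]
        gcongr
        · exact (norm_nonneg _).trans (hgB i hin)
        · exact hgB i hin
        · exact hhM _ (Nat.sub_le n i)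
      _ = n.choose i * (B * M * ε ^ (N - n)) := by
        rw [hpow, inv_pow]
        field_simp
  calc ‖iteratedFDeriv ℝ n (fun y => g y • h y) x‖
    _ ≤ _ := norm_iteratedFDeriv_smul_le hg hh x le_rfl
    _ ≤ ∑ i ∈ Finset.range (n + 1), (n.choose i : ℝ) * (B * M * ε ^ (N - n)) :=
      Finset.sum_le_sum hterm
    _ = 2 ^ n * (B * M * ε ^ (N - n)) := by
      rw [← Finset.sum_mul, ← Nat.cast_sum, Nat.sum_range_choose]
      norm_cast

variable {𝕜 E F G : Type*} [RCLike 𝕜] [NormedAddCommGroup E] [NormedSpace ℝ E]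
  [FiniteDimensional ℝ E] [NormedAddCommGroup F] [NormedSpace ℝ F] [NormedSpace 𝕜 F]
  [SMulCommClass ℝ 𝕜 F] [NormedAddCommGroup G] [NormedSpace 𝕜 G]

variable (𝕜) in
theorem exists_seminorm_smulLeftCLM_contDiffBump_le {φ : 𝓢(E, F)} {a : E} {k n : ℕ}
    (hφ : ∀ i ≤ n, iteratedFDeriv ℝ i φ a = 0) :
    ∃ C, ∀ χ : ContDiffBump a, χ.rOut = 2 * χ.rIn → χ.rOut ≤ 1 →
      SchwartzMap.seminorm 𝕜 k n (smulLeftCLM F χ φ) ≤ C * χ.rOut := by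
  obtain ⟨B, hB⟩ := exists_norm_iteratedFDeriv_contDiffBump_le (E := E) one_lt_two n
  obtain ⟨M, hM₀, hM⟩ := φ.decay 0 (n + 1)
  refine ⟨(‖a‖ + 1) ^ k * (2 ^ n * (B * M)), fun χ hχ hχ₁ => ?_⟩
  have hε := χ.rOut_pos
  have hB₀ : 0 ≤ B := by simpa using (norm_nonneg _).trans (hB a χ hχ 0 n.zero_le a)
  refine SchwartzMap.seminorm_le_bound 𝕜 k n _ (by positivity) fun x => ?_
  by_cases hx : x ∈ closedBall a χ.rOut
  · have hxa : ‖x - a‖ ≤ χ.rOut := mem_closedBall_iff_norm.1 hx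
    have hnorm : ‖x‖ ≤ ‖a‖ + 1 := by linarith [norm_le_norm_add_norm_sub' x a]
    have hφM : ∀ i ≤ n, ‖iteratedFDeriv ℝ i φ x‖ ≤ M * χ.rOut ^ (n + 1 - i) := fun i hi =>
      (norm_iteratedFDeriv_le_of_iteratedFDeriv_eq_zero (φ.smooth _) convex_univ (mem_univ a)
        (fun j hj => hφ j (Nat.lt_succ_iff.1 hj)) (fun y _ => by simpa using hM y)
        (hi.trans n.le_succ) (mem_univ x)).trans (by gcongr)
    have hleibniz := norm_iteratedFDeriv_smul_le_of_scaled χ.contDiff (φ.smooth n) n.le_succ hε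
      (fun i hi => hB a χ hχ i hi x) hφM
    rw [coe_smulLeftCLM_contDiffBump]
    calc ‖x‖ ^ k * ‖iteratedFDeriv ℝ n (fun y => χ y • φ y) x‖
      _ ≤ (‖a‖ + 1) ^ k * (2 ^ n * (B * M * χ.rOut ^ (n + 1 - n))) := by gcongr
      _ = (‖a‖ + 1) ^ k * (2 ^ n * (B * M)) * χ.rOut := by
        rw [Nat.add_sub_cancel_left, pow_one]
        ring
  · have hzero := smulLeftCLM_contDiffBump_eventuallyEq_zero φ (χ.tsupport_eq ▸ hx)
    rw [(hzero.iteratedFDeriv ℝ n).eq_of_nhds]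
    simp only [Pi.zero_def, iteratedFDeriv_fun_zero, Pi.zero_apply, norm_zero, mul_zero]
    positivity

theorem map_eq_zero_of_iteratedFDeriv_eq_zero {f : 𝓢(E, F) →L[𝕜] G} {m : ℕ × ℕ} {C : ℝ≥0}
    (hf : ∀ φ, ‖f φ‖ ≤ C * (Finset.Iic m).sup (schwartzSeminormFamily 𝕜 E F) φ)
    {φ : 𝓢(E, F)} (hφ : HasCompactSupport φ) {a : E}
    (hoff : ∀ x ∈ dsupport f, x ≠ a → φ =ᶠ[𝓝 x] 0)
    (hflat : ∀ n ≤ m.2, iteratedFDeriv ℝ n φ a = 0) : f φ = 0 := by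
  have hseminorm : ∀ i ∈ Finset.Iic m, ∃ D, ∀ χ : ContDiffBump a, χ.rOut = 2 * χ.rIn →
      χ.rOut ≤ 1 → schwartzSeminormFamily 𝕜 E F i (smulLeftCLM F χ φ) ≤ D * χ.rOut :=
    fun i hi => exists_seminorm_smulLeftCLM_contDiffBump_le 𝕜 fun n hn =>
      hflat n (hn.trans (Finset.mem_Iic.1 hi).2)
  choose! D hD using hseminorm
  have hlocal (χ : ContDiffBump a) : f φ = f (smulLeftCLM F χ φ) := by
    refine map_eq_of_eventuallyEq_on_dsupport hφ
      (hasCompactSupport_smulLeftCLM_contDiffBump χ φ) fun x hx => ?_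
    obtain rfl | hxa := eq_or_ne x a
    · exact (smulLeftCLM_contDiffBump_eventuallyEq χ φ).symm
    · filter_upwards [hoff x hx hxa] with y hy
      simp [coe_smulLeftCLM_contDiffBump, hy]
  have hbound : ∀ᶠ ε in 𝓝[>] (0 : ℝ), ‖f φ‖ ≤ C * ∑ i ∈ Finset.Iic m, D i * ε := by
    filter_upwards [Ioc_mem_nhdsGT zero_lt_one] with ε hε
    let χ : ContDiffBump a := ⟨ε / 2, ε, half_pos hε.1, half_lt_self hε.1⟩
    rw [hlocal χ]
    refine (hf _).trans (mul_le_mul_of_nonneg_left ?_ C.2)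
    refine (Seminorm.le_def.1 (Seminorm.finset_sup_le_sum _ _) _).trans ?_
    rw [_root_.sum_apply]
    exact Finset.sum_le_sum fun i hi => hD i hi χ (mul_div_cancel₀ ε two_ne_zero).symm hε.2
  have hlim : Tendsto (fun ε : ℝ => C * ∑ i ∈ Finset.Iic m, D i * ε) (𝓝[>] 0) (𝓝 0) :=
    (Continuous.tendsto' (by fun_prop) 0 0 (by simp)).mono_left nhdsWithin_le_nhds
  exact norm_le_zero_iff.1 (ge_of_tendsto hlim hbound)

end Flat

section CountProducts

variable {α : Type*} [DecidableEq α] {l L : List α}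

theorem perm_flatMap_replicate_count (hL : L.Nodup) (hl : l ⊆ L) :
    l.Perm (L.flatMap fun i => List.replicate (l.count i) i) := by
  refine List.perm_iff_count.2 fun a => ?_
  simp only [List.count_flatMap, Function.comp_def, List.count_replicate, beq_iff_eq]
  rw [← List.sum_toFinset _ hL, Finset.sum_ite_eq']
  by_cases ha : a ∈ L
  · simp [ha]
  · simp [ha, List.count_eq_zero_of_not_mem (mt (@hl a) ha)]

theorem prod_map_eq_prod_map_pow_count {M : Type*} [Monoid M] {g : α → M}
    (hg : ∀ i j, Commute (g i) (g j)) (hL : L.Nodup) (hl : l ⊆ L) :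
    (l.map g).prod = (L.map fun i => g i ^ l.count i).prod := by
  have hcomm : (l.map g).Pairwise Commute :=
    List.pairwise_map.2 (List.pairwise_of_forall hg)
  rw [((perm_flatMap_replicate_count hL hl).map g).prod_eq' hcomm, List.map_flatMap,
    List.flatMap_def, List.prod_flatten, List.map_map]
  simp only [Function.comp_def, List.map_replicate, List.prod_replicate]

end CountProducts

section MultiIndex

theorem lineDerivOp_comm {E F : Type*} [NormedAddCommGroup E] [NormedSpace ℝ E]
    [NormedAddCommGroup F] [NormedSpace ℝ F] (v w : E) (φ : 𝓢(E, F)) :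
    ∂_{v} (∂_{w} φ) = ∂_{w} (∂_{v} φ) := by
  have hsecond (v w x : E) : ∂_{v} (∂_{w} φ) x = fderiv ℝ (fderiv ℝ φ) x v w := by
    have hdiff : DifferentiableAt ℝ (fderiv ℝ φ) x :=
      ((φ.smooth 2).fderiv_right (m := 1) le_rfl).differentiable one_ne_zero x
    rw [SchwartzMap.lineDerivOp_apply_eq_fderiv]
    change fderiv ℝ (fun y => fderiv ℝ φ y w) x v = _
    simp [fderiv_clm_apply hdiff (differentiableAt_const w)]
  ext x
  rw [hsecond, hsecond]
  exact (φ.smooth 2).contDiffAt.isSymmSndFDerivAt (by simp) v w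

variable {d : ℕ}

theorem mem_mIdx {K : ℕ} {k : Fin d → ℕ} : k ∈ mIdx d K ↔ ∑ i, k i ≤ K := by
  simp only [mIdx, Finset.mem_filter, Finset.mem_Iic, and_iff_right_iff_imp]
  exact fun h i => (Finset.single_le_sum (fun j _ => (k j).zero_le) (Finset.mem_univ i)).trans h

/-- The partial derivative in the `i`-th coordinate direction, as an element of the endomorphism
algebra of the Schwartz space, so that `∂^k` is a product of powers. -/
def partialDeriv (i : Fin d) : Module.End ℂ 𝓢(Rd d, ℂ) :=
  (LineDeriv.lineDerivOpCLM ℂ 𝓢(Rd d, ℂ) (EuclideanSpace.single i (1 : ℝ))).toLinearMap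

theorem commute_partialDeriv (i j : Fin d) : Commute (partialDeriv i) (partialDeriv j) :=
  LinearMap.ext fun φ => lineDerivOp_comm _ _ φ

theorem coe_partialDeriv_pow_apply (i : Fin d) (n : ℕ) (φ : 𝓢(Rd d, ℂ)) :
    ⇑((partialDeriv i ^ n) φ) = (pderiv' i)^[n] φ := by
  induction n with
  | zero => rfl
  | succ n ih =>
    rw [Function.iterate_succ_apply', ← ih, pow_succ']
    rfl

theorem coe_prod_partialDeriv_pow_apply (k : Fin d → ℕ) (φ : 𝓢(Rd d, ℂ)) :
    ⇑(((List.finRange d).map fun i => partialDeriv i ^ k i).prod φ) = Dmulti k φ := by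
  unfold Dmulti
  induction List.finRange d with
  | nil => rfl
  | cons i L ih =>
    simp only [List.map_cons, List.prod_cons, List.foldr_cons, Module.End.mul_apply,
      Function.comp_apply, coe_partialDeriv_pow_apply, ih]

theorem iteratedFDeriv_apply_single {n : ℕ} (v : Fin n → Fin d) (φ : 𝓢(Rd d, ℂ)) (x : Rd d) :
    iteratedFDeriv ℝ n φ x (fun i => EuclideanSpace.single (v i) 1) =
      ((List.ofFn v).map partialDeriv).prod φ x := by
  rw [← SchwartzMap.iteratedLineDerivOp_eq_iteratedFDeriv]
  congr 1
  induction n with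
  | zero => simp
  | succ n ih =>
    rw [LineDeriv.iteratedLineDerivOp_succ_left, List.ofFn_succ, List.map_cons, List.prod_cons,
      Module.End.mul_apply, ← ih]
    rfl

theorem iteratedFDeriv_apply_single_eq_Dmulti {n : ℕ} (v : Fin n → Fin d) (φ : 𝓢(Rd d, ℂ))
    (x : Rd d) :
    iteratedFDeriv ℝ n φ x (fun i => EuclideanSpace.single (v i) 1) =
      Dmulti (fun i => (List.ofFn v).count i) φ x := by
  rw [iteratedFDeriv_apply_single, prod_map_eq_prod_map_pow_count commute_partialDeriv
    (List.nodup_finRange d) fun i _ => List.mem_finRange i, coe_prod_partialDeriv_pow_apply]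

theorem sum_count_ofFn {n : ℕ} (v : Fin n → Fin d) : ∑ i, (List.ofFn v).count i = n := by
  simpa using Multiset.sum_count_eq_card (s := Finset.univ)
    (m := (List.ofFn v : Multiset (Fin d))) (by simp)

theorem iteratedFDeriv_eq_zero_of_Dmulti_eq_zero {K : ℕ} {φ : 𝓢(Rd d, ℂ)} {x : Rd d}
    (h : ∀ k ∈ mIdx d K, Dmulti k φ x = 0) {n : ℕ} (hn : n ≤ K) : iteratedFDeriv ℝ n φ x = 0 := by
  refine ContinuousMultilinearMap.toMultilinearMap_injective <|
    Module.Basis.ext_multilinear (fun _ => (EuclideanSpace.basisFun (Fin d) ℝ).toBasis) fun v => ?_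
  have hv := h _ (mem_mIdx.2 ((sum_count_ofFn v).trans_le hn))
  simpa [iteratedFDeriv_apply_single_eq_Dmulti] using hv

end MultiIndex

section Representation

theorem exists_eq_sum_mul_of_forall_eq_zero {𝕜 V ι : Type*} [Field 𝕜] [AddCommGroup V] [Module 𝕜 V]
    (s : Finset ι) (L : ι → V →ₗ[𝕜] 𝕜) (T : V →ₗ[𝕜] 𝕜)
    (hT : ∀ v, (∀ i ∈ s, L i v = 0) → T v = 0) :
    ∃ c : ι → 𝕜, ∀ v, T v = ∑ i ∈ s, c i * L i v := by
  have hker : ⨅ i : s, LinearMap.ker (L i) ≤ LinearMap.ker T := fun v hv =>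
    hT v fun i hi => (Submodule.mem_iInf _).1 hv ⟨i, hi⟩
  obtain ⟨c, rfl⟩ :=
    (Submodule.mem_span_range_iff_exists_fun 𝕜).1 (mem_span_of_iInf_ker_le_ker hker)
  classical
  refine ⟨fun i => if h : i ∈ s then c ⟨i, h⟩ else 0, fun v => ?_⟩
  simp [LinearMap.sum_apply, ← Finset.sum_coe_sort s]

variable {d : ℕ}

/-- `D^k δ_a` as a linear functional on the Schwartz space. -/
def dkDeltaLinearMap (k : Fin d → ℕ) (a : Rd d) : 𝓢(Rd d, ℂ) →ₗ[ℂ] ℂ where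
  toFun := dkDelta k a
  map_add' φ ψ := by
    simp only [dkDelta, ← coe_prod_partialDeriv_pow_apply, map_add, _root_.add_apply, mul_add]
  map_smul' c φ := by
    simp only [dkDelta, ← coe_prod_partialDeriv_pow_apply, map_smul, _root_.smul_apply,
      smul_eq_mul, RingHom.id_apply, mul_left_comm c]

theorem dkDelta_eq_zero_iff {k : Fin d → ℕ} {a : Rd d} {φ : 𝓢(Rd d, ℂ)} :
    dkDelta k a φ = 0 ↔ Dmulti k φ a = 0 := by
  simp [dkDelta]

theorem LocFinite.finite_inter_of_isBounded {A s : Set (Rd d)} (hA : LocFinite A)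
    (hs : Bornology.IsBounded s) : (A ∩ s).Finite :=
  let ⟨r, hr⟩ := hs.subset_ball 0
  (hA 0 r).subset (inter_subset_inter_right A hr)

theorem exists_contDiffBump_forall_notMem_tsupport {A : Set (Rd d)} (hA : LocFinite A)
    (a : Rd d) : ∃ χ : ContDiffBump a, ∀ x ∈ A, x ≠ a → x ∉ tsupport χ := by
  have hfin : ((A ∩ ball a 1) \ {a}).Finite := (hA a 1).sdiff
  have hnhds : ((A ∩ ball a 1) \ {a})ᶜ ∩ ball a 1 ∈ 𝓝 a :=
    Filter.inter_mem (hfin.isClosed.isOpen_compl.mem_nhds (by simp)) (ball_mem_nhds a one_pos)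
  obtain ⟨r, hr, hsub⟩ := nhds_basis_closedBall.mem_iff.1 hnhds
  refine ⟨⟨r / 2, r, half_pos hr, half_lt_self hr⟩, fun x hx hxa hmem => ?_⟩
  rw [ContDiffBump.tsupport_eq] at hmem
  exact (hsub hmem).1 ⟨⟨hx, (hsub hmem).2⟩, hxa⟩

theorem exists_map_smulLeftCLM_eq_sum_dkDelta {f : TemperedDist d} {m : ℕ × ℕ} {C : ℝ≥0}
    (hf : ∀ φ, ‖f φ‖ ≤ C * (Finset.Iic m).sup (schwartzSeminormFamily ℂ (Rd d) ℂ) φ)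
    {a : Rd d} {χ : ContDiffBump a} (hχ : ∀ x ∈ dsupport f, x ≠ a → x ∉ tsupport χ) :
    ∃ p : (Fin d → ℕ) → ℂ, ∀ φ,
      f (smulLeftCLM ℂ χ φ) = ∑ k ∈ mIdx d m.2, p k * dkDelta k a φ := by
  let T := f ∘L smulLeftCLM ℂ fun x => (χ x : ℂ)
  have hT (φ) : T φ = f (smulLeftCLM ℂ χ φ) := congrArg f <|
    smulLeftCLM_ofReal ℂ (χ.hasCompactSupport.hasTemperateGrowth χ.contDiff) φ
  obtain ⟨p, hp⟩ := exists_eq_sum_mul_of_forall_eq_zero (mIdx d m.2) (dkDeltaLinearMap · a) T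
    fun φ hφ => by
      refine (hT φ).trans <| map_eq_zero_of_iteratedFDeriv_eq_zero hf
        (hasCompactSupport_smulLeftCLM_contDiffBump χ φ) (fun x hx hxa =>
          smulLeftCLM_contDiffBump_eventuallyEq_zero φ (hχ x hx hxa)) fun n hn => ?_
      rw [((smulLeftCLM_contDiffBump_eventuallyEq χ φ).iteratedFDeriv ℝ n).eq_of_nhds]
      exact iteratedFDeriv_eq_zero_of_Dmulti_eq_zero
        (fun k hk => dkDelta_eq_zero_iff.1 (hφ k hk)) hn
  exact ⟨p, fun φ => (hT φ).symm.trans (hp φ)⟩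

end Representation

section Gluing

variable {E F G 𝓓 : Type*} [NormedAddCommGroup E] [NormedSpace ℝ E] [FiniteDimensional ℝ E]
  [NormedAddCommGroup F] [NormedSpace ℝ F] [AddCommGroup G] [FunLike 𝓓 𝓢(E, F) G]
  [AddMonoidHomClass 𝓓 𝓢(E, F) G] {f : 𝓓} {φ : 𝓢(E, F)}

theorem map_eq_sum_smulLeftCLM_contDiffBump {χ : ∀ a : E, ContDiffBump a}
    (hχ : ∀ a, ∀ x ∈ dsupport f, x ≠ a → x ∉ tsupport (χ a)) (hφ : HasCompactSupport φ)
    {s : Finset E} (hs : dsupport f ∩ tsupport φ ⊆ s) :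
    f φ = ∑ a ∈ s, f (smulLeftCLM F (χ a) φ) := by
  have happly : ⇑(∑ a ∈ s, smulLeftCLM F (χ a) φ) = fun y => (∑ a ∈ s, χ a y) • φ y := by
    funext y
    simp only [_root_.sum_apply, coe_smulLeftCLM_contDiffBump, Finset.sum_smul]
  rw [← map_sum]
  refine map_eq_of_eventuallyEq_on_dsupport hφ (happly ▸ hφ.smul_left) fun x hx => ?_
  rw [happly]
  by_cases hxφ : x ∈ tsupport φ
  · have hoff : ∀ᶠ y in 𝓝 x, ∀ a ∈ s, a ≠ x → χ a y = 0 := by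
      refine (Filter.eventually_all_finset s).2 fun a _ => ?_
      by_cases hax : a = x
      · exact .of_forall fun _ h => absurd hax h
      · exact (notMem_tsupport_iff_eventuallyEq.1 (hχ a x hx (Ne.symm hax))).mono fun y hy _ => hy
    filter_upwards [hoff, (χ x).eventuallyEq_one] with y hy hone
    rw [Finset.sum_eq_single_of_mem x (hs ⟨hx, hxφ⟩) hy, hone, Pi.one_apply, one_smul]
  · filter_upwards [notMem_tsupport_iff_eventuallyEq.1 hxφ] with y hy
    simp [hy]

theorem map_smulLeftCLM_contDiffBump_eq_zero {a : E} {χ : ContDiffBump a}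
    (hχ : ∀ x ∈ dsupport f, x ≠ a → x ∉ tsupport χ) (ha : a ∉ tsupport φ) :
    f (smulLeftCLM F χ φ) = 0 := by
  refine map_eq_zero_of_disjoint_dsupport (hasCompactSupport_smulLeftCLM_contDiffBump χ φ)
    (disjoint_left.2 fun x hx hxf => ?_)
  obtain ⟨hxφ, hxχ⟩ := tsupport_smulLeftCLM_subset _ φ hx
  exact hχ x hxf (fun h => ha (h ▸ hxφ)) hxχ

end Gluing

/-- (Proposition 1 i.) If a tempered distribution `f` on `ℝ^d`
has locally finite support `Λ`, then there exist `K < ∞` (independent of `λ`)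
and complex coefficients `p_k(λ)` such that
`f = Σ_{λ∈Λ} Σ_{‖k‖≤K} p_k(λ) D^k δ_λ`. -/
theorem statement7 {d : ℕ} (f : TemperedDist d)
    (hlf : LocFinite (tdSupport f)) :
    ∃ (K : ℕ) (p : (Fin d → ℕ) → Rd d → ℂ),
      (∀ k x, p k x ≠ 0 → x ∈ tdSupport f) ∧
      ∀ φ : SchwartzMap (Rd d) ℂ, HasCompactSupport (⇑φ) →
        f φ = ∑' x : Rd d, ∑ k ∈ mIdx d K, p k x * dkDelta k x φ := by
  classical
  rw [tdSupport_eq_dsupport] at hlf ⊢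
  obtain ⟨m, C, hf⟩ := exists_norm_le_sup_schwartzSeminormFamily f
  choose χ hχ using exists_contDiffBump_forall_notMem_tsupport hlf
  choose p hp using fun a => exists_map_smulLeftCLM_eq_sum_dkDelta hf (hχ a)
  refine ⟨m.2, fun k x => if x ∈ dsupport f then p x k else 0, fun k x => by grind, fun φ hφ => ?_⟩
  have hfin : (dsupport f ∩ tsupport φ).Finite :=
    hlf.finite_inter_of_isBounded hφ.isCompact.isBounded
  have hsum : f φ = ∑ x ∈ hfin.toFinset, f (smulLeftCLM ℂ (χ x) φ) :=
    map_eq_sum_smulLeftCLM_contDiffBump hχ hφ hfin.coe_toFinset.ge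
  rw [hsum, tsum_eq_sum (s := hfin.toFinset)]
  · exact Finset.sum_congr rfl fun x hx => by simp [hp x φ, (hfin.mem_toFinset.1 hx).1]
  · intro x hx
    by_cases hxf : x ∈ dsupport f
    · have hxφ : x ∉ tsupport φ := fun h => hx (hfin.mem_toFinset.2 ⟨hxf, h⟩)
      simpa [hxf, hp x φ] using map_smulLeftCLM_contDiffBump_eq_zero (hχ x) hxφ
    · simp [hxf]
end
end
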